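/- arXiv:0807.5101 — 6 statements merged into one kernel-verified Lean document; each statement's English description precedes it below -/
import Mathlib

section
/- There exist absolute constants C > 0 and c > 0 such that for every integer n ≥ 2 and every subset A of the group G = (ℤ/4ℤ)^n that contains no proper three-term arithmetic progression, |A| ≤ C · 4^n / (n · (log n)^c). -/
/-!
The bound follows from the Croot–Lev–Pach polynomial method, which gives an exponential saving.

Write each `x ∈ (ℤ/4)ⁿ` as `lo x + 2 hi x` with `lo x, hi x ∈ 𝔽₂ⁿ`. If `lo a = lo b = r`, then
`a + b = 2c` as soon as `lo c = r + hi a + hi b`. So if `A` has no proper progression and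
`A_r = {hi a : a ∈ A, lo a = r}`, then `r + a' + b'` is never of the form `lo c` with `c ∈ A`
when `a' ≠ b'` lie in `A_r`.

Let `N(k)` be the number of subsets of `Fin n` of size at most `k`, and call `r` rich when
`|A_r| > 2 N(k)`. If the set `B` of rich points had more than `2ⁿ - N(2k+1)` elements, a dimension
count (`exists_poly`) would give a multilinear polynomial `P` over `𝔽₂` of degree at most `2k+1`
which vanishes off `B` but has `P r ≠ 0` for some `r ∈ B`. The matrix `(P (r + a' + b'))` indexed by
`A_r` would then be a nonzero multiple of the identity, although its rank is at most `2 N(k)`, since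
every monomial of `P (x + y)` has degree at most `k` in `x` or in `y` (`card_le_of_diagonal`).
Hence `|B| ≤ 2ⁿ - N(2k+1)`, and counting `A` fibre by fibre with `k = ⌊3n/8⌋` gives
`|A| ≤ 3 · 2ⁿ · N(k)`. A Chernoff estimate bounds `(N(k) / 2ⁿ)⁸` by `(65536/84375)ⁿ`, so that
`|A| = O(4ⁿ / n²)`, which is stronger than required with `c = 1`.
-/

namespace RothZ4

open Finset

variable {n : ℕ}

/-! ### Multilinear polynomials over `𝔽₂` and the rank bound -/

/-- The multilinear monomial `∏_{i ∈ S} x_i` over `𝔽₂`. -/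
def mono (S : Finset (Fin n)) (x : Fin n → ZMod 2) : ZMod 2 := ∏ i ∈ S, x i

/-- The multilinear polynomial function over `𝔽₂` with coefficients `p`. -/
def poly (p : Finset (Fin n) → ZMod 2) (x : Fin n → ZMod 2) : ZMod 2 := ∑ S, p S * mono S x

/-- The subsets of `Fin n` of size at most `k`; they index the multilinear monomials of degree at
most `k`. -/
def small (n k : ℕ) : Finset (Finset (Fin n)) := {S | #S ≤ k}

/-- Expansion of `P (x + y)` in products of a monomial in `x` and a monomial in `y`. -/
lemma poly_add (p : Finset (Fin n) → ZMod 2) (x y : Fin n → ZMod 2) :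
    poly p (x + y) =
      ∑ T, ∑ U, mono T x * (if Disjoint T U then p (T ∪ U) else 0) * mono U y := by
  have h1 : poly p (x + y) =
      ∑ S, ∑ T ∈ S.powerset, p S * (mono T x * mono (S \ T) y) := by
    simp only [poly, mono, Pi.add_apply, Finset.prod_add, Finset.mul_sum]
  rw [h1, Finset.sum_sigma', ← Fintype.sum_prod_type']
  have h2 : ∑ z : Finset (Fin n) × Finset (Fin n),
      mono z.1 x * (if Disjoint z.1 z.2 then p (z.1 ∪ z.2) else 0) * mono z.2 y =
      ∑ z ∈ (univ : Finset (Finset (Fin n) × Finset (Fin n))) with Disjoint z.1 z.2,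
        mono z.1 x * p (z.1 ∪ z.2) * mono z.2 y := by
    rw [Finset.sum_filter]
    refine Finset.sum_congr rfl fun z _ => ?_
    split_ifs <;> simp
  rw [h2]
  refine Finset.sum_bij' (fun z _ => (z.2, z.1 \ z.2)) (fun z _ => ⟨z.1 ∪ z.2, z.1⟩) ?_ ?_ ?_ ?_ ?_
  · intro z _
    simpa using disjoint_sdiff
  · intro z _
    exact Finset.mem_sigma.mpr
      ⟨Finset.mem_univ _, Finset.mem_powerset.mpr Finset.subset_union_left⟩
  · rintro ⟨S, T⟩ hz
    have hTS : T ⊆ S := by simpa using hz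
    simp [Finset.union_sdiff_of_subset hTS]
  · rintro ⟨T, U⟩ hz
    have hd : Disjoint T U := by simpa using hz
    simp [Finset.union_sdiff_cancel_left hd]
  · rintro ⟨S, T⟩ hz
    have hTS : T ⊆ S := by simpa using hz
    simp only [Finset.union_sdiff_of_subset hTS]
    ring

/-- A matrix whose nonzero rows all have index in `s` has rank at most `#s`. -/
lemma rank_le_of_rows {ι : Type*} [Fintype ι] [DecidableEq ι] (E : Matrix ι ι (ZMod 2))
    (s : Finset ι) (h : ∀ i ∉ s, ∀ j, E i j = 0) : E.rank ≤ #s := by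
  have hE : E = Matrix.of (fun i (t : s) => if i = t.1 then (1 : ZMod 2) else 0) *
      Matrix.of (fun (t : s) j => E t.1 j) := by
    ext i j
    simp only [Matrix.mul_apply, Matrix.of_apply, ite_mul, one_mul, zero_mul]
    rw [Finset.sum_coe_sort s (fun t => if i = t then E t j else 0)]
    by_cases hi : i ∈ s
    · simp [hi]
    · simp [hi, h i hi j]
  rw [hE]
  refine (Matrix.rank_mul_le_left _ _).trans ?_
  simpa using Matrix.rank_le_card_width
    (Matrix.of (fun i (t : s) => if i = t.1 then (1 : ZMod 2) else 0))

lemma rank_add_le {ι : Type*} [Fintype ι] (E F : Matrix ι ι (ZMod 2)) :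
    (E + F).rank ≤ E.rank + F.rank := by
  unfold Matrix.rank
  rw [Matrix.mulVecLin_add]
  exact (Submodule.finrank_mono (LinearMap.range_add_le _ _)).trans
    (Submodule.finrank_add_le_finrank_add_finrank _ _)

/-- The Croot–Lev–Pach lemma: a polynomial of degree at most `2k+1` that vanishes at `t + a + b` for
all distinct `a, b ∈ X` but not at `t` forces `X` to be small. -/
lemma card_le_of_diagonal (k : ℕ) (p : Finset (Fin n) → ZMod 2)
    (hp : ∀ S, 2 * k + 1 < #S → p S = 0) (t : Fin n → ZMod 2) (X : Finset (Fin n → ZMod 2))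
    (hX : ∀ a ∈ X, ∀ b ∈ X, a ≠ b → poly p (t + a + b) = 0) (ht : poly p t ≠ 0) :
    #X ≤ 2 * #(small n k) := by
  classical
  set E : Matrix (Finset (Fin n)) (Finset (Fin n)) (ZMod 2) :=
    Matrix.of fun T U => if Disjoint T U then p (T ∪ U) else 0 with hE
  set L : Matrix X (Finset (Fin n)) (ZMod 2) := Matrix.of fun a T => mono T (t + a.1)
  set R : Matrix (Finset (Fin n)) X (ZMod 2) := Matrix.of fun U b => mono U b.1
  have hLER : L * E * R = Matrix.of fun a b : X => poly p (t + a.1 + b.1) := by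
    ext a b
    simp only [Matrix.mul_apply, Matrix.of_apply, poly_add, L, R, E, Finset.sum_mul]
    exact Finset.sum_comm
  have hdiag : L * E * R = 1 := by
    rw [hLER]
    ext a b
    by_cases hab : a = b
    · subst hab
      have h0 : t + a.1 + a.1 = t := by
        ext i
        simp [add_assoc, CharTwo.add_self_eq_zero]
      have h1 : ∀ z : ZMod 2, z ≠ 0 → z = 1 := by decide
      simp [h0, h1 _ ht]
    · simpa [hab] using hX a.1 a.2 b.1 b.2 (fun h => hab (Subtype.ext h))
  have hrank : #X ≤ E.rank := by
    have h1 : (L * E * R).rank = #X := by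
      rw [hdiag, Matrix.rank_one]
      simp
    rw [← h1]
    exact (Matrix.rank_mul_le_left _ _).trans (Matrix.rank_mul_le_right _ _)
  -- Split `E` into the rows of index at most `k` in size and the rest, which lives on such columns.
  set E₁ : Matrix (Finset (Fin n)) (Finset (Fin n)) (ZMod 2) :=
    Matrix.of fun T U => if T ∈ small n k then E T U else 0
  set E₂ : Matrix (Finset (Fin n)) (Finset (Fin n)) (ZMod 2) :=
    Matrix.of fun T U => if T ∈ small n k then 0 else E T U
  have hsum : E = E₁ + E₂ := by
    ext T U
    simp only [Matrix.add_apply, Matrix.of_apply, E₁, E₂]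
    split_ifs <;> simp
  have h1 : E₁.rank ≤ #(small n k) := by
    refine rank_le_of_rows _ _ fun T hT U => ?_
    simp [E₁, hT]
  have h2 : E₂.rank ≤ #(small n k) := by
    rw [← Matrix.rank_transpose]
    refine rank_le_of_rows _ _ fun U hU T => ?_
    simp only [Matrix.transpose_apply, E₂, E, Matrix.of_apply]
    split_ifs with hT hd
    · rfl
    · apply hp
      rw [Finset.card_union_of_disjoint hd]
      simp only [small, Finset.mem_filter, Finset.mem_univ, true_and] at hT hU
      omega
    · rfl
  calc #X ≤ (E₁ + E₂).rank := hsum ▸ hrank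
    _ ≤ E₁.rank + E₂.rank := rank_add_le _ _
    _ ≤ 2 * #(small n k) := by omega

/-- Dimension count: a set `B` with more than `2ⁿ - N(d)` points carries a polynomial of degree at
most `d` that vanishes off `B` but not identically. -/
lemma exists_poly (d : ℕ) (B : Finset (Fin n → ZMod 2)) (hB : 2 ^ n < #B + #(small n d)) :
    ∃ p : Finset (Fin n) → ZMod 2, (∀ S, d < #S → p S = 0) ∧ (∀ x ∉ B, poly p x = 0) ∧
      ∃ x, poly p x ≠ 0 := by
  classical
  let f : (small n d → ZMod 2) →ₗ[ZMod 2] ((Bᶜ : Finset (Fin n → ZMod 2)) → ZMod 2) :=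
    Matrix.mulVecLin (Matrix.of fun x S => mono S.1 x.1)
  have hlt : Module.finrank (ZMod 2) ((Bᶜ : Finset (Fin n → ZMod 2)) → ZMod 2) <
      Module.finrank (ZMod 2) (small n d → ZMod 2) := by
    rw [Module.finrank_fintype_fun_eq_card, Module.finrank_fintype_fun_eq_card,
      Fintype.card_coe, Fintype.card_coe, Finset.card_compl]
    simp only [Fintype.card_pi, ZMod.card, Finset.prod_const, Finset.card_univ, Fintype.card_fin]
    have : 0 < #(small n d) := Finset.card_pos.mpr ⟨∅, by simp [small]⟩
    omega
  obtain ⟨v, hv, hv0⟩ :=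
    Submodule.exists_mem_ne_zero_of_ne_bot (LinearMap.ker_ne_bot_of_finrank_lt hlt (f := f))
  set p : Finset (Fin n) → ZMod 2 := fun S => if h : S ∈ small n d then v ⟨S, h⟩ else 0 with hpdef
  have hpoly : ∀ x, poly p x = ∑ S : small n d, mono S.1 x * v S := by
    intro x
    have h1 : poly p x = ∑ S ∈ small n d, p S * mono S x := by
      symm
      refine Finset.sum_subset (Finset.subset_univ _) fun S _ hS => ?_
      simp [p, hS]
    rw [h1, ← Finset.sum_coe_sort]
    refine Finset.sum_congr rfl fun S _ => ?_
    simp [p, mul_comm]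
  refine ⟨p, fun S hS => ?_, fun x hx => ?_, ?_⟩
  · have : S ∉ small n d := by simpa [small] using hS
    simp [p, this]
  · rw [hpoly]
    have := congrFun (LinearMap.mem_ker.mp hv) ⟨x, by simpa using hx⟩
    simpa [f, Matrix.mulVec, dotProduct] using this
  · -- At the indicator of a minimal `S` with `p S ≠ 0`, the value is `p S`.
    have hne : ({S | p S ≠ 0} : Finset (Finset (Fin n))).Nonempty := by
      obtain ⟨S, hS⟩ := Function.ne_iff.mp hv0
      refine ⟨S.1, ?_⟩
      simpa [p] using hS
    obtain ⟨S, hS, hmin⟩ := Finset.exists_min_image _ Finset.card hne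
    refine ⟨fun i => if i ∈ S then 1 else 0, ?_⟩
    have hval : poly p (fun i => if i ∈ S then 1 else 0) = p S := by
      unfold poly
      rw [Finset.sum_eq_single S]
      · have : mono S (fun i => if i ∈ S then (1 : ZMod 2) else 0) = 1 :=
          Finset.prod_eq_one fun i hi => by simp [hi]
        simp [this]
      · intro T _ hTS
        by_cases hsub : T ⊆ S
        · have hlt : #T < #S := Finset.card_lt_card (hsub.ssubset_of_ne hTS)
          have : p T = 0 := by
            by_contra h
            exact absurd (hmin T (by simpa using h)) (by omega)
          simp [this]
        · obtain ⟨i, hiT, hiS⟩ := Finset.not_subset.mp hsub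
          have : mono T (fun i => if i ∈ S then (1 : ZMod 2) else 0) = 0 :=
            Finset.prod_eq_zero hiT (by simp [hiS])
          simp [this]
      · simp
    rw [hval]
    simpa using hS

/-! ### Binary digits in `ℤ/4` and rich fibres -/

/-- The low binary digit of an element of `ℤ/4`. -/
def lo₁ (a : ZMod 4) : ZMod 2 := (a.val : ZMod 2)

/-- The high binary digit of an element of `ℤ/4`. -/
def hi₁ (a : ZMod 4) : ZMod 2 := ((a.val / 2 : ℕ) : ZMod 2)

/-- Coordinatewise low binary digit, that is, reduction mod `2`. -/
def lo (a : Fin n → ZMod 4) : Fin n → ZMod 2 := fun i => lo₁ (a i)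

/-- Coordinatewise high binary digit. -/
def hi (a : Fin n → ZMod 4) : Fin n → ZMod 2 := fun i => hi₁ (a i)

lemma ext_digits {a b : Fin n → ZMod 4} (h₁ : lo a = lo b) (h₂ : hi a = hi b) : a = b := by
  have key : ∀ a b : ZMod 4, lo₁ a = lo₁ b → hi₁ a = hi₁ b → a = b := by decide
  ext1 i
  exact key _ _ (congrFun h₁ i) (congrFun h₂ i)

lemma add_eq_two_nsmul {a b c : Fin n → ZMod 4} (h₁ : lo a = lo b)
    (h₂ : lo c = lo a + hi a + hi b) : a + b = 2 • c := by
  have key : ∀ a b c : ZMod 4, lo₁ a = lo₁ b → lo₁ c = lo₁ a + hi₁ a + hi₁ b →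
      a + b = 2 • c := by decide
  ext1 i
  exact key _ _ _ (congrFun h₁ i) (congrFun h₂ i)

/-- The fibre of `A` over `r ∈ 𝔽₂ⁿ`, recorded by its high digits. -/
def fib (A : Finset (Fin n → ZMod 4)) (r : Fin n → ZMod 2) : Finset (Fin n → ZMod 2) :=
  {a ∈ A | lo a = r}.image hi

lemma card_eq_sum_fib (A : Finset (Fin n → ZMod 4)) : #A = ∑ r, #(fib A r) := by
  rw [Finset.card_eq_sum_card_fiberwise (f := lo) (t := univ) (by simp)]
  refine Finset.sum_congr rfl fun r _ => ?_
  rw [fib, Finset.card_image_of_injOn]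
  intro a ha b hb hab
  simp only [Finset.coe_filter, Set.mem_ofPred_eq] at ha hb
  exact ext_digits (ha.2.trans hb.2.symm) hab

/-- The points of `𝔽₂ⁿ` over which `A` has more than `2 N(k)` points. -/
def rich (A : Finset (Fin n → ZMod 4)) (k : ℕ) : Finset (Fin n → ZMod 2) :=
  {r | 2 * #(small n k) < #(fib A r)}

lemma card_rich_le (A : Finset (Fin n → ZMod 4))
    (hA : ∀ x d : Fin n → ZMod 4, x ∈ A → x + d ∈ A → x + 2 • d ∈ A → 2 • d = 0) (k : ℕ) :
    #(rich A k) + #(small n (2 * k + 1)) ≤ 2 ^ n := by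
  by_contra! hcon
  obtain ⟨p, hp, hoff, r, hr⟩ := exists_poly (2 * k + 1) (rich A k) hcon
  have hrB : r ∈ rich A k := by
    by_contra h
    exact hr (hoff r h)
  refine absurd (card_le_of_diagonal k p hp r (fib A r) ?_ hr) ?_
  · intro a' haX b' hbX hne
    apply hoff
    intro hs
    simp only [fib, Finset.mem_image, Finset.mem_filter] at haX hbX
    obtain ⟨a, ⟨haA, har⟩, rfl⟩ := haX
    obtain ⟨b, ⟨hbA, hbr⟩, rfl⟩ := hbX
    -- A rich point has a nonempty fibre, hence is the reduction of some `c ∈ A`.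
    have hpos : (fib A (r + hi a + hi b)).Nonempty := by
      rw [← Finset.card_pos]
      simp only [rich, Finset.mem_filter, Finset.mem_univ, true_and] at hs
      omega
    obtain ⟨_, hc'⟩ := hpos
    simp only [fib, Finset.mem_image, Finset.mem_filter] at hc'
    obtain ⟨c, ⟨hcA, hcr⟩, -⟩ := hc'
    have hab : a + b = 2 • c := add_eq_two_nsmul (har.trans hbr.symm) (by rw [hcr, har])
    have hb : a + 2 • (c - a) = b := by
      rw [smul_sub, ← hab]
      abel
    have h0 := hA a (c - a) haA (by simpa using hcA) (by rwa [hb])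
    rw [h0, add_zero] at hb
    exact hne (by rw [hb])
  · simpa [rich] using hrB

/-- Fibrewise count: with `k = ⌊3n/8⌋` there are at most `N(k)` rich fibres, of size at most `2ⁿ`,
and the others have size at most `2 N(k)`. -/
lemma card_le (A : Finset (Fin n → ZMod 4))
    (hA : ∀ x d : Fin n → ZMod 4, x ∈ A → x + d ∈ A → x + 2 • d ∈ A → 2 • d = 0) :
    #A ≤ 3 * 2 ^ n * #(small n (3 * n / 8)) := by
  set k := 3 * n / 8 with hk
  have hB := card_rich_le A hA k
  have hcardV : Fintype.card (Fin n → ZMod 2) = 2 ^ n := by simp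
  -- Complementation turns sets of size above `2k+1` into sets of size at most `n - 2k - 2 ≤ k`.
  have hcompl : 2 ^ n ≤ #(small n (2 * k + 1)) + #(small n k) := by
    have h1 : #((small n (2 * k + 1))ᶜ) ≤ #(small n k) := by
      refine Finset.card_le_card_of_injOn compl ?_ compl_injective.injOn
      intro S hS
      simp only [small, Finset.coe_compl, Set.mem_compl_iff, Finset.mem_coe, Finset.mem_filter,
        Finset.mem_univ, true_and, Finset.card_compl, Fintype.card_fin] at hS ⊢
      omega
    rw [Finset.card_compl, Fintype.card_finset, Fintype.card_fin] at h1
    omega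
  have hrich : #(rich A k) ≤ #(small n k) := by omega
  have hfib : ∀ r, #(fib A r) ≤ 2 * #(small n k) + if r ∈ rich A k then 2 ^ n else 0 := by
    intro r
    split_ifs with h
    · exact ((Finset.card_le_univ _).trans hcardV.le).trans (Nat.le_add_left _ _)
    · simpa [rich] using h
  calc #A = ∑ r, #(fib A r) := card_eq_sum_fib A
    _ ≤ ∑ r, (2 * #(small n k) + if r ∈ rich A k then 2 ^ n else 0) :=
        Finset.sum_le_sum fun r _ => hfib r
    _ = 2 ^ n * (2 * #(small n k)) + #(rich A k) * 2 ^ n := by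
        rw [Finset.sum_add_distrib, Finset.sum_const, Finset.card_univ, hcardV, ← Finset.sum_filter]
        simp
    _ ≤ 2 ^ n * (2 * #(small n k)) + #(small n k) * 2 ^ n := by gcongr
    _ = 3 * 2 ^ n * #(small n k) := by ring

/-! ### Tail estimate -/

/-- Chernoff bound with weight `(3/5)^{|S|}`, the optimal choice for sets of size `3n/8`. -/
lemma chernoff (n : ℕ) :
    ((#(small n (3 * n / 8)) : ℝ) / 2 ^ n) ^ 8 ≤ (65536 / 84375) ^ n := by
  set k := 3 * n / 8 with hk
  set N : ℝ := (#(small n k) : ℝ) with hNdef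
  have h1 : N * (3 / 5) ^ k ≤ (8 / 5) ^ n := by
    have hs : ∑ S : Finset (Fin n), (3 / 5 : ℝ) ^ #S = (8 / 5) ^ n := by
      have := Fin.sum_pow_mul_eq_add_pow (n := n) (3 / 5 : ℝ) 1
      simp only [one_pow, mul_one] at this
      rw [this]
      norm_num
    rw [← hs]
    calc N * (3 / 5) ^ k = ∑ S ∈ small n k, (3 / 5 : ℝ) ^ k := by
          rw [Finset.sum_const, nsmul_eq_mul]
      _ ≤ ∑ S ∈ small n k, (3 / 5 : ℝ) ^ #S := by
          refine Finset.sum_le_sum fun S hS => ?_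
          refine pow_le_pow_of_le_one (by norm_num) (by norm_num) ?_
          simpa [small] using hS
      _ ≤ ∑ S : Finset (Fin n), (3 / 5 : ℝ) ^ #S :=
          Finset.sum_le_univ_sum_of_nonneg fun S => by positivity
  have hN : 0 ≤ N := by positivity
  have h2 : N ^ 8 * (27 / 125) ^ n ≤ ((8 / 5) ^ 8) ^ n := by
    calc N ^ 8 * (27 / 125) ^ n = N ^ 8 * (3 / 5) ^ (3 * n) := by
          rw [pow_mul]
          norm_num
      _ ≤ N ^ 8 * (3 / 5) ^ (k * 8) := by
          refine mul_le_mul_of_nonneg_left ?_ (by positivity)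
          exact pow_le_pow_of_le_one (by norm_num) (by norm_num) (by omega)
      _ = (N * (3 / 5) ^ k) ^ 8 := by rw [mul_pow, ← pow_mul]
      _ ≤ ((8 / 5) ^ n) ^ 8 := by gcongr
      _ = ((8 / 5) ^ 8) ^ n := by rw [← pow_mul, ← pow_mul, mul_comm]
  have h3 : ((8 / 5 : ℝ) ^ 8) ^ n = (65536 / 84375) ^ n * (2 ^ n) ^ 8 * (27 / 125) ^ n := by
    rw [← pow_mul 2 n 8, mul_comm n 8, pow_mul 2 8 n, ← mul_pow, ← mul_pow]
    norm_num
  rw [div_pow, div_le_iff₀ (by positivity)]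
  rw [h3] at h2
  exact le_of_mul_le_mul_right h2 (by positivity)

lemma exists_decay :
    ∃ D : ℝ, 1 ≤ D ∧ ∀ n : ℕ, (#(small n (3 * n / 8)) : ℝ) * n ^ 2 ≤ D * 2 ^ n := by
  obtain ⟨M, hM⟩ := (tendsto_pow_const_mul_const_pow_of_abs_lt_one 16
    (r := (65536 / 84375 : ℝ)) (by rw [abs_of_pos] <;> norm_num)).bddAbove_range
  refine ⟨max M 1, le_max_right _ _, fun n => ?_⟩
  have h1 : (n : ℝ) ^ 16 * (65536 / 84375) ^ n ≤ max M 1 :=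
    (hM ⟨n, rfl⟩).trans (le_max_left _ _)
  have h2 : ((#(small n (3 * n / 8)) : ℝ) / 2 ^ n * n ^ 2) ^ 8 ≤ (max M 1) ^ 8 := by
    calc ((#(small n (3 * n / 8)) : ℝ) / 2 ^ n * n ^ 2) ^ 8
        = (n : ℝ) ^ 16 * ((#(small n (3 * n / 8)) : ℝ) / 2 ^ n) ^ 8 := by ring
      _ ≤ (n : ℝ) ^ 16 * (65536 / 84375) ^ n := by
          gcongr
          exact chernoff n
      _ ≤ max M 1 := h1
      _ ≤ (max M 1) ^ 8 := le_self_pow₀ (le_max_right _ _) (by norm_num)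
  have h3 := le_of_pow_le_pow_left₀ (by norm_num) (by positivity) h2
  rw [div_mul_eq_mul_div, div_le_iff₀ (by positivity)] at h3
  exact h3

end RothZ4

/-- **Roth's theorem in `ℤ₄ⁿ`** (main theorem). There are absolute constants `C, c > 0`
such that any subset `A` of `(ℤ/4ℤ)^n` (with `n ≥ 2`) containing no proper three-term
arithmetic progression (i.e. no triple `(x, x+d, x+2•d)` with `2•d ≠ 0` all of whose
elements lie in `A`) satisfies `|A| ≤ C · 4^n / (n · (log n)^c)`. -/
theorem roth_z4n_improved :
    ∃ C c : ℝ, 0 < C ∧ 0 < c ∧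
      ∀ n : ℕ, 2 ≤ n →
        ∀ A : Finset (Fin n → ZMod 4),
          (∀ x d : Fin n → ZMod 4, x ∈ A → x + d ∈ A → x + 2 • d ∈ A → 2 • d = 0) →
          (A.card : ℝ) ≤ C * 4 ^ n / (n * Real.log n ^ (c : ℝ)) := by
  obtain ⟨D, hD, hdecay⟩ := RothZ4.exists_decay
  refine ⟨3 * D, 1, by positivity, one_pos, fun n hn A hA => ?_⟩
  have hn' : (2 : ℝ) ≤ n := by exact_mod_cast hn
  have hlog : 0 < Real.log n := Real.log_pos (by linarith)
  have hlogn : Real.log n ≤ n := Real.log_le_self (by linarith)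
  have hcard : (A.card : ℝ) ≤ 3 * 2 ^ n * (RothZ4.small n (3 * n / 8)).card := by
    exact_mod_cast RothZ4.card_le A hA
  rw [Real.rpow_one, le_div_iff₀ (by positivity)]
  calc (A.card : ℝ) * (n * Real.log n)
      ≤ 3 * 2 ^ n * (RothZ4.small n (3 * n / 8)).card * (n * n) := by gcongr
    _ = 3 * 2 ^ n * ((RothZ4.small n (3 * n / 8)).card * (n : ℝ) ^ 2) := by ring
    _ ≤ 3 * 2 ^ n * (D * 2 ^ n) := mul_le_mul_of_nonneg_left (hdecay n) (by positivity)
    _ = 3 * D * 4 ^ n := by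
        have : (4 : ℝ) ^ n = 2 ^ n * 2 ^ n := by
          rw [← mul_pow]
          norm_num
        rw [this]
        ring
end

section
/- There exists an absolute constant C > 0 such that for every n and every subset A of G = (ℤ/4ℤ)^n of density α with 0 < α ≤ 1/100, one has Λ(A) ≥ exp(−C · α^{−1} · (log α^{−1})^{−1/6} · (log log α^{−1})^{5/3}). -/
/-!
The bound is deduced from the polynomial estimate `Λ(A) ≥ α^1000`, which is stronger because
`α⁻¹` is at least `(log α⁻¹)² / 2`.

The polynomial estimate combines the Croot–Lev–Pach polynomial method with an averaging argument.
A subset of `(ℤ/4ℤ)^(3k)` without three distinct terms in progression has at most `3 · 54^k`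
elements (`card_le_of_free`). To see this, split it along the cosets of the 2-torsion subgroup,
a copy of `𝔽₂^(3k)`. If more than `N = ∑_{i ≤ k} C(3k, i)` cosets contained more than `2N`
elements each, some polynomial of degree at most `2k` over `𝔽₂` would be supported on the set of
those cosets (`exists_polyVal`) without vanishing identically; the rank bound of
`card_le_of_polyVal` rules this out. Hence a set `B` contains at least `|B| - 3 · 54^k` proper
progressions (`card_le_add_properAPs`).

Pull `A` back along a random affine map `(ℤ/4ℤ)^(3k) → (ℤ/4ℤ)^n`, not necessarily injective. The
expected density of the preimage is `α`, and each pair (point, difference of order 4) has a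
uniformly distributed image, so `64^(2k) Λ(A) ≥ 64^k α - 3 · 54^k` (`apCount_ge`). Taking `k` a
large multiple of `log α⁻¹` gives the claim.
-/

open scoped BigOperators Classical

/-- The normalized count of three-term arithmetic progressions in `A ⊆ G`:
`Λ(A) = |{(x,d) : x ∈ A, x+d ∈ A, x+2•d ∈ A}| / |G|²`. -/
noncomputable def apCount {G : Type*} [AddCommGroup G] [Fintype G] (A : Finset G) : ℝ :=
  ((Finset.univ.filter
      (fun p : G × G => p.1 ∈ A ∧ p.1 + p.2 ∈ A ∧ p.1 + 2 • p.2 ∈ A)).card : ℝ) /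
    (Fintype.card G : ℝ) ^ 2

/-! ### Squarefree polynomials over `𝔽₂` -/

/-- The degree-at-most-`k` squarefree monomials in `n` variables, as sets of variables. -/
def lowSets (n k : ℕ) : Finset (Finset (Fin n)) :=
  Finset.univ.filter (fun S => S.card ≤ k)

/-- Value at `x` of the squarefree polynomial over `𝔽₂` with coefficients `c`. -/
def polyVal {n : ℕ} (c : Finset (Fin n) → ZMod 2) (x : Fin n → ZMod 2) : ZMod 2 :=
  ∑ S, c S * ∏ i ∈ S, x i

/-- In the expansion of `P(x + y)`, with `P` of degree at most `2k`, every term `x^T y^U` has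
`|T| ≤ k` or `|U| ≤ k`. The first sum collects the terms with `|T| ≤ k`, the second the
remaining ones, grouped by `U`. -/
lemma polyVal_add {n : ℕ} (k : ℕ) (c : Finset (Fin n) → ZMod 2)
    (hc : ∀ S, 2 * k < S.card → c S = 0) (x y : Fin n → ZMod 2) :
    polyVal c (x + y) =
      (∑ T : lowSets n k, (∏ i ∈ T.1, x i) *
        ∑ S, if T.1 ⊆ S then c S * ∏ i ∈ S \ T.1, y i else 0) +
      ∑ U : lowSets n k, (∑ S, ∑ T, if T ⊆ S ∧ k < T.card ∧ S \ T = U.1 then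
        c S * ∏ i ∈ T, x i else 0) * ∏ i ∈ U.1, y i := by
  have h1 : polyVal c (x + y) = ∑ S : Finset (Fin n), ∑ T : Finset (Fin n), if T ⊆ S then
      c S * ((∏ i ∈ T, x i) * ∏ i ∈ S \ T, y i) else 0 := by
    unfold polyVal
    refine Finset.sum_congr rfl fun S _ => ?_
    simp only [Pi.add_apply]
    rw [Finset.prod_add, Finset.mul_sum, ← Finset.sum_filter]
    refine Finset.sum_congr ?_ fun _ _ => rfl
    ext T; simp
  have h2 : ∀ S T : Finset (Fin n), (if T ⊆ S then
      c S * ((∏ i ∈ T, x i) * ∏ i ∈ S \ T, y i) else 0) =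
      (if T ∈ lowSets n k then (∏ i ∈ T, x i) *
        (if T ⊆ S then c S * ∏ i ∈ S \ T, y i else 0) else 0) +
      ∑ U ∈ lowSets n k, (if T ⊆ S ∧ k < T.card ∧ S \ T = U then
        c S * ∏ i ∈ T, x i else 0) * ∏ i ∈ U, y i := by
    intro S T
    by_cases hTS : T ⊆ S
    swap
    · simp [hTS]
    by_cases hT : T.card ≤ k
    · have : ¬ k < T.card := by omega
      simp [hTS, hT, this, lowSets]; ring
    · have hT' : k < T.card := by omega
      by_cases hS : 2 * k < S.card
      · simp [hc S hS]
      · have hmem : S \ T ∈ lowSets n k := by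
          have := Finset.card_sdiff_add_card_eq_card hTS
          simp only [lowSets, Finset.mem_filter, Finset.mem_univ, true_and]; omega
        have hmem' : T ∉ lowSets n k := by simp [lowSets, hT']
        rw [Finset.sum_eq_single_of_mem _ hmem]
        · simp [hTS, hT', hmem']; ring
        · intro U _ hU
          simp [hU.symm]
  rw [h1]
  simp_rw [h2, Finset.sum_add_distrib]
  congr 1
  · rw [Finset.sum_comm, Finset.sum_coe_sort (lowSets n k) (fun T => (∏ i ∈ T, x i) *
        ∑ S, if T ⊆ S then c S * ∏ i ∈ S \ T, y i else 0)]
    simp_rw [Finset.mul_sum]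
    rw [← Finset.sum_subset (Finset.subset_univ (lowSets n k))]
    · refine Finset.sum_congr rfl fun T hT => ?_
      simp [hT]
    · intro T _ hT
      simp [hT]
  · rw [Finset.sum_coe_sort (lowSets n k) (fun U => (∑ S, ∑ T, if T ⊆ S ∧ k < T.card ∧ S \ T = U then
        c S * ∏ i ∈ T, x i else 0) * ∏ i ∈ U, y i)]
    simp_rw [Finset.sum_mul]
    rw [Finset.sum_comm (s := lowSets n k)]
    exact Finset.sum_congr rfl fun S _ => Finset.sum_comm

/-- The Croot–Lev–Pach rank argument: the matrix `(P(u + a + b))` indexed by `a, b ∈ B` is the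
identity, so it has rank `|B|`, while `polyVal_add` writes it as a product with inner dimension
twice the number of monomials of degree at most `k`. -/
lemma card_le_of_polyVal {n : ℕ} (k : ℕ) (c : Finset (Fin n) → ZMod 2)
    (hc : ∀ S, 2 * k < S.card → c S = 0) (B : Finset (Fin n → ZMod 2)) (u : Fin n → ZMod 2)
    (hB : ∀ a ∈ B, ∀ b ∈ B, a ≠ b → polyVal c (u + a + b) = 0) (hu : polyVal c u ≠ 0) :
    B.card ≤ 2 * (lowSets n k).card := by
  let X : Matrix B (lowSets n k) (ZMod 2) := Matrix.of fun a T => ∏ i ∈ T.1, (u + a.1) i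
  let G : Matrix (lowSets n k) B (ZMod 2) := Matrix.of fun T b =>
    ∑ S, if T.1 ⊆ S then c S * ∏ i ∈ S \ T.1, b.1 i else 0
  let H : Matrix B (lowSets n k) (ZMod 2) := Matrix.of fun a U =>
    ∑ S, ∑ T, if T ⊆ S ∧ k < T.card ∧ S \ T = U.1 then c S * ∏ i ∈ T, (u + a.1) i else 0
  let Y : Matrix (lowSets n k) B (ZMod 2) := Matrix.of fun U b => ∏ i ∈ U.1, b.1 i
  have hu1 : polyVal c u = 1 := by
    have : ∀ t : ZMod 2, t ≠ 0 → t = 1 := by decide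
    exact this _ hu
  have hM : Matrix.fromCols X H * Matrix.fromRows G Y = (1 : Matrix B B (ZMod 2)) := by
    rw [Matrix.fromCols_mul_fromRows]
    ext a b
    have h := polyVal_add k c hc (u + a.1) b.1
    simp only [Matrix.add_apply, Matrix.mul_apply, X, G, H, Y, Matrix.of_apply]
    rw [← h]
    by_cases hab : a = b
    · subst hab
      have : u + a.1 + a.1 = u := by
        funext i
        simp [add_assoc, CharTwo.add_self_eq_zero]
      rw [this, hu1, Matrix.one_apply_eq]
    · rw [hB a a.2 b b.2 (fun h => hab (Subtype.ext h)), Matrix.one_apply_ne hab]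
  have hr : (1 : Matrix B B (ZMod 2)).rank = B.card := by
    rw [Matrix.rank_one]; simp
  rw [← hr, ← hM]
  refine ((Matrix.rank_mul_le_left _ _).trans (Matrix.rank_le_card_width _)).trans ?_
  simp [two_mul]

/-- A set `Z` smaller than the number of monomials of degree at most `d` is contained in the zero
set of a polynomial of degree at most `d` which is nonzero as a function. -/
lemma exists_polyVal {n : ℕ} (d : ℕ) (Z : Finset (Fin n → ZMod 2))
    (hZ : Z.card < (lowSets n d).card) :
    ∃ c : Finset (Fin n) → ZMod 2, (∀ S, d < S.card → c S = 0) ∧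
      (∀ z ∈ Z, polyVal c z = 0) ∧ ∃ u, polyVal c u ≠ 0 := by
  let M : Matrix Z (lowSets n d) (ZMod 2) := Matrix.of fun z S => ∏ i ∈ S.1, z.1 i
  have hker : LinearMap.ker M.mulVecLin ≠ ⊥ :=
    LinearMap.ker_ne_bot_of_finrank_lt (by simpa using hZ)
  obtain ⟨f, hf, hf0⟩ := (Submodule.ne_bot_iff _).mp hker
  let c : Finset (Fin n) → ZMod 2 := fun S => if h : S ∈ lowSets n d then f ⟨S, h⟩ else 0
  refine ⟨c, ?_, ?_, ?_⟩
  · intro S hS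
    have : S ∉ lowSets n d := by simp [lowSets, hS]
    simp [c, this]
  · intro z hz
    have h := congrFun (show M.mulVec f = 0 from hf) ⟨z, hz⟩
    rw [← show M.mulVec f ⟨z, hz⟩ = polyVal c z from ?_]
    · exact h
    unfold polyVal
    rw [← Finset.sum_subset (Finset.subset_univ (lowSets n d)), ← Finset.sum_coe_sort]
    · simp only [Matrix.mulVec, dotProduct]
      refine Finset.sum_congr rfl fun S _ => ?_
      simp [c, M, mul_comm]
    · intro S _ hS
      simp [c, hS]
  -- at the indicator of a minimal set in the support of `c` only one monomial survives
  · have hne : (Finset.univ.filter (fun S => c S ≠ 0)).Nonempty := by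
      obtain ⟨S, hS⟩ := Function.ne_iff.mp hf0
      refine ⟨S.1, ?_⟩
      have : S.1 ∈ lowSets n d := S.2
      simpa [c, this] using hS
    obtain ⟨S, hS, hmin⟩ := Finset.exists_min_image _ Finset.card hne
    refine ⟨fun i => if i ∈ S then 1 else 0, ?_⟩
    have : polyVal c (fun i => if i ∈ S then 1 else 0) = c S := by
      unfold polyVal
      rw [Finset.sum_eq_single S]
      · rw [Finset.prod_eq_one (fun i hi => by simp [hi]), mul_one]
      · intro T _ hTS
        by_cases hT : T ⊆ S
        · have : c T = 0 := by
            by_contra h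
            have h1 := hmin T (by simpa using h)
            exact hTS (Finset.eq_of_subset_of_card_le hT h1)
          simp [this]
        · obtain ⟨i, hi, hi'⟩ := Finset.not_subset.mp hT
          rw [Finset.prod_eq_zero hi (by simp [hi']), mul_zero]
      · simp
    rw [this]
    simpa using hS

/-! ### Progression-free sets in `(ℤ/4ℤ)^(3k)` -/

/-- The residue mod 2 of a residue mod 4. -/
def lowBit (x : ZMod 4) : ZMod 2 := (x.val : ZMod 2)

/-- The twos digit of a residue mod 4. -/
def highBit (x : ZMod 4) : ZMod 2 := ((x.val / 2 : ℕ) : ZMod 2)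

lemma bits_inj : ∀ a b : ZMod 4, lowBit a = lowBit b → highBit a = highBit b → a = b := by
  decide

lemma add_eq_two_mul : ∀ a b c : ZMod 4, lowBit a = lowBit b →
    lowBit c = lowBit a + highBit a + highBit b → a + b = 2 * c := by
  decide

lemma card_lowSets_compl (k : ℕ) :
    2 ^ (3 * k) ≤ (lowSets (3 * k) (2 * k)).card + (lowSets (3 * k) k).card := by
  have h1 : (Finset.univ \ lowSets (3 * k) (2 * k)).card ≤ (lowSets (3 * k) k).card := by
    refine Finset.card_le_card_of_injOn (fun S => Sᶜ) ?_ (compl_injective.injOn)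
    intro S hS
    simp only [lowSets, Finset.coe_sdiff, Finset.coe_univ, Finset.coe_filter, Set.mem_sdiff,
      Set.mem_univ, true_and, Set.mem_ofPred_eq, Finset.mem_univ] at hS ⊢
    rw [Finset.card_compl, Fintype.card_fin]
    omega
  have h2 := Finset.card_sdiff_add_card_eq_card (Finset.subset_univ (lowSets (3 * k) (2 * k)))
  simp only [Finset.card_univ, Fintype.card_finset, Fintype.card_fin] at h2
  omega

/-- The tail bound `∑_{i ≤ k} C(3k, i) ≤ (27/4)^k`, obtained by weighting each set `S` by
`2^(-|S|)`. -/
lemma card_lowSets_le (k : ℕ) : (8 : ℝ) ^ k * (lowSets (3 * k) k).card ≤ 54 ^ k := by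
  have h1 : ∑ S : Finset (Fin (3 * k)), (1 / 2 : ℝ) ^ S.card = (3 / 2) ^ (3 * k) := by
    have := Fintype.sum_pow_mul_eq_add_pow (Fin (3 * k)) (1 / 2 : ℝ) 1
    simp only [one_pow, mul_one, Fintype.card_fin] at this
    rw [this]; norm_num
  have h2 : ∑ S ∈ lowSets (3 * k) k, (1 / 2 : ℝ) ^ k ≤
      ∑ S : Finset (Fin (3 * k)), (1 / 2 : ℝ) ^ S.card := by
    refine (Finset.sum_le_sum (g := fun S => (1 / 2 : ℝ) ^ S.card) ?_).trans
      (Finset.sum_le_sum_of_subset_of_nonneg (Finset.subset_univ _) fun _ _ _ => by positivity)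
    intro S hS
    exact pow_le_pow_of_le_one (by norm_num) (by norm_num) (by simpa [lowSets] using hS)
  rw [h1, Finset.sum_const, nsmul_eq_mul, pow_mul] at h2
  calc (8 : ℝ) ^ k * (lowSets (3 * k) k).card
      = 16 ^ k * ((lowSets (3 * k) k).card * (1 / 2 : ℝ) ^ k) := by
        rw [show (16 : ℝ) = 8 * 2 by norm_num, mul_pow, one_div, inv_pow]
        field_simp
    _ ≤ 16 ^ k * ((3 / 2) ^ 3) ^ k := by gcongr
    _ = 54 ^ k := by rw [← mul_pow]; norm_num

/-- The Croot–Lev–Pach theorem: a subset of `(ℤ/4ℤ)^(3k)` without progressions of three distinct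
terms has at most `3 · 54^k` of the `64^k` elements. -/
lemma card_le_of_free (k : ℕ) (A : Finset (Fin (3 * k) → ZMod 4))
    (hA : ∀ a ∈ A, ∀ b ∈ A, ∀ c ∈ A, a ≠ b → a + b ≠ 2 • c) :
    (A.card : ℝ) ≤ 3 * 54 ^ k := by
  set N := (lowSets (3 * k) k).card with hN
  let lo : (Fin (3 * k) → ZMod 4) → (Fin (3 * k) → ZMod 2) := fun x i => lowBit (x i)
  let hi : (Fin (3 * k) → ZMod 4) → (Fin (3 * k) → ZMod 2) := fun x i => highBit (x i)
  have hinj : ∀ a b, lo a = lo b → hi a = hi b → a = b := fun a b h₁ h₂ =>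
    funext fun i => bits_inj _ _ (congrFun h₁ i) (congrFun h₂ i)
  -- `fib u` is the part of `A` in the coset `lo = u` of the 2-torsion, as a subset of `𝔽₂^(3k)`
  let fib : (Fin (3 * k) → ZMod 2) → Finset (Fin (3 * k) → ZMod 2) := fun u =>
    (A.filter (fun a => lo a = u)).image hi
  have hfib : ∀ u, (fib u).card = (A.filter (fun a => lo a = u)).card := by
    intro u
    refine Finset.card_image_of_injOn ?_
    intro a ha b hb h
    simp only [Finset.coe_filter, Set.mem_ofPred_eq] at ha hb
    exact hinj a b (ha.2.trans hb.2.symm) h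
  let big : Finset (Fin (3 * k) → ZMod 2) := Finset.univ.filter (fun u => 2 * N < (fib u).card)
  -- Otherwise some polynomial of degree `2k` vanishes off `big` but not at some `u ∈ big`. For
  -- distinct `a, b` in the coset of `u`, `a + b` is the double of every element of the coset
  -- `u + hi a + hi b`, which is thus empty and not in `big`: the rank argument applies to `fib u`.
  have hbig : big.card ≤ N := by
    by_contra! hlt
    have hc := card_lowSets_compl k
    have hcc : (bigᶜ).card < (lowSets (3 * k) (2 * k)).card := by
      have := Finset.card_add_card_compl big
      simp only [Fintype.card_pi, ZMod.card, Finset.prod_const, Finset.card_univ,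
        Fintype.card_fin] at this
      omega
    obtain ⟨c, hc1, hc2, u, hu⟩ := exists_polyVal (2 * k) bigᶜ hcc
    have hub : u ∈ big := by
      by_contra h
      exact hu (hc2 u (by simpa using h))
    have hub' : 2 * N < (fib u).card := by simpa [big] using hub
    refine absurd (card_le_of_polyVal k c hc1 (fib u) u ?_ hu) (by omega)
    intro a' ha' b' hb' hab
    apply hc2
    rw [Finset.mem_compl]
    intro hmem
    obtain ⟨a, ha, rfl⟩ := Finset.mem_image.mp ha'
    obtain ⟨b, hb, rfl⟩ := Finset.mem_image.mp hb'
    rw [Finset.mem_filter] at ha hb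
    have hne : (fib (u + hi a + hi b)).Nonempty := by
      rw [← Finset.card_pos]
      have : 2 * N < (fib (u + hi a + hi b)).card := by simpa [big] using hmem
      omega
    obtain ⟨_, hc'⟩ := hne
    obtain ⟨e, he, -⟩ := Finset.mem_image.mp hc'
    rw [Finset.mem_filter] at he
    refine hA a ha.1 b hb.1 e he.1 (fun h => hab (by rw [h])) ?_
    funext i
    have := add_eq_two_mul (a i) (b i) (e i) (congrFun (ha.2.trans hb.2.symm) i)
      (by have h := congrFun he.2 i
          rw [← ha.2] at h
          exact h)
    simpa [two_mul, two_nsmul] using this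
  have hcard : A.card ≤ 3 * (8 ^ k * N) := by
    have h8 : 2 ^ (3 * k) = 8 ^ k := by rw [pow_mul]; norm_num
    have hle : ∀ u, (A.filter (fun a => lo a = u)).card ≤
        (if u ∈ big then 8 ^ k else 0) + 2 * N := by
      intro u
      rw [← hfib]
      by_cases hu : u ∈ big
      · have := Finset.card_le_univ (fib u)
        simp only [Fintype.card_pi, ZMod.card, Finset.prod_const, Finset.card_univ,
          Fintype.card_fin, h8] at this
        simp only [hu, if_true]; omega
      · have : ¬ 2 * N < (fib u).card := by simpa [big] using hu
        simp only [hu, if_false]; omega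
    rw [Finset.card_eq_sum_card_fiberwise (f := lo) (t := Finset.univ) (by simp)]
    refine (Finset.sum_le_sum fun u _ => hle u).trans ?_
    rw [Finset.sum_add_distrib, Finset.sum_ite_mem, Finset.univ_inter, Finset.sum_const,
      Finset.sum_const]
    simp only [Finset.card_univ, Fintype.card_pi, ZMod.card, Finset.prod_const,
      Fintype.card_fin, h8, smul_eq_mul]
    nlinarith [Nat.mul_le_mul_right (8 ^ k) hbig]
  have h54 := card_lowSets_le k
  have : (A.card : ℝ) ≤ 3 * (8 ^ k * N) := by exact_mod_cast hcard
  linarith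

/-! ### Supersaturation -/

/-- Progressions in `B` with three distinct terms, as pairs (first term, difference). -/
noncomputable def properAPs {m : ℕ} (B : Finset (Fin m → ZMod 4)) :
    Finset ((Fin m → ZMod 4) × (Fin m → ZMod 4)) :=
  Finset.univ.filter fun p => 2 • p.2 ≠ 0 ∧ p.1 ∈ B ∧ p.1 + p.2 ∈ B ∧ p.1 + 2 • p.2 ∈ B

/-- Deleting the first term of each proper progression leaves a progression-free set. -/
lemma card_le_add_properAPs (k : ℕ) (B : Finset (Fin (3 * k) → ZMod 4)) :
    (B.card : ℝ) ≤ 3 * 54 ^ k + (properAPs B).card := by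
  have hfree := card_le_of_free k (B \ (properAPs B).image Prod.fst) (by
    intro a ha b hb c hc hab h
    rw [Finset.mem_sdiff] at ha hb hc
    refine ha.2 (Finset.mem_image.mpr ⟨(a, c - a), ?_, rfl⟩)
    have hb' : a + 2 • (c - a) = b := by
      rw [smul_sub, ← h, two_nsmul]; abel
    simp only [properAPs, Finset.mem_filter, Finset.mem_univ, true_and, hb',
      add_sub_cancel]
    refine ⟨fun h0 => hab ?_, ha.1, hc.1, hb.1⟩
    rw [h0, add_zero] at hb'
    exact hb')
  have h1 : B.card ≤ (B \ (properAPs B).image Prod.fst).card + (properAPs B).card := by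
    have := Finset.card_le_card_sdiff_add_card (t := (properAPs B).image Prod.fst) (s := B)
    have h2 := Finset.card_image_le (s := properAPs B) (f := Prod.fst)
    omega
  have : (B.card : ℝ) ≤ (B \ (properAPs B).image Prod.fst).card + (properAPs B).card := by
    exact_mod_cast h1
  linarith

/-- Preimages under a surjective homomorphism of finite groups have the same density. -/
lemma card_preimage_mul {W H : Type*} [AddCommGroup W] [AddCommGroup H] [Fintype W] [Fintype H]
    [DecidableEq H]     (f : W →+ H) (hf : Function.Surjective f) (s : Finset H) :
    (Finset.univ.filter (fun w => f w ∈ s)).card * Fintype.card H =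
      s.card * Fintype.card W := by
  have key : ∀ t : Finset H, (Finset.univ.filter (fun w => f w ∈ t)).card =
      t.card * (Finset.univ.filter (fun w => f w = 0)).card := by
    intro t
    rw [Finset.card_eq_sum_card_fiberwise (f := f) (t := t) (by intro w hw; simpa using hw)]
    rw [← smul_eq_mul, ← Finset.sum_const]
    refine Finset.sum_congr rfl fun h hh => ?_
    rw [Finset.filter_filter]
    obtain ⟨w₀, rfl⟩ := hf h
    refine Finset.card_bij (fun w _ => w - w₀) ?_ ?_ ?_
    · intro w hw
      simp only [Finset.mem_filter, Finset.mem_univ, true_and] at hw ⊢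
      simp [hw.2]
    · intro a _ b _ h; simpa using h
    · intro b hb
      simp only [Finset.mem_filter, Finset.mem_univ, true_and] at hb
      refine ⟨b + w₀, ?_, by simp⟩
      simp [hb, hh]
  have h1 := key Finset.univ
  simp only [Finset.mem_univ, Finset.filter_true, Finset.card_univ] at h1
  rw [key s, h1]; ring

lemma exists_isUnit_of_two_nsmul_ne_zero {m : ℕ} (e : Fin m → ZMod 4) (he : 2 • e ≠ 0) :
    ∃ j, ∃ t, t * e j = 1 := by
  by_contra! h
  apply he
  have key : ∀ a : ZMod 4, (∀ t, t * a ≠ 1) → 2 * a = 0 := by decide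
  funext j
  have := key (e j) (h j)
  simpa [two_mul, two_nsmul] using this

/-- Parameters `(x, v)` of the affine maps `y ↦ x + ∑ⱼ yⱼ vⱼ` from `(ℤ/4ℤ)^m` to `(ℤ/4ℤ)^n`. -/
abbrev AffineParam (m n : ℕ) : Type :=
  (Fin n → ZMod 4) × (Fin m → Fin n → ZMod 4)

/-- `(x, v) ↦ x + ∑ⱼ yⱼ vⱼ`, the image of `y` under a parametrized affine map. -/
def affineEval {m n : ℕ} (y : Fin m → ZMod 4) :
    AffineParam m n →+ (Fin n → ZMod 4) where
  toFun w := w.1 + ∑ j, y j • w.2 j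
  map_zero' := by simp
  map_add' w w' := by
    simp only [Prod.fst_add, Prod.snd_add, Pi.add_apply, smul_add, Finset.sum_add_distrib]; abel

/-- `(x, v) ↦ ∑ⱼ eⱼ vⱼ`. -/
def linearEval {m n : ℕ} (e : Fin m → ZMod 4) :
    AffineParam m n →+ (Fin n → ZMod 4) where
  toFun w := ∑ j, e j • w.2 j
  map_zero' := by simp
  map_add' w w' := by
    simp only [Prod.snd_add, Pi.add_apply, smul_add, Finset.sum_add_distrib]

lemma affineEval_add {m n : ℕ} (y e : Fin m → ZMod 4)
    (w : AffineParam m n) :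
    affineEval (y + e) w = affineEval y w + linearEval e w := by
  simp [affineEval, linearEval, add_smul, Finset.sum_add_distrib, add_assoc]

lemma linearEval_two {m n : ℕ} (e : Fin m → ZMod 4)
    (w : AffineParam m n) :
    linearEval (2 • e) w = 2 • linearEval e w := by
  rw [two_nsmul, two_nsmul]
  simp only [linearEval, AddMonoidHom.coe_mk, ZeroHom.coe_mk, Pi.add_apply, add_smul,
    Finset.sum_add_distrib]

lemma affineEval_surjective {m n : ℕ} (y : Fin m → ZMod 4) :
    Function.Surjective (affineEval (n := n) y) :=
  fun p => ⟨(p, 0), by simp [affineEval]⟩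

/-- If `e` has order 4, a uniformly random affine map sends `(y, e)` to a uniformly distributed
pair (point, difference): a coordinate of `e` is a unit. -/
lemma prod_eval_surjective {m n : ℕ} (y e : Fin m → ZMod 4) (he : 2 • e ≠ 0) :
    Function.Surjective ((affineEval (n := n) y).prod (linearEval e)) := by
  obtain ⟨j, t, ht⟩ := exists_isUnit_of_two_nsmul_ne_zero e he
  rintro ⟨p, q⟩
  refine ⟨(p - ∑ i, y i • (Pi.single j (t • q) : Fin m → Fin n → ZMod 4) i,
    Pi.single j (t • q)), ?_⟩
  have : ∑ i, e i • (Pi.single j (t • q) : Fin m → Fin n → ZMod 4) i = q := by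
    rw [Finset.sum_eq_single j]
    · rw [Pi.single_eq_same, smul_smul, mul_comm, ht, one_smul]
    · intro i _ hi; simp [hi]
    · simp
  ext1
  · simp [affineEval]
  · exact this

/-- The inequality of `card_le_add_properAPs`, averaged over the preimages `B w` of `A` under all
affine maps `w : (ℤ/4ℤ)^(3k) → (ℤ/4ℤ)^n`. -/
lemma apCount_ge (n k : ℕ) (A : Finset (Fin n → ZMod 4)) :
    (64 : ℝ) ^ k * ((A.card : ℝ) / (Fintype.card (Fin n → ZMod 4) : ℝ)) - 3 * 54 ^ k ≤
      (64 ^ k) ^ 2 * apCount A := by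
  let B : AffineParam (3 * k) n → Finset (Fin (3 * k) → ZMod 4) := fun w =>
    Finset.univ.filter fun y => affineEval y w ∈ A
  set g : ℝ := (Fintype.card (Fin n → ZMod 4) : ℝ) with hg
  have hg0 : 0 < g := by rw [hg]; exact_mod_cast Fintype.card_pos
  have hW0 : (0 : ℝ) < Fintype.card (AffineParam (3 * k) n) := by exact_mod_cast Fintype.card_pos
  have hF : (Fintype.card (Fin (3 * k) → ZMod 4) : ℝ) = 64 ^ k := by
    simp only [Fintype.card_pi, ZMod.card, Finset.prod_const, Finset.card_univ, Fintype.card_fin]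
    push_cast
    rw [pow_mul]; norm_num
  have hsum1 : ∑ w : AffineParam (3 * k) n, ((B w).card : ℝ) =
      64 ^ k * (A.card / g * Fintype.card (AffineParam (3 * k) n)) := by
    have h : ∑ w : AffineParam (3 * k) n, (B w).card =
        ∑ y, (Finset.univ.filter (fun w : AffineParam (3 * k) n => affineEval y w ∈ A)).card := by
      simp only [B, Finset.card_filter]
      exact Finset.sum_comm
    have h' : ∀ y : Fin (3 * k) → ZMod 4,
        ((Finset.univ.filter (fun w : AffineParam (3 * k) n => affineEval y w ∈ A)).card : ℝ) =
        A.card / g * Fintype.card (AffineParam (3 * k) n) := by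
      intro y
      have := card_preimage_mul (affineEval (n := n) y) (affineEval_surjective y) A
      have h2 : ((Finset.univ.filter (fun w : AffineParam (3 * k) n => affineEval y w ∈ A)).card : ℝ) * g =
        A.card * Fintype.card (AffineParam (3 * k) n) := by
        rw [hg]; exact_mod_cast this
      field_simp
      exact h2
    rw [← Nat.cast_sum, h, Nat.cast_sum, Finset.sum_congr rfl fun y _ => h' y]
    rw [Finset.sum_const, nsmul_eq_mul, Finset.card_univ, hF]
  have hsum2 : ∑ w : AffineParam (3 * k) n, ((properAPs (B w)).card : ℝ) ≤
      (64 ^ k) ^ 2 * (apCount A * Fintype.card (AffineParam (3 * k) n)) := by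
    let S : Finset ((Fin n → ZMod 4) × (Fin n → ZMod 4)) := Finset.univ.filter
      (fun p => p.1 ∈ A ∧ p.1 + p.2 ∈ A ∧ p.1 + 2 • p.2 ∈ A)
    have hS : apCount A = S.card / g ^ 2 := by
      simp only [apCount, S, hg]
      congr!
    have h : ∑ w : AffineParam (3 * k) n, (properAPs (B w)).card =
        ∑ p : (Fin (3 * k) → ZMod 4) × (Fin (3 * k) → ZMod 4),
          (Finset.univ.filter (fun w : AffineParam (3 * k) n => 2 • p.2 ≠ 0 ∧
            (affineEval p.1).prod (linearEval p.2) w ∈ S)).card := by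
      simp only [properAPs, Finset.card_filter]
      rw [Finset.sum_comm]
      refine Finset.sum_congr rfl fun p _ => Finset.sum_congr rfl fun w _ => ?_
      simp only [B, S, Finset.mem_filter, Finset.mem_univ, true_and, affineEval_add,
        linearEval_two, AddMonoidHom.prod_apply]
    have h' : ∀ p : (Fin (3 * k) → ZMod 4) × (Fin (3 * k) → ZMod 4),
        ((Finset.univ.filter (fun w : AffineParam (3 * k) n => 2 • p.2 ≠ 0 ∧
            (affineEval p.1).prod (linearEval p.2) w ∈ S)).card : ℝ) ≤
        apCount A * Fintype.card (AffineParam (3 * k) n) := by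
      intro p
      by_cases hp : 2 • p.2 = 0
      · simp only [hp, ne_eq, not_true_eq_false, false_and, Finset.filter_false,
          Finset.card_empty, Nat.cast_zero]
        rw [hS]; positivity
      · simp only [ne_eq, hp, not_false_eq_true, true_and]
        have := card_preimage_mul _ (prod_eval_surjective (n := n) p.1 p.2 hp) S
        rw [Fintype.card_prod] at this
        have h2 : ((Finset.univ.filter (fun w : AffineParam (3 * k) n =>
            (affineEval p.1).prod (linearEval p.2) w ∈ S)).card : ℝ) * (g * g) =
            S.card * Fintype.card (AffineParam (3 * k) n) := by
          rw [hg]; exact_mod_cast this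
        rw [hS]
        apply le_of_eq
        field_simp
        rw [← h2]; ring
    rw [← Nat.cast_sum, h, Nat.cast_sum]
    refine (Finset.sum_le_sum fun p _ => h' p).trans ?_
    rw [Finset.sum_const, nsmul_eq_mul, Finset.card_univ, Fintype.card_prod]
    push_cast
    rw [hF, sq]
  have hsum3 := Finset.sum_le_sum fun (w : AffineParam (3 * k) n) (_ : w ∈ Finset.univ) =>
    card_le_add_properAPs k (B w)
  rw [Finset.sum_add_distrib, hsum1, Finset.sum_const, nsmul_eq_mul, Finset.card_univ] at hsum3
  refine le_of_mul_le_mul_right ?_ hW0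
  nlinarith

/-! ### The final estimate -/

/-- The polynomial lower bound `Λ(A) ≥ α^1000`. -/
lemma apCount_ge_exp (n : ℕ) (A : Finset (Fin n → ZMod 4)) (α : ℝ)
    (hα : α = (A.card : ℝ) / (Fintype.card (Fin n → ZMod 4) : ℝ))
    (h0 : 0 < α) (h1 : α ≤ 1 / 100) :
    Real.exp (-(1000 * Real.log α⁻¹)) ≤ apCount A := by
  set L := Real.log α⁻¹ with hL
  have hinv : (100 : ℝ) ≤ α⁻¹ := by
    rw [le_inv_comm₀ (by norm_num) h0]; linarith
  have hexpL : Real.exp (-L) = α := by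
    rw [hL, Real.log_inv, neg_neg, Real.exp_log h0]
  have hL1 : 1 ≤ L := by
    rw [hL, Real.le_log_iff_exp_le (by positivity)]
    linarith [Real.exp_one_lt_d9]
  have hα2 : Real.exp (-L) ≤ 1 / 100 := by rw [hexpL]; exact h1
  -- `k ≈ 14 L` makes `(54/64)^k ≤ exp (-2L) ≤ α/6`
  set k := ⌈14 * L⌉₊ with hk
  have hk1 : 14 * L ≤ k := Nat.le_ceil _
  have hk2 : (k : ℝ) ≤ 15 * L := by
    have := Nat.ceil_lt_add_one (a := 14 * L) (by linarith)
    linarith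
  have h27 : (27 / 32 : ℝ) ^ k ≤ α / 6 := by
    have ha : (27 / 32 : ℝ) ≤ Real.exp (-(5 / 32)) := by
      have := Real.add_one_le_exp (-(5 / 32) : ℝ); linarith
    calc (27 / 32 : ℝ) ^ k ≤ Real.exp (-(5 / 32)) ^ k := by gcongr
      _ = Real.exp (k * (-(5 / 32))) := by rw [Real.exp_nat_mul]
      _ ≤ Real.exp (-L + -L) := by gcongr; linarith
      _ = Real.exp (-L) * α := by rw [Real.exp_add, hexpL]
      _ ≤ 1 / 100 * α := by gcongr
      _ ≤ α / 6 := by linarith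
  have hmain := apCount_ge n k A
  rw [← hα] at hmain
  have h64 : (54 : ℝ) ^ k = 64 ^ k * (27 / 32) ^ k := by rw [← mul_pow]; norm_num
  have hpos : (0 : ℝ) < 64 ^ k := by positivity
  have hstep : α / 2 ≤ 64 ^ k * apCount A := by
    refine le_of_mul_le_mul_left ?_ hpos
    nlinarith
  have h64e : (64 : ℝ) ^ k ≤ Real.exp (945 * L) := by
    have ha : (64 : ℝ) ≤ Real.exp 63 := by
      have := Real.add_one_le_exp (63 : ℝ); linarith
    calc (64 : ℝ) ^ k ≤ Real.exp 63 ^ k := by gcongr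
      _ = Real.exp (k * 63) := by rw [Real.exp_nat_mul]
      _ ≤ Real.exp (945 * L) := Real.exp_le_exp.mpr (by linarith)
  have hap : 0 ≤ apCount A := by unfold apCount; positivity
  have hfin : α / 2 ≤ Real.exp (945 * L) * apCount A :=
    hstep.trans (mul_le_mul_of_nonneg_right h64e hap)
  calc Real.exp (-(1000 * L)) ≤ Real.exp (-(945 * L) + (-L + -L)) := by gcongr; linarith
    _ = Real.exp (-(945 * L)) * (Real.exp (-L) * α) := by
      rw [Real.exp_add, Real.exp_add, hexpL]
    _ ≤ Real.exp (-(945 * L)) * (1 / 100 * α) := by gcongr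
    _ ≤ Real.exp (-(945 * L)) * (Real.exp (945 * L) * apCount A) := by
      refine mul_le_mul_of_nonneg_left ?_ (Real.exp_nonneg _)
      linarith
    _ = apCount A := by rw [← mul_assoc, ← Real.exp_add]; simp

/-- **Main counting theorem.** There is an absolute constant `C > 0` such that for every
`n` and every `A ⊆ (ℤ/4ℤ)^n` of density `α` with `0 < α ≤ 1/100`, one has
`Λ(A) ≥ exp(−C·α⁻¹·(log α⁻¹)^{−1/6}·(log log α⁻¹)^{5/3})`. -/
theorem weighted_count_z4n :
    ∃ C : ℝ, 0 < C ∧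
      ∀ (n : ℕ) (A : Finset (Fin n → ZMod 4)),
        let α : ℝ := (A.card : ℝ) / (Fintype.card (Fin n → ZMod 4) : ℝ)
        0 < α → α ≤ 1 / 100 →
          apCount A ≥
            Real.exp (-(C * α⁻¹ * Real.log α⁻¹ ^ (-(1 : ℝ) / 6) *
              Real.log (Real.log α⁻¹) ^ ((5 : ℝ) / 3))) := by
  refine ⟨2000, by norm_num, ?_⟩
  intro n A α h0 h1
  refine le_trans ?_ (apCount_ge_exp n A α rfl h0 h1)
  clear_value α
  set L := Real.log α⁻¹ with hL
  have hinv : (100 : ℝ) ≤ α⁻¹ := by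
    rw [le_inv_comm₀ (by norm_num) h0]; linarith
  have he : Real.exp 1 < 3 := by linarith [Real.exp_one_lt_d9]
  have hL4 : 4 ≤ L := by
    rw [hL, Real.le_log_iff_exp_le (by positivity)]
    have : Real.exp 4 = Real.exp 1 ^ 4 := by rw [← Real.exp_nat_mul]; norm_num
    rw [this]
    calc Real.exp 1 ^ 4 ≤ 3 ^ 4 := by gcongr
      _ ≤ α⁻¹ := by linarith
  have hexpL : α⁻¹ = Real.exp L := by rw [hL, Real.exp_log (by positivity)]
  have hLL : 1 ≤ Real.log L := by
    rw [Real.le_log_iff_exp_le (by positivity)]; linarith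
  -- with `L = log α⁻¹`, the exponent is at least `2000 · (L²/2) · L⁻¹ · 1 = 1000 L`
  have hp1 : 1 ≤ Real.log L ^ ((5 : ℝ) / 3) := Real.one_le_rpow hLL (by norm_num)
  have hp2 : L⁻¹ ≤ L ^ (-(1 : ℝ) / 6) := by
    rw [← Real.rpow_neg_one]
    exact Real.rpow_le_rpow_of_exponent_le (by linarith) (by norm_num)
  have hp3 : L ^ 2 / 2 ≤ α⁻¹ := by
    rw [hexpL]
    have := Real.quadratic_le_exp_of_nonneg (x := L) (by linarith)
    linarith
  refine Real.exp_le_exp.mpr (neg_le_neg ?_)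
  calc 1000 * L = 2000 * (L ^ 2 / 2) * L⁻¹ * 1 := by field_simp; norm_num
    _ ≤ 2000 * α⁻¹ * L ^ (-(1 : ℝ) / 6) * Real.log L ^ ((5 : ℝ) / 3) := by gcongr
end

section
/- There exists an absolute constant C > 0 such that for every n and every nonempty subset A of G = (ℤ/4ℤ)^n of density α > 0, one has Λ(A) ≥ exp(−C · α^{−1}). -/
/-!
Let `H = 2G = {x : 2x = 0}` for `G = (ℤ/4ℤ)ⁿ`, and split `A` into its fibres
`f_v = {h ∈ H : u_v + h ∈ A}` over the cosets of `H`, where `u_v` satisfies `2 u_v = v` for `v ∈ H`.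
Since `x + z = 2y` forces `x` and `z` into one coset of `H`, and `y` enters only through `2y`, the
number of progressions is
`|H| ∑_{v,h,h'} f_v(h) f_v(h') w(v + h + h')`, where `w(t)` is the density of the fibre `f_t`.

This trilinear sum is bounded below for an arbitrary finite group `H` of exponent two, arbitrary
`f_v : H → [0,1]` and `w ≥ 0` with `w(v) ≤ 𝔼 f_v` (`triSum_lower`), by induction on `|H|`. Write
`α = 𝔼 w`. If all nontrivial Fourier coefficients `∑ w ψ` are at most `|H| α² / 2` in modulus,
the trivial character dominates and the sum is at least `|H|³ α³ / 2` (`triSum_of_small_coeffs`).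
Otherwise `w` has mean at least `α + α²/2` on a coset of the kernel `K` of some `ψ ≠ 0`
(`exists_increment`). Restricting `v` to that coset, and each `f_v` to whichever coset of `K`
carries more of its mass, gives an instance of the same problem on `K`, at the cost of a
factor `8` in the normalised sum. As `1/α` drops by at least `1/3` at each such step, the bound
`(α³/2) exp(-9/α)` propagates, because `8 ≤ exp 3`.
-/

open scoped BigOperators Classical

namespace WeakCount

open Finset

/-! ### Characters of groups of exponent two -/

section Characters

variable {H : Type*} [AddCommGroup H]

/-- The real part of a complex character; in exponent two it is the character itself, with
values `±1`. -/
noncomputable def chi (ψ : AddChar H ℂ) (x : H) : ℝ := (ψ x).re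

lemma addChar_eq (h2 : ∀ x : H, x + x = 0) (ψ : AddChar H ℂ) (x : H) : ψ x = 1 ∨ ψ x = -1 := by
  have h : ψ x * ψ x = 1 := by rw [← AddChar.map_add_eq_mul, h2, AddChar.map_zero_eq_one]
  exact mul_self_eq_one_iff.mp h

lemma chi_eq (h2 : ∀ x : H, x + x = 0) (ψ : AddChar H ℂ) (x : H) : chi ψ x = 1 ∨ chi ψ x = -1 := by
  rcases addChar_eq h2 ψ x with h | h <;> simp [chi, h]

lemma chi_add (h2 : ∀ x : H, x + x = 0) (ψ : AddChar H ℂ) (x y : H) :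
    chi ψ (x + y) = chi ψ x * chi ψ y := by
  rcases addChar_eq h2 ψ x with h | h <;> rcases addChar_eq h2 ψ y with h' | h' <;>
    simp [chi, h, h', AddChar.map_add_eq_mul]

lemma chi_zero_left (x : H) : chi (0 : AddChar H ℂ) x = 1 := by simp [chi]

lemma chi_zero_right (ψ : AddChar H ℂ) : chi ψ (0 : H) = 1 := by simp [chi]

lemma exists_chi_neg (h2 : ∀ x : H, x + x = 0) {ψ : AddChar H ℂ} (hψ : ψ ≠ 0) :
    ∃ e, chi ψ e = -1 := by
  obtain ⟨e, he⟩ := AddChar.ne_zero_iff.mp hψ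
  refine ⟨e, ?_⟩
  rcases addChar_eq h2 ψ e with h | h
  · exact absurd h he
  · simp [chi, h]

lemma add_eq_zero_iff_eq (h2 : ∀ x : H, x + x = 0) (x y : H) : x + y = 0 ↔ x = y := by
  constructor
  · intro h
    exact add_right_cancel (h.trans (h2 y).symm)
  · rintro rfl
    exact h2 x

variable [Fintype H]

lemma sum_chi (x : H) : ∑ ψ : AddChar H ℂ, chi ψ x = if x = 0 then (Fintype.card H : ℝ) else 0 := by
  have h := congrArg Complex.re (AddChar.sum_apply_eq_ite x)
  rw [Complex.re_sum] at h
  unfold chi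
  rw [h]
  split_ifs <;> simp

lemma sum_chi_mul (h2 : ∀ x : H, x + x = 0) (x y : H) :
    ∑ ψ : AddChar H ℂ, chi ψ x * chi ψ y = if x = y then (Fintype.card H : ℝ) else 0 := by
  simp only [← chi_add h2, sum_chi, add_eq_zero_iff_eq h2]

/-- The unnormalised Fourier coefficient. -/
noncomputable def coeff (g : H → ℝ) (ψ : AddChar H ℂ) : ℝ := ∑ x, g x * chi ψ x

lemma coeff_zero (g : H → ℝ) : coeff g 0 = ∑ x, g x := by simp [coeff, chi_zero_left]

lemma inversion (h2 : ∀ x : H, x + x = 0) (g : H → ℝ) (y : H) :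
    ∑ ψ, coeff g ψ * chi ψ y = Fintype.card H * g y := by
  simp only [coeff, sum_mul]
  rw [sum_comm]
  simp only [mul_assoc, ← mul_sum, sum_chi_mul h2]
  simp [mul_comm]

lemma parseval (h2 : ∀ x : H, x + x = 0) (g : H → ℝ) :
    ∑ ψ, coeff g ψ ^ 2 = Fintype.card H * ∑ x, g x ^ 2 := by
  have : ∀ ψ, coeff g ψ ^ 2 = ∑ y, g y * (coeff g ψ * chi ψ y) := by
    intro ψ
    rw [sq]
    nth_rw 2 [coeff]
    rw [mul_sum]
    exact sum_congr rfl fun y _ => by ring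
  simp only [this]
  rw [sum_comm]
  simp only [← mul_sum, inversion h2]
  rw [mul_sum]
  exact sum_congr rfl fun y _ => by ring

end Characters

/-! ### The trilinear sum -/

section Trilinear

variable {H : Type*} [AddCommGroup H] [Fintype H]

/-- The unnormalised trilinear sum that counts progressions fibre by fibre. -/
noncomputable def triSum (f : H → H → ℝ) (w : H → ℝ) : ℝ :=
  ∑ v, ∑ h, ∑ h', f v h * f v h' * w (v + h + h')

lemma triSum_fourier (h2 : ∀ x : H, x + x = 0) (f : H → H → ℝ) (w : H → ℝ) :
    Fintype.card H * triSum f w = ∑ v, ∑ ψ, coeff w ψ * chi ψ v * coeff (f v) ψ ^ 2 := by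
  unfold triSum
  rw [mul_sum]
  refine sum_congr rfl fun v _ => ?_
  have h1 : ∀ ψ, coeff w ψ * chi ψ v * coeff (f v) ψ ^ 2 =
      ∑ h, ∑ h', f v h * f v h' * (coeff w ψ * chi ψ (v + h + h')) := by
    intro ψ
    have : coeff (f v) ψ ^ 2 = ∑ h, ∑ h', (f v h * chi ψ h) * (f v h' * chi ψ h') := by
      rw [sq, coeff, sum_mul_sum]
    rw [this, mul_sum]
    refine sum_congr rfl fun h _ => ?_
    rw [mul_sum]
    refine sum_congr rfl fun h' _ => ?_
    rw [chi_add h2, chi_add h2]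
    ring
  simp only [h1]
  rw [mul_sum, sum_comm]
  refine sum_congr rfl fun h _ => ?_
  rw [mul_sum, sum_comm]
  refine sum_congr rfl fun h' _ => ?_
  rw [← mul_sum, inversion h2]
  ring

/-- If `w` has no large nontrivial Fourier coefficient, the trilinear sum is at least half of what
the trivial character contributes. -/
lemma triSum_of_small_coeffs (h2 : ∀ x : H, x + x = 0) (f : H → H → ℝ) (w : H → ℝ) (α : ℝ)
    (hα : 0 < α) (hf0 : ∀ v h, 0 ≤ f v h) (hf1 : ∀ v h, f v h ≤ 1)
    (hfw : ∀ v, Fintype.card H * w v ≤ ∑ h, f v h) (hw : ∑ v, w v = Fintype.card H * α)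
    (hsmall : ∀ ψ : AddChar H ℂ, ψ ≠ 0 → |coeff w ψ| ≤ Fintype.card H * α ^ 2 / 2) :
    (Fintype.card H : ℝ) ^ 3 * (α ^ 3 / 2) ≤ triSum f w := by
  set N : ℝ := ((Fintype.card H : ℕ) : ℝ) with hN
  have hNpos : 0 < N := by
    rw [hN]
    exact_mod_cast Fintype.card_pos
  set S : H → ℝ := fun v => ∑ h, f v h with hS
  have hv : ∀ v, N * α * S v ^ 2 - N * α ^ 2 / 2 * (N * S v) ≤
      ∑ ψ, coeff w ψ * chi ψ v * coeff (f v) ψ ^ 2 := by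
    intro v
    have hsq : ∑ x, f v x ^ 2 ≤ S v := by
      refine sum_le_sum fun x _ => ?_
      nlinarith [hf0 v x, hf1 v x]
    have hpars := parseval h2 (f v)
    rw [← add_sum_erase _ _ (mem_univ (0 : AddChar H ℂ))] at hpars ⊢
    have hrest : -(N * α ^ 2 / 2) * ∑ ψ ∈ univ.erase 0, coeff (f v) ψ ^ 2 ≤
        ∑ ψ ∈ univ.erase 0, coeff w ψ * chi ψ v * coeff (f v) ψ ^ 2 := by
      rw [mul_sum]
      refine sum_le_sum fun ψ hψ => ?_
      refine mul_le_mul_of_nonneg_right ?_ (sq_nonneg _)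
      have := abs_le.mp (hsmall ψ (ne_of_mem_erase hψ))
      rcases chi_eq h2 ψ v with h | h <;> rw [h] <;> linarith [this.1, this.2]
    rw [coeff_zero, coeff_zero, chi_zero_left, hw]
    rw [coeff_zero] at hpars
    have hle : ∑ ψ ∈ univ.erase 0, coeff (f v) ψ ^ 2 ≤ N * S v := by
      have := mul_le_mul_of_nonneg_left hsq hNpos.le
      nlinarith [sq_nonneg (∑ x, f v x)]
    have hM : 0 ≤ N * α ^ 2 / 2 := by positivity
    have := mul_le_mul_of_nonneg_left hle hM
    linarith
  have htot := sum_le_sum fun v (_ : v ∈ univ) => hv v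
  rw [← triSum_fourier h2, sum_sub_distrib, ← mul_sum, ← mul_sum, ← mul_sum] at htot
  have hcs : (∑ v, S v) ^ 2 ≤ N * ∑ v, S v ^ 2 := by
    simpa using sq_sum_le_card_mul_sum_sq (s := univ) (f := S)
  have hlow : N ^ 2 * α ≤ ∑ v, S v := by
    have := sum_le_sum fun v (_ : v ∈ univ) => hfw v
    rw [← mul_sum, hw] at this
    linarith
  set Z := ∑ v, S v
  have hpos : 0 ≤ N ^ 2 * α := by positivity
  have h3 : N ^ 2 * α * Z ≤ Z ^ 2 := by nlinarith
  have h4 : N ^ 2 * α ^ 2 / 2 * Z ≤ N * triSum f w := by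
    have : α * Z ^ 2 ≤ α * (N * ∑ v, S v ^ 2) := mul_le_mul_of_nonneg_left hcs hα.le
    have : α * (N ^ 2 * α * Z) ≤ α * Z ^ 2 := mul_le_mul_of_nonneg_left h3 hα.le
    nlinarith
  have h5 : N ^ 2 * α ^ 2 / 2 * (N ^ 2 * α) ≤ N ^ 2 * α ^ 2 / 2 * Z :=
    mul_le_mul_of_nonneg_left hlow (by positivity)
  refine le_of_mul_le_mul_left ?_ hNpos
  calc N * (N ^ 3 * (α ^ 3 / 2)) = N ^ 2 * α ^ 2 / 2 * (N ^ 2 * α) := by ring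
    _ ≤ _ := h5.trans h4

end Trilinear

/-! ### Passing to a hyperplane -/

section Kernel

variable {H : Type*} [AddCommGroup H]

/-- The kernel of a character. -/
noncomputable def ker (h2 : ∀ x : H, x + x = 0) (ψ : AddChar H ℂ) : AddSubgroup H where
  carrier := {x | chi ψ x = 1}
  zero_mem' := chi_zero_right ψ
  add_mem' {a b} ha hb := by
    change chi ψ (a + b) = 1
    rw [chi_add h2, show chi ψ a = 1 from ha, show chi ψ b = 1 from hb, one_mul]
  neg_mem' {a} ha := by
    rw [neg_eq_of_add_eq_zero_left (h2 a)]
    exact ha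

variable [Fintype H]

lemma sum_split (h2 : ∀ x : H, x + x = 0) (ψ : AddChar H ℂ) (e : H) (he : chi ψ e = -1)
    (g : H → ℝ) : ∑ x, g x = ∑ k : ker h2 ψ, g k + ∑ k : ker h2 ψ, g (k + e) := by
  have hk : ∀ k : ker h2 ψ, chi ψ k = 1 := fun k => k.2
  have hbij : Function.Bijective
      (Sum.elim (fun k : ker h2 ψ => (k : H)) (fun k : ker h2 ψ => (k : H) + e)) := by
    constructor
    · rintro (a | a) (b | b) hab
      · simpa using hab
      · have := congrArg (chi ψ) hab
        simp only [Sum.elim_inl, Sum.elim_inr, chi_add h2, hk, he] at this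
        norm_num at this
      · have := congrArg (chi ψ) hab
        simp only [Sum.elim_inl, Sum.elim_inr, chi_add h2, hk, he] at this
        norm_num at this
      · simpa using hab
    · intro x
      rcases chi_eq h2 ψ x with h | h
      · exact ⟨Sum.inl ⟨x, h⟩, rfl⟩
      · refine ⟨Sum.inr ⟨x + e, ?_⟩, ?_⟩
        · change chi ψ (x + e) = 1
          rw [chi_add h2, h, he]
          norm_num
        · simp [add_assoc, h2]
  rw [← hbij.sum_comp, Fintype.sum_sum_type]
  rfl

lemma card_ker (h2 : ∀ x : H, x + x = 0) (ψ : AddChar H ℂ) (e : H) (he : chi ψ e = -1) :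
    (Fintype.card H : ℝ) = 2 * Fintype.card (ker h2 ψ) := by
  have := sum_split h2 ψ e he (fun _ => 1)
  simp only [sum_const, card_univ, nsmul_eq_mul, mul_one] at this
  linarith

lemma coeff_split (h2 : ∀ x : H, x + x = 0) (ψ : AddChar H ℂ) (e : H) (he : chi ψ e = -1)
    (g : H → ℝ) : coeff g ψ = ∑ k : ker h2 ψ, g k - ∑ k : ker h2 ψ, g (k + e) := by
  have hk : ∀ k : ker h2 ψ, chi ψ k = 1 := fun k => k.2
  rw [coeff, sum_split h2 ψ e he]
  simp only [chi_add h2, hk, he]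
  simp [sub_eq_add_neg]

lemma sum_coset_le (K : AddSubgroup H) (s : H) (g : H → ℝ) (hg : ∀ x, 0 ≤ g x) :
    ∑ k : K, g (k + s) ≤ ∑ x, g x := by
  have hinj : Function.Injective (fun k : K => (k : H) + s) := fun a b h => by simpa using h
  rw [← sum_image (f := g) (g := fun k : K => (k : H) + s) (fun a _ b _ h => hinj h)]
  exact sum_le_sum_of_subset_of_nonneg (subset_univ _) fun x _ _ => hg x

/-- A large nontrivial Fourier coefficient of `w` yields an instance of the problem on the kernel
of the character, in which the mean of the new `w` is larger. -/
lemma exists_increment (h2 : ∀ x : H, x + x = 0) (f : H → H → ℝ) (w : H → ℝ) (α : ℝ)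
    (hf0 : ∀ v h, 0 ≤ f v h) (hf1 : ∀ v h, f v h ≤ 1) (hw0 : ∀ v, 0 ≤ w v)
    (hfw : ∀ v, Fintype.card H * w v ≤ ∑ h, f v h) (hw : ∑ v, w v = Fintype.card H * α)
    (ψ : AddChar H ℂ) (hψ : ψ ≠ 0) (hlarge : Fintype.card H * α ^ 2 / 2 < |coeff w ψ|) :
    (Fintype.card H : ℝ) = 2 * Fintype.card (ker h2 ψ) ∧
    ∃ (f' : ker h2 ψ → ker h2 ψ → ℝ) (w' : ker h2 ψ → ℝ),
      (∀ v h, 0 ≤ f' v h) ∧ (∀ v h, f' v h ≤ 1) ∧ (∀ v, 0 ≤ w' v) ∧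
      (∀ v, Fintype.card (ker h2 ψ) * w' v ≤ ∑ h, f' v h) ∧
      Fintype.card (ker h2 ψ) * (α + α ^ 2 / 2) ≤ ∑ v, w' v ∧
      triSum f' w' ≤ triSum f w := by
  obtain ⟨e, he⟩ := exists_chi_neg h2 hψ
  have hcard := card_ker h2 ψ e he
  refine ⟨hcard, ?_⟩
  have hsplit := sum_split h2 ψ e he w
  rw [coeff_split h2 ψ e he] at hlarge
  obtain ⟨s, hs⟩ : ∃ s : H, Fintype.card (ker h2 ψ) * (α + α ^ 2 / 2) ≤
      ∑ k : ker h2 ψ, w (k + s) := by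
    rw [hw, hcard] at hsplit
    rw [hcard] at hlarge
    rcases lt_abs.mp hlarge with h | h
    · refine ⟨0, ?_⟩
      simp only [add_zero]
      linarith
    · exact ⟨e, by linarith⟩
  have ht : ∀ v : H, ∃ t : H, Fintype.card (ker h2 ψ) * w v ≤ ∑ k : ker h2 ψ, f v (k + t) := by
    intro v
    have h1 := hfw v
    rw [sum_split h2 ψ e he (f v), hcard] at h1
    by_contra! hcon
    have ha := hcon 0
    have hb := hcon e
    simp only [add_zero] at ha
    linarith
  choose t ht using ht
  refine ⟨fun v h => f (v + s) (h + t (v + s)), fun v => w (v + s), fun _ _ => hf0 _ _,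
    fun _ _ => hf1 _ _, fun _ => hw0 _, fun v => ht _, hs, ?_⟩
  have hnn : ∀ v h h', 0 ≤ f v h * f v h' * w (v + h + h') := fun v h h' =>
    mul_nonneg (mul_nonneg (hf0 _ _) (hf0 _ _)) (hw0 _)
  unfold triSum
  refine le_trans ?_ (sum_coset_le (ker h2 ψ) s _
    fun v => sum_nonneg fun h _ => sum_nonneg fun h' _ => hnn v h h')
  refine sum_le_sum fun v _ => ?_
  refine le_trans ?_ (sum_coset_le (ker h2 ψ) (t (v + s)) _
    fun h => sum_nonneg fun h' _ => hnn _ h h')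
  refine sum_le_sum fun h _ => ?_
  refine le_trans (le_of_eq ?_) (sum_coset_le (ker h2 ψ) (t (v + s)) _ fun h' => hnn _ _ h')
  refine sum_congr rfl fun h' _ => ?_
  have : (v : H) + s + (h + t (v + s)) + (h' + t (v + s)) = ((v + h + h' : ker h2 ψ) : H) + s := by
    -- the two translations by `t` cancel
    have h0 := h2 (t (v + s))
    calc (v : H) + s + (h + t (v + s)) + (h' + t (v + s))
        = v + h + h' + s + (t (v + s) + t (v + s)) := by abel
      _ = _ := by rw [h0]; simp
  rw [this]

end Kernel

/-! ### The iteration -/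

/-- The lower bound for the normalised trilinear sum at density `α`. -/
noncomputable def bound (α : ℝ) : ℝ := α ^ 3 / 2 * Real.exp (-(9 * α⁻¹))

lemma bound_le_cube {α : ℝ} (hα : 0 < α) : bound α ≤ α ^ 3 / 2 := by
  unfold bound
  refine mul_le_of_le_one_right (by positivity) ?_
  rw [Real.exp_le_one_iff]
  have : 0 < α⁻¹ := inv_pos.mpr hα
  linarith

lemma eight_le_exp : (8 : ℝ) ≤ Real.exp 3 := by
  have h : Real.exp 3 = Real.exp 1 ^ 3 := by rw [← Real.exp_nat_mul]; norm_num
  have h1 : (2 : ℝ) ≤ Real.exp 1 := by linarith [Real.exp_one_gt_d9]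
  rw [h]
  calc (8 : ℝ) = 2 ^ 3 := by norm_num
    _ ≤ _ := by gcongr

/-- A density increment makes up for the factor `8` lost in passing to a hyperplane. -/
lemma bound_increment {α β : ℝ} (hα : 0 < α) (hα1 : α ≤ 1) (hβ : α + α ^ 2 / 2 ≤ β) :
    8 * bound α ≤ bound β := by
  have hinv : β⁻¹ ≤ α⁻¹ - 1 / 3 := by
    have h1 : β⁻¹ ≤ (α + α ^ 2 / 2)⁻¹ := inv_anti₀ (by positivity) hβ
    refine h1.trans ?_
    have h2 : α⁻¹ - 1 / 3 - (α + α ^ 2 / 2)⁻¹ = (1 - α) / (3 * (2 + α)) := by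
      field_simp
      ring
    have h3 : 0 ≤ (1 - α) / (3 * (2 + α)) := div_nonneg (by linarith) (by positivity)
    linarith
  have hαβ : α ≤ β := by nlinarith [sq_nonneg α]
  have hβ0 : 0 < β := hα.trans_le hαβ
  unfold bound
  calc 8 * (α ^ 3 / 2 * Real.exp (-(9 * α⁻¹)))
      ≤ Real.exp 3 * (α ^ 3 / 2 * Real.exp (-(9 * α⁻¹))) := by
        gcongr
        exact eight_le_exp
    _ = α ^ 3 / 2 * Real.exp (3 + -(9 * α⁻¹)) := by rw [Real.exp_add]; ring
    _ ≤ β ^ 3 / 2 * Real.exp (-(9 * β⁻¹)) := by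
        gcongr
        linarith

/-- Lower bound for the trilinear sum at mean `α`, by induction on `|H|`. The hypotheses ask only
for `w v ≤ 𝔼 f v`, not equality, since that is what survives restriction to a hyperplane. -/
theorem triSum_lower (m : ℕ) : ∀ (H : Type) [AddCommGroup H] [Fintype H],
    Fintype.card H = m → (∀ x : H, x + x = 0) → ∀ (f : H → H → ℝ) (w : H → ℝ) (α : ℝ),
    0 < α → (∀ v h, 0 ≤ f v h) → (∀ v h, f v h ≤ 1) → (∀ v, 0 ≤ w v) →
    (∀ v, Fintype.card H * w v ≤ ∑ h, f v h) → ∑ v, w v = Fintype.card H * α →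
    (Fintype.card H : ℝ) ^ 3 * bound α ≤ triSum f w := by
  induction m using Nat.strong_induction_on with
  | _ m ih =>
  intro H _ _ hm h2 f w α hα hf0 hf1 hw0 hfw hw
  have hNpos : 0 < (Fintype.card H : ℝ) := by exact_mod_cast Fintype.card_pos
  by_cases hsmall : ∀ ψ : AddChar H ℂ, ψ ≠ 0 → |coeff w ψ| ≤ Fintype.card H * α ^ 2 / 2
  · refine le_trans ?_ (triSum_of_small_coeffs h2 f w α hα hf0 hf1 hfw hw hsmall)
    exact mul_le_mul_of_nonneg_left (bound_le_cube hα) (by positivity)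
  · push Not at hsmall
    obtain ⟨ψ, hψ, hlarge⟩ := hsmall
    obtain ⟨hcard, f', w', hf0', hf1', hw0', hfw', hw', hT⟩ :=
      exists_increment h2 f w α hf0 hf1 hw0 hfw hw ψ hψ hlarge
    set k : ℝ := ((Fintype.card (ker h2 ψ) : ℕ) : ℝ) with hk
    have hkpos : 0 < k := by linarith
    have hα1 : α ≤ 1 := by
      have hw1 : ∀ v ∈ univ, w v ≤ (1 : ℝ) := fun v _ => by
        have h1 : ∑ h, f v h ≤ Fintype.card H := by
          simpa using sum_le_sum fun h (_ : h ∈ univ) => hf1 v h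
        refine le_of_mul_le_mul_left ?_ hNpos
        linarith [hfw v]
      have h1 := sum_le_sum hw1
      rw [hw] at h1
      simp only [sum_const, card_univ, nsmul_eq_mul] at h1
      exact le_of_mul_le_mul_left h1 hNpos
    set β : ℝ := (∑ v, w' v) / k with hβ
    have hαβ : α + α ^ 2 / 2 ≤ β := by
      rw [hβ, le_div_iff₀ hkpos]
      linarith
    have hβpos : 0 < β := lt_of_lt_of_le (by positivity) hαβ
    have hlt : Fintype.card (ker h2 ψ) < m := by
      have : (Fintype.card (ker h2 ψ) : ℝ) < m := by rw [← hm]; linarith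
      exact_mod_cast this
    have hrec := ih _ hlt (ker h2 ψ) rfl (fun x => Subtype.ext (h2 x)) f' w' β hβpos
      hf0' hf1' hw0' hfw' (by rw [hβ, ← hk]; field_simp)
    refine le_trans ?_ (hrec.trans hT)
    rw [← hk, hcard]
    have := mul_le_mul_of_nonneg_left (bound_increment hα hα1 hαβ) (pow_nonneg hkpos.le 3)
    calc (2 * k) ^ 3 * bound α = k ^ 3 * (8 * bound α) := by ring
      _ ≤ _ := this

lemma exp_le_bound {α : ℝ} (hα : 0 < α) (hα1 : α ≤ 1) : Real.exp (-(13 * α⁻¹)) ≤ bound α := by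
  have h1 : Real.exp (-α⁻¹) ≤ α := by
    rw [Real.exp_neg]
    refine inv_le_of_inv_le₀ hα ?_
    linarith [Real.add_one_le_exp α⁻¹]
  have h2 : Real.exp (-α⁻¹) ≤ 1 / 2 := by
    have h3 : 1 ≤ α⁻¹ := (one_le_inv₀ hα).mpr hα1
    rw [Real.exp_neg, one_div]
    refine inv_anti₀ (by norm_num) ?_
    linarith [Real.add_one_le_exp α⁻¹]
  have h3 : Real.exp (-(13 * α⁻¹)) =
      Real.exp (-α⁻¹) ^ 3 * Real.exp (-α⁻¹) * Real.exp (-(9 * α⁻¹)) := by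
    rw [← pow_succ, ← Real.exp_nat_mul, ← Real.exp_add]
    congr 1
    push_cast
    ring
  rw [h3]
  unfold bound
  calc _ ≤ α ^ 3 * (1 / 2) * Real.exp (-(9 * α⁻¹)) := by gcongr
    _ = _ := by ring

/-! ### Fibring over the subgroup of elements of order two -/

/-- The elements of order dividing two. -/
def twoTorsion (G : Type) [AddCommGroup G] : AddSubgroup G where
  carrier := {x | x + x = 0}
  zero_mem' := add_zero 0
  add_mem' {a b} ha hb := by
    change a + b + (a + b) = 0
    rw [add_add_add_comm, show a + a = 0 from ha, show b + b = 0 from hb, add_zero]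
  neg_mem' {a} ha := by
    change -a + -a = 0
    rw [← neg_add, show a + a = 0 from ha, neg_zero]

lemma ite_mul_ite_mul_ite (p q r : Prop) [Decidable p] [Decidable q] [Decidable r]
    [Decidable (p ∧ q ∧ r)] :
    (if p then (1 : ℝ) else 0) * (if q then 1 else 0) * (if r then 1 else 0) =
      if p ∧ q ∧ r then 1 else 0 := by
  by_cases p <;> by_cases q <;> by_cases r <;> simp_all

/-- The counting bound for a finite abelian group killed by four in which every element of order
two is a double. -/
theorem apCount_lower (G : Type) [AddCommGroup G] [Fintype G]
    (h4 : ∀ x : G, x + x ∈ twoTorsion G) (hdiv : ∀ v : twoTorsion G, ∃ u : G, u + u = v)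
    (A : Finset G) (hA : 0 < (A.card : ℝ) / Fintype.card G) :
    bound ((A.card : ℝ) / Fintype.card G) ≤ apCount A := by
  set H := twoTorsion G
  choose u hu using hdiv
  set N : ℝ := ((Fintype.card H : ℕ) : ℝ) with hN
  have hNpos : 0 < N := by
    rw [hN]
    exact_mod_cast Fintype.card_pos
  have hH2 : ∀ x : H, (x : G) + x = 0 := fun x => x.2
  -- every element of `G` is uniquely `u v + h`
  have hinj : ∀ v h v' h' : H, u v + h = u v' + h' → v = v' ∧ h = h' := by
    intro v h v' h' hE
    have hvv : v = v' := by
      apply Subtype.ext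
      have key : ∀ v h : H, u v + h + (u v + h) = (v : G) := fun v h => by
        rw [add_add_add_comm, hu, hH2, add_zero]
      rw [← key v h, ← key v' h', hE]
    subst hvv
    exact ⟨rfl, Subtype.ext (add_left_cancel hE)⟩
  have hbij : Function.Bijective (fun p : H × H => u p.1 + (p.2 : G)) := by
    constructor
    · rintro ⟨v, h⟩ ⟨v', h'⟩ hE
      obtain ⟨h1, h2⟩ := hinj _ _ _ _ hE
      exact Prod.ext h1 h2
    · intro x
      refine ⟨(⟨x + x, h4 x⟩, ⟨x - u ⟨x + x, h4 x⟩, ?_⟩), by simp⟩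
      change x - u _ + (x - u _) = 0
      rw [sub_add_sub_comm, hu, sub_self]
  have hcardG : (Fintype.card G : ℝ) = N ^ 2 := by
    rw [← Fintype.card_of_bijective hbij, Fintype.card_prod]
    push_cast
    ring
  set ind : G → ℝ := fun x => if x ∈ A then 1 else 0 with hind
  have hind0 : ∀ x, 0 ≤ ind x := fun x => by simp only [hind]; split_ifs <;> norm_num
  have hind1 : ∀ x, ind x ≤ 1 := fun x => by simp only [hind]; split_ifs <;> norm_num
  set f : H → H → ℝ := fun v h => ind (u v + h) with hf
  set w : H → ℝ := fun v => (∑ h, f v h) / N with hw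
  have hfsum : ∑ v, ∑ h, f v h = A.card := by
    rw [← Fintype.sum_prod_type' f, hbij.sum_comp ind]
    simp [hind]
  have hmain := triSum_lower _ H rfl (fun x => Subtype.ext (hH2 x)) f w _ hA
    (fun v h => hind0 _) (fun v h => hind1 _)
    (fun v => div_nonneg (sum_nonneg fun h _ => hind0 _) hNpos.le)
    (fun v => le_of_eq (by rw [hw, ← hN]; field_simp))
    (by
      rw [hw, ← sum_div, hfsum, hcardG, ← hN]
      field_simp)
  rw [← hN] at hmain
  have hcount : N * triSum f w = ((univ.filter fun q : H × H × H × H =>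
      u q.1 + q.2.1 ∈ A ∧ u q.1 + q.2.2.1 ∈ A ∧
        u (q.1 + q.2.1 + q.2.2.1) + q.2.2.2 ∈ A).card : ℝ) := by
    rw [card_filter]
    push_cast
    rw [Fintype.sum_prod_type, triSum, mul_sum]
    refine sum_congr rfl fun v _ => ?_
    rw [Fintype.sum_prod_type, mul_sum]
    refine sum_congr rfl fun h _ => ?_
    rw [Fintype.sum_prod_type, mul_sum]
    refine sum_congr rfl fun h' _ => ?_
    have : N * (f v h * f v h' * w (v + h + h')) =
        f v h * f v h' * ∑ g, f (v + h + h') g := by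
      simp only [hw]
      field_simp
    rw [this, mul_sum]
    refine sum_congr rfl fun g _ => ?_
    simp only [hf, hind]
    exact ite_mul_ite_mul_ite _ _ _
  -- `(v, h, h', g)` gives the progression `u v + h`, `u (v + h + h') + g`, `u v + h'`
  have hle : (univ.filter fun q : H × H × H × H =>
      u q.1 + q.2.1 ∈ A ∧ u q.1 + q.2.2.1 ∈ A ∧
        u (q.1 + q.2.1 + q.2.2.1) + q.2.2.2 ∈ A).card ≤
      (univ.filter fun p : G × G => p.1 ∈ A ∧ p.1 + p.2 ∈ A ∧ p.1 + 2 • p.2 ∈ A).card := by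
    refine card_le_card_of_injOn (fun q => (u q.1 + q.2.1,
      u (q.1 + q.2.1 + q.2.2.1) + q.2.2.2 - (u q.1 + q.2.1))) ?_ ?_
    · rintro ⟨v, h, h', g⟩ hq
      simp only [coe_filter, mem_univ, true_and, Set.mem_ofPred_eq] at hq ⊢
      obtain ⟨hq1, hq2, hq3⟩ := hq
      refine ⟨hq1, by simpa using hq3, ?_⟩
      have hy : u (v + h + h') + u (v + h + h') = u v + u v + h + h' := by
        rw [hu, hu]
        push_cast
        rfl
      have : u v + (h : G) + 2 • (u (v + h + h') + g - (u v + h)) = u v + h' := by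
        calc u v + (h : G) + 2 • (u (v + h + h') + g - (u v + h))
            = (u (v + h + h') + u (v + h + h')) + (g + g) - (u v + h) := by abel
          _ = u v + h' := by
            rw [hy, hH2]
            abel
      rw [this]
      exact hq2
    · rintro ⟨v, h, h', g⟩ - ⟨v₁, h₁, h₁', g₁⟩ - hE
      simp only [Prod.mk.injEq] at hE
      obtain ⟨hE1, hE2⟩ := hE
      rw [hE1] at hE2
      obtain ⟨rfl, rfl⟩ := hinj _ _ _ _ hE1
      obtain ⟨h5, rfl⟩ := hinj _ _ _ _ (sub_left_injective hE2)
      rw [add_left_cancel h5]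
  unfold apCount
  rw [hcardG] at hmain ⊢
  rw [le_div_iff₀ (by positivity)]
  calc _ = N * (N ^ 3 * bound (A.card / N ^ 2)) := by ring
    _ ≤ N * triSum f w := mul_le_mul_of_nonneg_left hmain hNpos.le
    _ ≤ _ := by
      rw [hcount]
      exact_mod_cast hle

end WeakCount

/-- **Counting theorem for `ℤ₄ⁿ` (weak form).** There is an absolute constant `C > 0`
such that for every `n` and every nonempty `A ⊆ (ℤ/4ℤ)^n` of density `α > 0`, one has
`Λ(A) ≥ exp(−C·α⁻¹)`. -/
theorem weak_count_z4n :
    ∃ C : ℝ, 0 < C ∧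
      ∀ (n : ℕ) (A : Finset (Fin n → ZMod 4)),
        let α : ℝ := (A.card : ℝ) / (Fintype.card (Fin n → ZMod 4) : ℝ)
        0 < α →
          apCount A ≥ Real.exp (-(C * α⁻¹)) := by
  refine ⟨13, by norm_num, ?_⟩
  intro n A α hα
  have hα1 : α ≤ 1 := by
    refine div_le_one_of_le₀ ?_ (by positivity)
    exact_mod_cast Finset.card_le_univ A
  refine le_trans (WeakCount.exp_le_bound hα hα1) (WeakCount.apCount_lower _ ?_ ?_ A hα)
  · intro x
    change x + x + (x + x) = 0
    funext i
    have : ∀ a : ZMod 4, a + a + (a + a) = 0 := by decide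
    exact this (x i)
  · rintro ⟨v, hv⟩
    have hv' : ∀ i, v i + v i = 0 := fun i => congrFun (show v + v = 0 from hv) i
    have : ∀ a : ZMod 4, a + a = 0 → ∃ b, b + b = a := by decide
    choose b hb using fun i => this (v i) (hv' i)
    exact ⟨b, funext hb⟩
end

section
/- There exists an absolute constant C > 0 such that for every integer n ≥ 1 and every subset A of G = (ℤ/4ℤ)^n that contains no proper three-term arithmetic progression, |A| ≤ C · 4^n / n. -/
/-!
The proof is the polynomial method of Croot, Lev and Pach, which gives far more than `4 ^ n / n`.

Write `v ∈ (ℤ/4ℤ)ⁿ` as `v = lo v + 2 · hi v` with `lo v, hi v ∈ 𝔽₂ⁿ`, and for `t ∈ 𝔽₂ⁿ` let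
`B t = {hi a : a ∈ A, lo a = t}`. The triple `(x, b, z)` is a progression exactly when
`lo x = lo z` and `lo b = lo x + hi x + hi z`. So if `A` has no proper progression, then
`t + x + y ≠ lo b` whenever `x ≠ y` lie in `B t` and `b ∈ A`.

Put `m = ⌊n/3⌋`, let `N` be the number of subsets of `Fin n` of size at most `m`, and let `T` be the
set of `t` with `#(B t) > 2N`. If `#T` exceeds the number of subsets of size greater than `2m + 1`,
a dimension count gives a nonzero multilinear polynomial `P` over `𝔽₂` of degree at most `2m + 1`
vanishing off `T` (`exists_multilinear_vanishing`), so `P t ≠ 0` for some `t ∈ T`. The matrix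
`P (t + x + y)` for `x, y ∈ B t` is then diagonal with nonzero diagonal, hence of rank `#(B t)`. On
the other hand each monomial of `P (u + y)` has degree at most `m` in `u` or in `y`, so the rank is
at most `2N` (`card_le_of_diagonal`), a contradiction.

Consequently `#A ≤ 2ⁿ · 2N + 2ⁿ · #{I : #I > 2m + 1}`, and both counts are at most `9 · 2ⁿ / n` by
Chebyshev's inequality for the binomial distribution (`card_far_le`).
-/

open Finset

namespace LevZ4

/-- The multilinear polynomial function on `𝔽₂ⁿ` with coefficient `c I` at the monomial
`∏ i ∈ I, x i`. -/
def mlin {n : ℕ} (c : Finset (Fin n) → ZMod 2) (x : Fin n → ZMod 2) : ZMod 2 :=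
  ∑ I, c I * ∏ i ∈ I, x i

lemma mlin_add {n : ℕ} (c : Finset (Fin n) → ZMod 2) (u y : Fin n → ZMod 2) :
    mlin c (u + y) = ∑ J : Finset (Fin n), ∑ K : Finset (Fin n),
      (if Disjoint J K then c (J ∪ K) else 0) * (∏ i ∈ J, u i) * ∏ i ∈ K, y i := by
  unfold mlin
  simp only [Pi.add_apply, Finset.prod_add, Finset.mul_sum]
  rw [Finset.sum_sigma', ← Finset.sum_product', ← Finset.sum_filter_of_ne
    (s := univ ×ˢ univ) (p := fun p : Finset (Fin n) × Finset (Fin n) => Disjoint p.1 p.2)]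
  · refine Finset.sum_bij' (fun p _ => (p.2, p.1 \ p.2)) (fun p _ => ⟨p.1 ∪ p.2, p.1⟩) ?_ ?_ ?_ ?_ ?_
    · intro p hp
      simpa using disjoint_sdiff
    · intro p hp
      exact Finset.mem_sigma.2 ⟨mem_univ _, mem_powerset.2 subset_union_left⟩
    · rintro ⟨I, J⟩ hp
      have hJ : J ⊆ I := by simpa using hp
      simp [Finset.union_sdiff_of_subset hJ]
    · rintro ⟨J, K⟩ hp
      have hJ : Disjoint J K := by simpa using hp
      simp [Finset.union_sdiff_cancel_left hJ]
    · rintro ⟨I, J⟩ hp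
      have hJ : J ⊆ I := by simpa using hp
      simp [Finset.union_sdiff_of_subset hJ, disjoint_sdiff, mul_assoc]
  · rintro ⟨J, K⟩ _ h
    by_contra h'
    simp [h'] at h

/-- The rank bound of Croot, Lev and Pach: a polynomial of degree at most `2m + 1` for which
`P (t + x + y)` vanishes at distinct `x, y ∈ B` but not at `x = y` forces `B` to be small. -/
lemma card_le_of_diagonal {n m : ℕ} (c : Finset (Fin n) → ZMod 2)
    (hc : ∀ I, 2 * m + 1 < #I → c I = 0) (t : Fin n → ZMod 2) (B : Finset (Fin n → ZMod 2))
    (h0 : mlin c t ≠ 0) (hB : ∀ x ∈ B, ∀ y ∈ B, x ≠ y → mlin c (t + x + y) = 0) :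
    #B ≤ 2 * #{I : Finset (Fin n) | #I ≤ m} := by
  classical
  set S : Finset (Finset (Fin n)) := {I : Finset (Fin n) | #I ≤ m} with hS
  let q : Finset (Fin n) → Finset (Fin n) → ZMod 2 :=
    fun J K => if Disjoint J K then c (J ∪ K) else 0
  have hq : ∀ J K, J ∉ S → K ∉ S → q J K = 0 := by
    intro J K hJ hK
    simp only [hS, mem_filter, mem_univ, true_and, not_le] at hJ hK
    simp only [q]
    split_ifs with hd
    · apply hc
      rw [card_union_of_disjoint hd]
      omega
    · rfl
  let U : Matrix B (S ⊕ S) (ZMod 2) := fun x s => Sum.elim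
    (fun J : S => ∏ i ∈ J.1, (t + x.1) i)
    (fun K : S => ∑ J ∈ Sᶜ, q J K.1 * ∏ i ∈ J, (t + x.1) i) s
  let V : Matrix (S ⊕ S) B (ZMod 2) := fun s y => Sum.elim
    (fun J : S => ∑ K, q J.1 K * ∏ i ∈ K, y.1 i)
    (fun K : S => ∏ i ∈ K.1, y.1 i) s
  have hUV : U * V = 1 := by
    ext x y
    have key : (U * V) x y = mlin c (t + x.1 + y.1) := by
      rw [mlin_add, Matrix.mul_apply, Fintype.sum_sum_type, ← Finset.sum_add_sum_compl S]
      congr 1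
      · simp only [U, V, Sum.elim_inl]
        rw [Finset.sum_coe_sort S (fun J => (∏ i ∈ J, (t + x.1) i) *
          ∑ K, q J K * ∏ i ∈ K, y.1 i)]
        refine Finset.sum_congr rfl fun J _ => ?_
        rw [Finset.mul_sum]
        refine Finset.sum_congr rfl fun K _ => ?_
        simp only [q]
        ring
      · simp only [U, V, Sum.elim_inr]
        rw [Finset.sum_coe_sort S (fun K => (∑ J ∈ Sᶜ, q J K * ∏ i ∈ J, (t + x.1) i) *
          ∏ i ∈ K, y.1 i)]
        simp only [Finset.sum_mul]
        rw [Finset.sum_comm]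
        refine Finset.sum_congr rfl fun J hJ => ?_
        refine Finset.sum_subset (Finset.subset_univ S) fun K _ hK => ?_
        rw [hq J K (by simpa using hJ) hK]
        ring
    rw [key]
    by_cases hxy : x = y
    · subst hxy
      have : t + x.1 + x.1 = t := by
        funext i
        simp [add_assoc, CharTwo.add_self_eq_zero]
      rw [this, Matrix.one_apply_eq]
      generalize mlin c t = a at h0
      revert a
      decide
    · rw [Matrix.one_apply_ne hxy]
      exact hB _ x.2 _ y.2 (fun h => hxy (Subtype.ext h))
  have h1 : (U * V).rank ≤ Fintype.card (S ⊕ S) :=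
    (Matrix.rank_mul_le_left U V).trans (Matrix.rank_le_card_width U)
  rw [hUV, Matrix.rank_one] at h1
  simp only [Fintype.card_sum, Fintype.card_coe] at h1
  omega

/-- A nonzero multilinear polynomial does not vanish identically: it takes the value `c I` at the
indicator of a minimal `I` in its support. -/
lemma exists_mlin_ne_zero {n : ℕ} (c : Finset (Fin n) → ZMod 2) (hc : c ≠ 0) :
    ∃ x, mlin c x ≠ 0 := by
  classical
  obtain ⟨I0, hI0⟩ := Function.ne_iff.1 hc
  obtain ⟨I, hI, hmin⟩ := Finset.exists_min_image
    (s := ({I | c I ≠ 0} : Finset (Finset (Fin n)))) (fun I => #I) ⟨I0, by simpa using hI0⟩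
  simp only [mem_filter, mem_univ, true_and] at hI hmin
  refine ⟨fun i => if i ∈ I then 1 else 0, ?_⟩
  have : mlin c (fun i => if i ∈ I then 1 else 0) = c I := by
    unfold mlin
    rw [Finset.sum_eq_single I]
    · rw [Finset.prod_congr rfl (fun i hi => if_pos hi)]
      simp
    · intro J _ hJ
      by_cases hcJ : c J = 0
      · simp [hcJ]
      · have hns : ¬ J ⊆ I := fun hs => hJ (Finset.eq_of_subset_of_card_le hs (hmin J hcJ))
        obtain ⟨i, hi, hiI⟩ := Finset.not_subset.1 hns
        rw [Finset.prod_eq_zero hi (if_neg hiI), mul_zero]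
    · simp
  rwa [this]

/-- Dimension count: if `T` has more points than there are monomials of degree greater than `d`,
some nonzero polynomial of degree at most `d` vanishes off `T`. -/
lemma exists_multilinear_vanishing {n d : ℕ} (T : Finset (Fin n → ZMod 2))
    (hT : #{I : Finset (Fin n) | d < #I} < #T) :
    ∃ c : Finset (Fin n) → ZMod 2, c ≠ 0 ∧ (∀ I, d < #I → c I = 0) ∧ ∀ x ∉ T, mlin c x = 0 := by
  classical
  let S : Finset (Finset (Fin n)) := {I : Finset (Fin n) | d < #I}
  let F : (Finset (Fin n) → ZMod 2) →ₗ[ZMod 2]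
      ((S → ZMod 2) × ((Tᶜ : Finset _) → ZMod 2)) :=
    { toFun := fun c => (fun I => c I.1, fun x => mlin c x.1)
      map_add' := by
        intro a b
        ext <;> simp [mlin, add_mul, Finset.sum_add_distrib]
      map_smul' := by
        intro a b
        ext <;> simp [mlin, mul_assoc, Finset.mul_sum] }
  have hker : LinearMap.ker F ≠ ⊥ := by
    apply LinearMap.ker_ne_bot_of_finrank_lt
    have h1 : #Tᶜ = 2 ^ n - #T := by simp [Finset.card_compl]
    have h2 : #T ≤ 2 ^ n := by simpa using Finset.card_le_univ T
    have h3 : #S < #T := hT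
    simp only [Module.finrank_prod, Module.finrank_fintype_fun_eq_card, Fintype.card_coe,
      Fintype.card_finset, Fintype.card_fin, h1]
    omega
  obtain ⟨c, hcF, hc⟩ := Submodule.exists_mem_ne_zero_of_ne_bot hker
  have hF : F c = 0 := hcF
  refine ⟨c, hc, fun I hI => ?_, fun x hx => ?_⟩
  · exact congrFun (congrArg Prod.fst hF) ⟨I, by simpa [S] using hI⟩
  · exact congrFun (congrArg Prod.snd hF) ⟨x, by simpa using hx⟩

/-- Chebyshev's inequality for the size of a uniformly random subset of `Fin n`, at distance `n / 6`
from the mean. -/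
lemma card_far_le {n : ℕ} (hn : 1 ≤ n) (S : Finset (Finset (Fin n)))
    (hS : ∀ I ∈ S, (n : ℝ) ^ 2 ≤ 36 * ((n : ℝ) / 2 - #I) ^ 2) : (#S : ℝ) ≤ 9 * 2 ^ n / n := by
  have hvar : ∑ I : Finset (Fin n), ((n : ℝ) / 2 - #I) ^ 2 = (n : ℝ) * (2 : ℝ) ^ n / 4 := by
    have h := congrArg (Polynomial.eval (1 / 2 : ℝ)) (bernsteinPolynomial.variance ℝ n)
    rw [Polynomial.eval_finsetSum] at h
    have h2 := Finset.sum_powerset_apply_card (fun k => ((n : ℝ) / 2 - k) ^ 2)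
      (x := (univ : Finset (Fin n)))
    rw [Finset.powerset_univ] at h2
    rw [h2, card_univ, Fintype.card_fin]
    have h3 : ∀ ν ∈ range (n + 1), Polynomial.eval (1 / 2 : ℝ)
        ((n • Polynomial.X - (ν : Polynomial ℝ)) ^ 2 * bernsteinPolynomial ℝ n ν) * 2 ^ n =
        n.choose ν • ((n : ℝ) / 2 - ν) ^ 2 := by
      intro ν hν
      have hle : ν ≤ n := by simpa [Nat.lt_succ_iff] using hν
      have hp : (1 / 2 : ℝ) ^ ν * (1 / 2) ^ (n - ν) * 2 ^ n = 1 := by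
        rw [← pow_add, Nat.add_sub_cancel' hle, ← mul_pow]
        norm_num
      simp only [bernsteinPolynomial, Polynomial.eval_mul, Polynomial.eval_pow,
        Polynomial.eval_sub, Polynomial.eval_natCast, Polynomial.eval_X, Polynomial.eval_one,
        nsmul_eq_mul]
      rw [show (1 : ℝ) - 1 / 2 = 1 / 2 by norm_num]
      linear_combination ((n : ℝ) / 2 - ν) ^ 2 * (n.choose ν : ℝ) * hp
    rw [← Finset.sum_congr rfl h3, ← Finset.sum_mul, h]
    simp only [Polynomial.eval_mul, Polynomial.eval_sub, Polynomial.eval_natCast,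
      Polynomial.eval_X, Polynomial.eval_one, nsmul_eq_mul]
    ring
  have h1 : (#S : ℝ) * n ^ 2 ≤ 36 * (n * 2 ^ n / 4) := by
    rw [← hvar, Finset.mul_sum, ← nsmul_eq_mul]
    refine (Finset.card_nsmul_le_sum S _ _ hS).trans ?_
    exact Finset.sum_le_sum_of_subset_of_nonneg (subset_univ S) fun _ _ _ => by positivity
  have hn' : (0 : ℝ) < n := by exact_mod_cast hn
  rw [le_div_iff₀ hn']
  refine le_of_mul_le_mul_right ?_ hn'
  linarith

/-- Reduction modulo `2`. -/
def lo {n : ℕ} (v : Fin n → ZMod 4) : Fin n → ZMod 2 := fun i => ((v i).val : ZMod 2)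

/-- The second binary digit of each coordinate. -/
def hi {n : ℕ} (v : Fin n → ZMod 4) : Fin n → ZMod 2 := fun i => ((v i).val / 2 : ℕ)

lemma ext_lo_hi {n : ℕ} {v w : Fin n → ZMod 4} (h1 : lo v = lo w) (h2 : hi v = hi w) : v = w := by
  have key : ∀ a b : ZMod 4, ((a.val : ℕ) : ZMod 2) = (b.val : ℕ) →
      ((a.val / 2 : ℕ) : ZMod 2) = (b.val / 2 : ℕ) → a = b := by decide
  funext i
  exact key _ _ (congrFun h1 i) (congrFun h2 i)

/-- Three elements satisfying the binary-digit form of the progression condition form a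
progression, which must be constant at its ends. -/
lemma eq_of_prog {n : ℕ} {A : Finset (Fin n → ZMod 4)}
    (hA : ∀ x d : Fin n → ZMod 4, x ∈ A → x + d ∈ A → x + 2 • d ∈ A → 2 • d = 0)
    {x z b : Fin n → ZMod 4} (hx : x ∈ A) (hz : z ∈ A) (hb : b ∈ A) (hxz : lo x = lo z)
    (hbl : lo b = lo x + hi x + hi z) : x = z := by
  have key : ∀ x z b : ZMod 4, ((x.val : ℕ) : ZMod 2) = (z.val : ℕ) →
      ((b.val : ℕ) : ZMod 2) = (x.val : ℕ) + (x.val / 2 : ℕ) + (z.val / 2 : ℕ) →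
      x + 2 • (b - x) = z := by decide
  have h : x + 2 • (b - x) = z := by
    funext i
    exact key _ _ _ (congrFun hxz i) (congrFun hbl i)
  have h0 := hA x (b - x) hx (by simpa using hb) (by rwa [h])
  rw [h0, add_zero] at h
  exact h

lemma card_bound {n m : ℕ} {A : Finset (Fin n → ZMod 4)}
    (hA : ∀ x d : Fin n → ZMod 4, x ∈ A → x + d ∈ A → x + 2 • d ∈ A → 2 • d = 0) :
    #A ≤ 2 ^ n * (2 * #{I : Finset (Fin n) | #I ≤ m}) +
      2 ^ n * #{I : Finset (Fin n) | 2 * m + 1 < #I} := by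
  classical
  let B : (Fin n → ZMod 2) → Finset (Fin n → ZMod 2) := fun t => {a ∈ A | lo a = t}.image hi
  have hcard : ∀ t, #{a ∈ A | lo a = t} = #(B t) := by
    intro t
    refine (Finset.card_image_of_injOn ?_).symm
    intro v hv w hw hvw
    simp only [coe_filter, Set.mem_ofPred_eq] at hv hw
    exact ext_lo_hi (hv.2.trans hw.2.symm) hvw
  set N := #{I : Finset (Fin n) | #I ≤ m} with hN
  let T : Finset (Fin n → ZMod 2) := {t | 2 * N < #(B t)}
  have hT : #T ≤ #{I : Finset (Fin n) | 2 * m + 1 < #I} := by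
    by_contra! hlt
    obtain ⟨c, hc0, hcd, hcT⟩ := exists_multilinear_vanishing T hlt
    obtain ⟨t, ht⟩ := exists_mlin_ne_zero c hc0
    have htT : t ∈ T := by
      by_contra h
      exact ht (hcT t h)
    have h1 : 2 * N < #(B t) := by simpa [T] using htT
    refine absurd (card_le_of_diagonal c hcd t (B t) ht ?_) (not_le.2 h1)
    intro x hx y hy hxy
    apply hcT
    intro hmem
    have h2 : 2 * N < #(B (t + x + y)) := by simpa [T] using hmem
    obtain ⟨b', hb'⟩ := Finset.card_pos.1 (lt_of_le_of_lt (Nat.zero_le _) h2)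
    simp only [B, mem_image, mem_filter] at hx hy hb'
    obtain ⟨x, ⟨hxA, hxt⟩, rfl⟩ := hx
    obtain ⟨y, ⟨hyA, hyt⟩, rfl⟩ := hy
    obtain ⟨b, ⟨hbA, hbt⟩, -⟩ := hb'
    exact hxy (congrArg hi (eq_of_prog hA hxA hyA hbA (hxt.trans hyt.symm) (by rw [hbt, hxt])))
  have hB2 : ∀ t, #(B t) ≤ 2 ^ n := fun t => by simpa using Finset.card_le_univ (B t)
  calc #A = ∑ t, #(B t) := by
        rw [Finset.card_eq_sum_card_fiberwise (f := lo) (t := univ) (by simp)]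
        exact Finset.sum_congr rfl fun t _ => hcard t
    _ ≤ ∑ t, (2 * N + if t ∈ T then 2 ^ n else 0) := by
        refine Finset.sum_le_sum fun t _ => ?_
        split_ifs with h
        · exact (hB2 t).trans (Nat.le_add_left _ _)
        · simpa [T] using h
    _ = 2 ^ n * (2 * N) + 2 ^ n * #T := by
        rw [Finset.sum_add_distrib]
        simp [mul_comm]
    _ ≤ _ := by gcongr

end LevZ4

/-- **Lev's theorem for `ℤ₄ⁿ`.** There is an absolute constant `C > 0` such that any
subset `A` of `(ℤ/4ℤ)^n` containing no proper three-term arithmetic progression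
(no triple `(x, x+d, x+2•d)` with `2•d ≠ 0` all of whose elements lie in `A`)
satisfies `|A| ≤ C · 4^n / n`. -/
theorem lev_z4n :
    ∃ C : ℝ, 0 < C ∧
      ∀ n : ℕ, 1 ≤ n →
        ∀ A : Finset (Fin n → ZMod 4),
          (∀ x d : Fin n → ZMod 4, x ∈ A → x + d ∈ A → x + 2 • d ∈ A → 2 • d = 0) →
          (A.card : ℝ) ≤ C * 4 ^ n / n := by
  refine ⟨27, by norm_num, fun n hn A hA => ?_⟩
  have h := LevZ4.card_bound (m := n / 3) hA
  have hlow : (#{I : Finset (Fin n) | #I ≤ n / 3} : ℝ) ≤ 9 * 2 ^ n / n := by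
    refine LevZ4.card_far_le hn _ fun I hI => ?_
    simp only [mem_filter, mem_univ, true_and] at hI
    have h3 : 3 * #I ≤ n := by omega
    have h3' : 3 * (#I : ℝ) ≤ n := by exact_mod_cast h3
    have hn0 : (0 : ℝ) ≤ n := Nat.cast_nonneg n
    nlinarith
  have hhigh : (#{I : Finset (Fin n) | 2 * (n / 3) + 1 < #I} : ℝ) ≤ 9 * 2 ^ n / n := by
    refine LevZ4.card_far_le hn _ fun I hI => ?_
    simp only [mem_filter, mem_univ, true_and] at hI
    have h3 : 2 * n ≤ 3 * #I := by omega
    have h3' : 2 * (n : ℝ) ≤ 3 * (#I : ℝ) := by exact_mod_cast h3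
    have hn0 : (0 : ℝ) ≤ n := Nat.cast_nonneg n
    nlinarith
  have h' : (#A : ℝ) ≤ 2 ^ n * (2 * (#{I : Finset (Fin n) | #I ≤ n / 3} : ℝ)) +
      2 ^ n * (#{I : Finset (Fin n) | 2 * (n / 3) + 1 < #I} : ℝ) := by exact_mod_cast h
  have h4 : (4 : ℝ) ^ n = 2 ^ n * 2 ^ n := by rw [← mul_pow]; norm_num
  calc (#A : ℝ) ≤ _ := h'
    _ ≤ 2 ^ n * (2 * (9 * 2 ^ n / n)) + 2 ^ n * (9 * 2 ^ n / n) := by gcongr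
    _ = 27 * 4 ^ n / n := by rw [h4]; ring
end

section
/- There exists an absolute constant C > 0 such that for every integer n ≥ 1 and every subset A of G = (ℤ/3ℤ)^n that contains no proper three-term arithmetic progression, |A| ≤ C · 3^n / n. -/
/-!
Meshulam's Fourier-analytic proof. In `(ℤ/3ℤ)^n` three points form an arithmetic progression
exactly when they sum to zero. Let `N = 3 ^ n` and let `Â(ξ) = ∑_{x ∈ A} ψ(ξ · x)`.
If `A` is progression-free, only the `|A|` constant triples sum to zero, so `∑_ξ Â(ξ)³ = N |A|`.
The frequency `0` contributes `|A|³`, and by Parseval the others contribute at most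
`N |A| · max_{ξ ≠ 0} |Â(ξ)|`; hence `|A|² ≤ N (1 + max_{ξ ≠ 0} |Â(ξ)|)`
(`card_sq_le_of_fourier_bound`).

If every progression-free set in dimension `n - 1` has at most `M` points, then each of the three
hyperplane slices `{x ∈ A | ξ · x = i}` has at most `M` points, since dropping a coordinate `j`
with `ξ j ≠ 0` embeds a slice in dimension `n - 1` and preserves progression-freeness. As the
character values sum to zero, `|Â(ξ)| = |∑_i (M - |A_i|) ψ(i)| ≤ 3 M - |A|` (`norm_fourier_le`).
With density `α = |A| / N` and `M = C 3 ^ (n - 1) / (n - 1)` this gives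
`α + α² ≤ C / (n - 1) + 3 ^ (-n)`, which forces `α ≤ C / n` when `C = 3`.
-/

open Finset

/-- A set containing no zero-sum triple with distinct entries; in `(ℤ/3ℤ)^n` this is
progression-freeness, since `x + (x + d) + (x + 2 • d) = 0` there. -/
def ZeroSumFree {n : ℕ} (A : Finset (Fin n → ZMod 3)) : Prop :=
  ∀ x ∈ A, ∀ y ∈ A, ∀ z ∈ A, x + y + z = 0 → x = y

/-- The unnormalised Fourier coefficient at `ξ` of the indicator function of `A`. -/
noncomputable def fourierCoeffSet {n : ℕ} (A : Finset (Fin n → ZMod 3)) (ξ : Fin n → ZMod 3) : ℂ :=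
  ∑ x ∈ A, ZMod.stdAddChar (ξ ⬝ᵥ x)

lemma sum_stdAddChar_dotProduct {n : ℕ} (x : Fin n → ZMod 3) :
    ∑ ξ : Fin n → ZMod 3, ZMod.stdAddChar (ξ ⬝ᵥ x) = if x = 0 then (3 : ℂ) ^ n else 0 := by
  let χ : AddChar (Fin n → ZMod 3) ℂ :=
    { toFun := fun ξ => ZMod.stdAddChar (ξ ⬝ᵥ x)
      map_zero_eq_one' := by simp
      map_add_eq_mul' := fun a b => by rw [add_dotProduct, AddChar.map_add_eq_mul] }
  have hχ : χ = 0 ↔ x = 0 := by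
    constructor
    · intro h
      funext j
      have h1 : χ (Pi.single j 1) = 1 := by rw [h]; rfl
      have h2 : ZMod.stdAddChar (x j) = (1 : ℂ) := by
        simpa [χ] using h1
      rw [← AddChar.map_zero_eq_one (ZMod.stdAddChar (N := 3))] at h2
      exact ZMod.injective_stdAddChar h2
    · rintro rfl
      ext ξ
      simp [χ]
  have h := AddChar.sum_eq_ite χ
  simp only [hχ] at h
  simpa [χ] using h

lemma sum_fourier_cube {n : ℕ} {A : Finset (Fin n → ZMod 3)} (hA : ZeroSumFree A) :
    ∑ ξ, fourierCoeffSet A ξ ^ 3 = (3 : ℂ) ^ n * #A := by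
  have h1 : ∀ ξ, fourierCoeffSet A ξ ^ 3 =
      ∑ x ∈ A, ∑ y ∈ A, ∑ z ∈ A, ZMod.stdAddChar (ξ ⬝ᵥ (x + y + z)) := by
    intro ξ
    simp only [dotProduct_add, AddChar.map_add_eq_mul, ← Finset.mul_sum, ← Finset.sum_mul,
      fourierCoeffSet]
    ring
  simp only [h1]
  rw [Finset.sum_comm]
  have h2 : ∀ x ∈ A, ∑ ξ : Fin n → ZMod 3, ∑ y ∈ A, ∑ z ∈ A,
      ZMod.stdAddChar (ξ ⬝ᵥ (x + y + z)) = (3 : ℂ) ^ n := by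
    intro x hx
    rw [Finset.sum_comm]
    have h3 : ∀ y ∈ A, ∑ ξ : Fin n → ZMod 3, ∑ z ∈ A, ZMod.stdAddChar (ξ ⬝ᵥ (x + y + z))
        = if y = x then (3 : ℂ) ^ n else 0 := by
      intro y hy
      rw [Finset.sum_comm]
      simp only [sum_stdAddChar_dotProduct]
      split_ifs with hyx
      · subst hyx
        have h4 : ∀ z, y + y + z = 0 ↔ z = y := by
          intro z
          have h5 : ∀ a b : ZMod 3, a + a + b = 0 ↔ b = a := by decide
          simp only [funext_iff, Pi.add_apply, Pi.zero_apply, h5]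
        simp [h4, hy]
      · refine Finset.sum_eq_zero fun z hz => if_neg fun h => hyx (hA x hx y hy z hz h).symm
    rw [Finset.sum_congr rfl h3]
    simp [hx]
  rw [Finset.sum_congr rfl h2]
  simp [mul_comm]

/-- Parseval's identity for the indicator function of `A`. -/
lemma sum_norm_fourier_sq {n : ℕ} (A : Finset (Fin n → ZMod 3)) :
    ∑ ξ, ‖fourierCoeffSet A ξ‖ ^ 2 = (3 : ℝ) ^ n * #A := by
  have h1 : ∀ ξ, ((‖fourierCoeffSet A ξ‖ ^ 2 : ℝ) : ℂ) =
      ∑ x ∈ A, ∑ y ∈ A, ZMod.stdAddChar (ξ ⬝ᵥ (x - y)) := by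
    intro ξ
    have h2 : (starRingEnd ℂ) (fourierCoeffSet A ξ) =
        ∑ y ∈ A, ZMod.stdAddChar (-(ξ ⬝ᵥ y)) := by
      simp only [fourierCoeffSet, map_sum, AddChar.map_neg_eq_conj]
    push_cast
    rw [← Complex.mul_conj', h2, fourierCoeffSet, Finset.sum_mul_sum]
    refine Finset.sum_congr rfl fun x _ => Finset.sum_congr rfl fun y _ => ?_
    rw [dotProduct_sub, sub_eq_add_neg, AddChar.map_add_eq_mul]
  have h : ((∑ ξ, ‖fourierCoeffSet A ξ‖ ^ 2 : ℝ) : ℂ) = ((3 ^ n * #A : ℝ) : ℂ) := by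
    rw [Complex.ofReal_sum]
    simp only [h1]
    rw [Finset.sum_comm]
    have h2 : ∀ x ∈ A, ∑ ξ : Fin n → ZMod 3, ∑ y ∈ A,
        ZMod.stdAddChar (ξ ⬝ᵥ (x - y)) = (3 : ℂ) ^ n := by
      intro x hx
      rw [Finset.sum_comm]
      simp only [sum_stdAddChar_dotProduct, sub_eq_zero]
      simp [hx]
    rw [Finset.sum_congr rfl h2]
    simp [mul_comm]
  exact_mod_cast h

lemma card_sq_le_of_fourier_bound {n : ℕ} {A : Finset (Fin n → ZMod 3)} (hA : ZeroSumFree A)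
    (hne : A.Nonempty) {B : ℝ} (hB : ∀ ξ ≠ 0, ‖fourierCoeffSet A ξ‖ ≤ B) (hB0 : 0 ≤ B) :
    (#A : ℝ) ^ 2 ≤ 3 ^ n * (1 + B) := by
  have hpos : (0 : ℝ) < #A := by exact_mod_cast hne.card_pos
  have h0 : fourierCoeffSet A 0 = #A := by simp [fourierCoeffSet]
  have hc := sum_fourier_cube hA
  rw [← Finset.add_sum_erase _ _ (mem_univ 0), h0] at hc
  have hs : ‖∑ ξ ∈ univ.erase 0, fourierCoeffSet A ξ ^ 3‖ ≤ B * (3 ^ n * #A) := by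
    calc _ ≤ ∑ ξ ∈ univ.erase 0, ‖fourierCoeffSet A ξ ^ 3‖ := norm_sum_le _ _
      _ ≤ ∑ ξ ∈ univ.erase 0, B * ‖fourierCoeffSet A ξ‖ ^ 2 := by
          refine Finset.sum_le_sum fun ξ hξ => ?_
          rw [norm_pow, pow_succ']
          exact mul_le_mul_of_nonneg_right (hB ξ (Finset.ne_of_mem_erase hξ)) (by positivity)
      _ ≤ ∑ ξ, B * ‖fourierCoeffSet A ξ‖ ^ 2 :=
          Finset.sum_le_sum_of_subset_of_nonneg (Finset.erase_subset _ _)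
            fun _ _ _ => by positivity
      _ = _ := by rw [← Finset.mul_sum, sum_norm_fourier_sq]
  have h3 : (#A : ℝ) ^ 3 ≤ 3 ^ n * #A + B * (3 ^ n * #A) := by
    have h4 : ((#A : ℂ)) ^ 3 = 3 ^ n * #A - ∑ ξ ∈ univ.erase 0, fourierCoeffSet A ξ ^ 3 :=
      eq_sub_of_add_eq hc
    have h5 := congrArg norm h4
    have h6 := norm_sub_le ((3 : ℂ) ^ n * #A) (∑ ξ ∈ univ.erase 0, fourierCoeffSet A ξ ^ 3)
    simp only [norm_pow, norm_mul, Complex.norm_natCast, Complex.norm_ofNat] at h5 h6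
    linarith
  refine le_of_mul_le_mul_right ?_ hpos
  linarith

lemma card_slice_le {n : ℕ} {M : ℝ}
    (hM : ∀ A : Finset (Fin n → ZMod 3), ZeroSumFree A → (#A : ℝ) ≤ M)
    {A : Finset (Fin (n + 1) → ZMod 3)} (hA : ZeroSumFree A) {ξ : Fin (n + 1) → ZMod 3}
    (hξ : ξ ≠ 0) (i : ZMod 3) : (#{x ∈ A | ξ ⬝ᵥ x = i} : ℝ) ≤ M := by
  obtain ⟨j, hj⟩ := Function.ne_iff.mp hξ
  -- a vector of the hyperplane `ξ · v = 0` vanishes once its coordinates other than `j` do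
  have key : ∀ v : Fin (n + 1) → ZMod 3, ξ ⬝ᵥ v = 0 → (∀ k, v (j.succAbove k) = 0) → v = 0 := by
    intro v hv hk
    have hvj : ξ j * v j = 0 := by
      simpa [dotProduct, Fin.sum_univ_succAbove _ j, hk] using hv
    have hvj' : v j = 0 := (mul_eq_zero.mp hvj).resolve_left hj
    funext k
    rcases Fin.eq_self_or_eq_succAbove j k with rfl | ⟨k, rfl⟩
    · exact hvj'
    · exact hk k
  let f : (Fin (n + 1) → ZMod 3) → (Fin n → ZMod 3) := fun x k => x (j.succAbove k)
  have hinj : Set.InjOn f ({x ∈ A | ξ ⬝ᵥ x = i} : Finset _) := by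
    intro x hx y hy hxy
    simp only [coe_filter, Set.mem_ofPred_eq] at hx hy
    refine sub_eq_zero.mp (key _ (by rw [dotProduct_sub, hx.2, hy.2, sub_self]) fun k => ?_)
    have := congrFun hxy k
    simpa [sub_eq_zero, f] using this
  rw [← Finset.card_image_of_injOn hinj]
  refine hM _ ?_
  intro x' hx' y' hy' z' hz' h
  simp only [mem_image, mem_filter] at hx' hy' hz'
  obtain ⟨x, ⟨hx, hxi⟩, rfl⟩ := hx'
  obtain ⟨y, ⟨hy, hyi⟩, rfl⟩ := hy'
  obtain ⟨z, ⟨hz, hzi⟩, rfl⟩ := hz'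
  refine congrArg f (hA x hx y hy z hz (key _ ?_ fun k => congrFun h k))
  rw [dotProduct_add, dotProduct_add, hxi, hyi, hzi]
  have h3 : ∀ c : ZMod 3, c + c + c = 0 := by decide
  exact h3 i

lemma norm_fourier_le {n : ℕ} {M : ℝ}
    (hM : ∀ A : Finset (Fin n → ZMod 3), ZeroSumFree A → (#A : ℝ) ≤ M)
    {A : Finset (Fin (n + 1) → ZMod 3)} (hA : ZeroSumFree A) {ξ : Fin (n + 1) → ZMod 3}
    (hξ : ξ ≠ 0) : ‖fourierCoeffSet A ξ‖ ≤ 3 * M - #A := by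
  have hsum : ∑ i : ZMod 3, (ZMod.stdAddChar i : ℂ) = 0 := by
    refine AddChar.sum_eq_zero_of_ne_one fun h => ?_
    have h' : (ZMod.stdAddChar (1 : ZMod 3) : ℂ) = ZMod.stdAddChar (0 : ZMod 3) := by rw [h]; simp
    exact one_ne_zero (ZMod.injective_stdAddChar h')
  have h1 : fourierCoeffSet A ξ =
      ∑ i : ZMod 3, (#{x ∈ A | ξ ⬝ᵥ x = i} : ℂ) * ZMod.stdAddChar i := by
    rw [fourierCoeffSet, ← Finset.sum_fiberwise A (fun x => ξ ⬝ᵥ x)]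
    refine Finset.sum_congr rfl fun i _ => ?_
    rw [Finset.sum_congr rfl fun x hx => by rw [(mem_filter.mp hx).2], sum_const, nsmul_eq_mul]
  have hcard : (#A : ℝ) = ∑ i : ZMod 3, (#{x ∈ A | ξ ⬝ᵥ x = i} : ℝ) := by
    exact_mod_cast Finset.card_eq_sum_card_fiberwise (f := fun x => ξ ⬝ᵥ x) (t := univ)
      fun _ _ => by simp
  have h2 : fourierCoeffSet A ξ =
      -∑ i : ZMod 3, ((M - #{x ∈ A | ξ ⬝ᵥ x = i} : ℝ) : ℂ) * ZMod.stdAddChar i := by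
    push_cast
    simp only [sub_mul, Finset.sum_sub_distrib, ← Finset.mul_sum, hsum, h1]
    ring
  rw [h2, norm_neg]
  calc _ ≤ ∑ i : ZMod 3, ‖((M - #{x ∈ A | ξ ⬝ᵥ x = i} : ℝ) : ℂ) * ZMod.stdAddChar i‖ :=
        norm_sum_le _ _
    _ = ∑ i : ZMod 3, (M - #{x ∈ A | ξ ⬝ᵥ x = i}) := by
        refine Finset.sum_congr rfl fun i _ => ?_
        rw [norm_mul, AddChar.norm_apply, mul_one, Complex.norm_real, Real.norm_of_nonneg]
        exact sub_nonneg.mpr (card_slice_le hM hA hξ i)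
    _ = 3 * M - #A := by
        rw [Finset.sum_sub_distrib, ← hcard]
        simp

lemma sq_le_three_pow (n : ℕ) : n ^ 2 ≤ 3 ^ n := by
  induction n with
  | zero => simp
  | succ k ih =>
    rcases Nat.lt_or_ge k 2 with hk | hk
    · interval_cases k <;> norm_num
    · rw [pow_succ 3]
      nlinarith

lemma card_le_of_zeroSumFree (n : ℕ) : ∀ A : Finset (Fin (n + 1) → ZMod 3), ZeroSumFree A →
    (#A : ℝ) ≤ 3 * 3 ^ (n + 1) / (n + 1) := by
  induction n with
  | zero =>
    intro A _
    have h : #A ≤ 3 := by simpa using Finset.card_le_univ A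
    have h' : (#A : ℝ) ≤ 3 := by exact_mod_cast h
    norm_num
    linarith
  | succ n ih =>
    intro A hA
    by_contra! hlt
    push_cast at hlt
    have hbig : (0 : ℝ) < #A := lt_trans (by positivity) hlt
    have hne : A.Nonempty := Finset.card_pos.mp (by exact_mod_cast hbig)
    have hB : ∀ ξ ≠ 0, ‖fourierCoeffSet A ξ‖ ≤ 3 * (3 * 3 ^ (n + 1) / (n + 1)) - #A :=
      fun ξ hξ => norm_fourier_le ih hA hξ
    have hB0 : (0 : ℝ) ≤ 3 * (3 * 3 ^ (n + 1) / (n + 1)) - #A :=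
      (norm_nonneg _).trans (hB 1 one_ne_zero)
    have hmain := card_sq_le_of_fourier_bound hA hne hB hB0
    have hsq : ((n : ℝ) + 2) ^ 2 ≤ 3 ^ (n + 2) := by exact_mod_cast sq_le_three_pow (n + 2)
    have hn : (0 : ℝ) ≤ n := Nat.cast_nonneg n
    set N : ℝ := 3 ^ (n + 2) with hN
    have hNpos : 0 < N := by positivity
    obtain ⟨a, ha⟩ : ∃ a : ℝ, (#A : ℝ) = a * N := ⟨#A / N, by field_simp⟩
    have hM : (3 : ℝ) * (3 * 3 ^ (n + 1) / (n + 1)) = 3 / (n + 1) * N := by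
      rw [hN]; ring
    rw [hM, ha] at hmain
    have hα : 3 / ((n : ℝ) + 2) < a := by
      rw [ha] at hlt
      refine lt_of_mul_lt_mul_right ?_ hNpos.le
      calc _ = 3 * N / (n + 1 + 1) := by ring
        _ < _ := hlt
    have h1 : a ^ 2 + a ≤ 3 / (n + 1) + 1 / N := by
      refine le_of_mul_le_mul_right ?_ (pow_pos hNpos 2)
      have : 1 / N * N ^ 2 = N := by field_simp
      nlinarith
    have h2 : 1 / N ≤ 1 / ((n : ℝ) + 2) ^ 2 := one_div_le_one_div_of_le (by positivity) hsq
    have h3 : (3 / ((n : ℝ) + 2)) ^ 2 < a ^ 2 :=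
      pow_lt_pow_left₀ hα (by positivity) two_ne_zero
    have h4 : (3 : ℝ) / (n + 1) + 1 / ((n : ℝ) + 2) ^ 2
        ≤ (3 / ((n : ℝ) + 2)) ^ 2 + 3 / ((n : ℝ) + 2) := by
      rw [← sub_nonneg]
      have : (3 / ((n : ℝ) + 2)) ^ 2 + 3 / ((n : ℝ) + 2)
          - (3 / (n + 1) + 1 / ((n : ℝ) + 2) ^ 2) =
          (5 * n + 2) / ((n + 1) * (n + 2) ^ 2) := by
        field_simp
        ring
      rw [this]
      positivity
    linarith

/-- **Roth–Meshulam theorem for `ℤ₃ⁿ`.** There is an absolute constant `C > 0` such that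
any subset `A` of `(ℤ/3ℤ)^n` containing no proper three-term arithmetic progression
(no triple `(x, x+d, x+2•d)` with `2•d ≠ 0` all of whose elements lie in `A`)
satisfies `|A| ≤ C · 3^n / n`. -/
theorem roth_meshulam_z3n :
    ∃ C : ℝ, 0 < C ∧
      ∀ n : ℕ, 1 ≤ n →
        ∀ A : Finset (Fin n → ZMod 3),
          (∀ x d : Fin n → ZMod 3, x ∈ A → x + d ∈ A → x + 2 • d ∈ A → 2 • d = 0) →
          (A.card : ℝ) ≤ C * 3 ^ n / n := by
  refine ⟨3, by norm_num, ?_⟩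
  intro n hn A hA
  obtain ⟨m, rfl⟩ := Nat.exists_eq_add_of_le' hn
  have hfree : ZeroSumFree A := by
    intro x hx y hy z hz h
    have hz' : x + 2 • (y - x) = z := by
      have h5 : ∀ a b c : ZMod 3, a + b + c = 0 → a + 2 • (b - a) = c := by decide
      funext k
      exact h5 _ _ _ (congrFun h k)
    have h0 := hA x (y - x) hx (by simpa using hy) (by rwa [hz'])
    have h6 : ∀ a b : ZMod 3, 2 • (b - a) = 0 → a = b := by decide
    funext k
    exact h6 _ _ (congrFun h0 k)
  have h := card_le_of_zeroSumFree m A hfree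
  push_cast
  exact h
end

section
/- There exists an absolute constant C > 0 such that for every finite abelian group G and every nonempty subset A ⊆ G of density α > 0, one has Λ(A) ≥ exp(−C · α^{−C}). -/
/-!
The proof is Bourgain's density increment on Bohr sets, arranged so that it works in every finite
abelian group, including those of even order.

Let `f` be the indicator function of `A`, and suppose that `f` has mean `a` on a regular Bohr set
`B₀` (after a translation). Take much smaller regular Bohr sets `B₁ ⊇ B₂` with the same frequencies
and consider the average of `f(c + p - q) f(c + r) f(c + 2r - p + q)` over `c ∈ B₀`, `p, q ∈ B₁` and
`r ∈ B₂`. Up to normalization it is a lower bound for the number of progressions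
(`roth_count_upper`). The middle term ranges over the smallest set. Replacing `f(c + r)` by its
mean over `r` leaves a main term which regularity turns into `𝔼_c (𝔼_p f(c + 2p))²`, at least about
`a²` by Cauchy–Schwarz (`roth_main_term`); this needs translations only, never a division by `2`.
The error is bounded by the largest Fourier coefficient of the balanced function on `c + B₂`
(`roth_fourier_local`), where again only the middle function carries the supremum norm, so that
squaring of characters need not be injective.

If such a coefficient, at a character `γ`, is large, then the mean of `f` increases on a translate
of a Bohr set with the additional frequency `γ` (`roth_increment`). Hence either there are at least
about `a³ |B₀| |B₂|` progressions, or the mean increases by `1 / N` on a translate of a Bohr set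
whose rank is larger by at most one and whose radius shrinks by a factor polynomial in `N`
(`roth_step`). With `1 / k ≤ α` and `N = 1024 k⁵` there are at most `N` increments, and all Bohr sets
involved have density at least `exp(-O(k⁴⁰))` by the doubling bound `card_bohrSet_two_mul`.
-/

open scoped BigOperators Classical

section Roth

open Finset

/-! ### Averages, almost invariance, and Fourier analysis -/

lemma roth_sub_le_expect {ι : Type*} {s : Finset ι} (hs : s.Nonempty) {f g : ι → ℝ} {η : ℝ}
    (h : ∀ i ∈ s, g i - η ≤ f i) : (𝔼 i ∈ s, g i) - η ≤ 𝔼 i ∈ s, f i := by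
  rw [← Finset.expect_const hs η, ← Finset.expect_sub_distrib]
  exact Finset.expect_le_expect h

lemma roth_expect_le_const {ι : Type*} {s : Finset ι} (hs : s.Nonempty) {f : ι → ℝ} {a : ℝ}
    (h : ∀ i ∈ s, f i ≤ a) : (𝔼 i ∈ s, f i) ≤ a := Finset.expect_le hs h

lemma roth_norm_expect_le {ι : Type*} (s : Finset ι) (f : ι → ℂ) :
    ‖𝔼 i ∈ s, f i‖ ≤ 𝔼 i ∈ s, ‖f i‖ := by
  rw [Finset.expect_eq_sum_div_card, Finset.expect_eq_sum_div_card, norm_div,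
    Complex.norm_natCast]
  gcongr
  exact norm_sum_le _ _

section
variable {G : Type} [AddCommGroup G]

/-- `B` is almost invariant under translation by `u`: at most a proportion `η / 2` of its elements
leave `B`. The factor `1 / 2` makes `η` the bound for the change in the mean over `B` of a function
bounded by `1`, as the elements leaving and those entering both contribute. -/
def AlmostInv (B : Finset G) (η : ℝ) (u : G) : Prop :=
  ((#{x ∈ B | x + u ∉ B} : ℕ) : ℝ) ≤ η / 2 * #B

lemma AlmostInv.norm_sum_sub_le {𝕜 : Type*} [RCLike 𝕜] {B : Finset G} {η : ℝ} {u : G}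
    (h : AlmostInv B η u) (g : G → 𝕜) (hg : ∀ x, ‖g x‖ ≤ 1) :
    ‖(∑ x ∈ B, g (x + u)) - ∑ x ∈ B, g x‖ ≤ η * #B := by
  unfold AlmostInv at h
  have e1 : ∑ x ∈ B, g (x + u) = ∑ y ∈ B.map (addRightEmbedding u), g y := by
    simp [Finset.sum_map]
  have c1 : #(B.map (addRightEmbedding u) \ B) = #{x ∈ B | x + u ∉ B} := by
    rw [← Finset.card_map (addRightEmbedding u) (s := {x ∈ B | x + u ∉ B})]
    congr 1
    ext y
    simp only [mem_sdiff, mem_map, mem_filter, addRightEmbedding_apply]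
    constructor
    · rintro ⟨⟨x, hx, rfl⟩, hy⟩
      exact ⟨x, ⟨hx, hy⟩, rfl⟩
    · rintro ⟨x, ⟨hx, hy⟩, rfl⟩
      exact ⟨⟨x, hx, rfl⟩, hy⟩
  have c2 : #(B \ B.map (addRightEmbedding u)) = #{x ∈ B | x + u ∉ B} := by
    rw [← c1]
    exact (Finset.card_sdiff_comm (by simp)).symm
  have bd : ∀ S : Finset G, ‖∑ x ∈ S, g x‖ ≤ #S := by
    intro S
    calc ‖∑ x ∈ S, g x‖ ≤ ∑ x ∈ S, ‖g x‖ := norm_sum_le _ _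
      _ ≤ ∑ x ∈ S, (1 : ℝ) := Finset.sum_le_sum (fun x _ => hg x)
      _ = #S := by simp
  rw [e1, ← Finset.sum_sdiff_sub_sum_sdiff]
  have b1 := bd (B.map (addRightEmbedding u) \ B)
  have b2 := bd (B \ B.map (addRightEmbedding u))
  rw [c1] at b1
  rw [c2] at b2
  have := norm_sub_le (∑ x ∈ B.map (addRightEmbedding u) \ B, g x)
    (∑ x ∈ B \ B.map (addRightEmbedding u), g x)
  linarith

lemma AlmostInv.norm_expect_sub_le {𝕜 : Type*} [RCLike 𝕜] {B : Finset G} {η : ℝ} {u : G}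
    (h : AlmostInv B η u) (hB : B.Nonempty) (g : G → 𝕜) (hg : ∀ x, ‖g x‖ ≤ 1) :
    ‖(𝔼 x ∈ B, g (x + u)) - 𝔼 x ∈ B, g x‖ ≤ η := by
  have hc : (0 : ℝ) < #B := by exact_mod_cast hB.card_pos
  rw [Finset.expect_eq_sum_div_card, Finset.expect_eq_sum_div_card, ← sub_div, norm_div,
    RCLike.norm_natCast, div_le_iff₀ hc]
  exact h.norm_sum_sub_le g hg

lemma AlmostInv.expect_ge {B : Finset G} {η : ℝ} {u : G}
    (h : AlmostInv B η u) (hB : B.Nonempty) (g : G → ℝ) (hg0 : ∀ x, 0 ≤ g x)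
    (hg : ∀ x, g x ≤ 1) :
    (𝔼 x ∈ B, g x) - η ≤ 𝔼 x ∈ B, g (x + u) := by
  have := h.norm_expect_sub_le hB g
    (fun x => by rw [Real.norm_eq_abs, abs_of_nonneg (hg0 x)]; exact hg x)
  rw [Real.norm_eq_abs, abs_le] at this
  linarith [this.1]

variable [Fintype G]

lemma roth_parseval (F : G → ℂ) :
    ∑ γ : AddChar G ℂ, ‖∑ x, F x * γ x‖ ^ 2 = Fintype.card G * ∑ x, ‖F x‖ ^ 2 := by
  have key : ((∑ γ : AddChar G ℂ, ‖∑ x, F x * γ x‖ ^ 2 : ℝ) : ℂ)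
      = ((Fintype.card G * ∑ x, ‖F x‖ ^ 2 : ℝ) : ℂ) := by
    push_cast
    have h1 : ∀ γ : AddChar G ℂ, ((‖∑ x, F x * γ x‖ : ℝ) : ℂ) ^ 2
        = ∑ x, ∑ y, F x * (starRingEnd ℂ) (F y) * γ (x - y) := by
      intro γ
      rw [← Complex.mul_conj', map_sum, Finset.sum_mul_sum]
      refine Finset.sum_congr rfl fun x _ => Finset.sum_congr rfl fun y _ => ?_
      rw [map_mul, ← AddChar.map_neg_eq_conj, sub_eq_add_neg, AddChar.map_add_eq_mul]
      ring
    simp_rw [h1]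
    rw [Finset.sum_comm]
    rw [Finset.mul_sum]
    refine Finset.sum_congr rfl fun x _ => ?_
    rw [Finset.sum_comm]
    simp_rw [← Finset.mul_sum, AddChar.sum_apply_eq_ite, sub_eq_zero]
    simp [Complex.mul_conj']
    ring
  exact_mod_cast key

/-- Fourier control of the form `∑ F₁(p) F₂(2r - p) h(r)`. Expanding in characters gives
`∑_γ F̂₁(γ) F̂₂(γ) ĥ(γ⁻²)`. The supremum bound is put on `ĥ` only, and Cauchy–Schwarz with Parseval
handles the other two factors, so it is harmless that `γ ↦ γ²` need not be injective. -/
lemma roth_fourier (F₁ F₂ h : G → ℂ) {τ : ℝ} (hτ : ∀ γ : AddChar G ℂ, ‖∑ r, h r * γ r‖ ≤ τ) :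
    ‖∑ p, ∑ r, F₁ p * F₂ (2 • r - p) * h r‖
      ≤ τ * (√(∑ x, ‖F₁ x‖ ^ 2) * √(∑ x, ‖F₂ x‖ ^ 2)) := by
  have hG : (0 : ℝ) < Fintype.card G := by exact_mod_cast Fintype.card_pos
  have h0 : 0 ≤ τ := le_trans (norm_nonneg _) (hτ 0)
  have e : (Fintype.card G : ℂ) * ∑ p, ∑ r, F₁ p * F₂ (2 • r - p) * h r
      = ∑ γ : AddChar G ℂ, (∑ x, F₁ x * γ x) * (∑ x, F₂ x * γ x) *
          (∑ r, h r * ((γ⁻¹) ^ 2 : AddChar G ℂ) r) := by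
    have h1 : ∀ γ : AddChar G ℂ, (∑ x, F₁ x * γ x) * (∑ x, F₂ x * γ x) *
          (∑ r, h r * ((γ⁻¹) ^ 2 : AddChar G ℂ) r)
        = ∑ p, ∑ r, ∑ t, F₁ p * F₂ t * h r * γ (t - (2 • r - p)) := by
      intro γ
      rw [Finset.sum_mul_sum, Finset.sum_mul]
      refine Finset.sum_congr rfl fun p _ => ?_
      rw [Finset.sum_mul_sum, Finset.sum_comm]
      refine Finset.sum_congr rfl fun r _ => Finset.sum_congr rfl fun t _ => ?_
      have : t - (2 • r - p) = p + t + (2 • (-r)) := by rw [smul_neg]; abel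
      rw [this, AddChar.map_add_eq_mul, AddChar.map_add_eq_mul, AddChar.map_nsmul_eq_pow,
        AddChar.pow_apply, AddChar.inv_apply]
      ring
    simp_rw [h1]
    rw [Finset.mul_sum, Finset.sum_comm]
    refine Finset.sum_congr rfl fun p _ => ?_
    rw [Finset.mul_sum, Finset.sum_comm]
    refine Finset.sum_congr rfl fun r _ => ?_
    rw [Finset.sum_comm]
    simp_rw [← Finset.mul_sum, AddChar.sum_apply_eq_ite, sub_eq_zero]
    simp
    ring
  have hn : (Fintype.card G : ℝ) * ‖∑ p, ∑ r, F₁ p * F₂ (2 • r - p) * h r‖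
      ≤ Fintype.card G * (τ * (√(∑ x, ‖F₁ x‖ ^ 2) * √(∑ x, ‖F₂ x‖ ^ 2))) := by
    calc (Fintype.card G : ℝ) * ‖∑ p, ∑ r, F₁ p * F₂ (2 • r - p) * h r‖
        = ‖(Fintype.card G : ℂ) * ∑ p, ∑ r, F₁ p * F₂ (2 • r - p) * h r‖ := by
          rw [norm_mul]; simp
      _ ≤ ∑ γ : AddChar G ℂ, ‖∑ x, F₁ x * γ x‖ * ‖∑ x, F₂ x * γ x‖ * τ := by
          rw [e]
          refine (norm_sum_le _ _).trans (Finset.sum_le_sum fun γ _ => ?_)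
          rw [norm_mul, norm_mul]
          exact mul_le_mul_of_nonneg_left (hτ _) (by positivity)
      _ ≤ (√(∑ γ : AddChar G ℂ, ‖∑ x, F₁ x * γ x‖ ^ 2) *
            √(∑ γ : AddChar G ℂ, ‖∑ x, F₂ x * γ x‖ ^ 2)) * τ := by
          rw [← Finset.sum_mul]
          exact mul_le_mul_of_nonneg_right (Real.sum_mul_le_sqrt_mul_sqrt _ _ _) h0
      _ = _ := by
          rw [roth_parseval, roth_parseval, Real.sqrt_mul hG.le, Real.sqrt_mul hG.le]
          have := Real.mul_self_sqrt hG.le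
          linear_combination (τ * (√(∑ x, ‖F₁ x‖ ^ 2) * √(∑ x, ‖F₂ x‖ ^ 2))) * this
  exact le_of_mul_le_mul_left hn hG

/-- Version of `roth_fourier` with `p` averaged over `B₁` and `r` over `B₂`: as `B₁` is almost
invariant under `2r`, the pairs for which `2r - p` falls outside `B₁` are negligible. -/
lemma roth_fourier_local {B₁ B₂ : Finset G} (hB₁ : B₁.Nonempty) (hB₂ : B₂.Nonempty)
    (hsym : ∀ x ∈ B₁, -x ∈ B₁) {η τ : ℝ} (hinv : ∀ r ∈ B₂, AlmostInv B₁ η (2 • r))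
    {F₁ F₂ h : G → ℝ} (hF₁ : ∀ x, |F₁ x| ≤ 1) (hF₂ : ∀ x, |F₂ x| ≤ 1) (hh : ∀ x, |h x| ≤ 1)
    (hτ : ∀ γ : AddChar G ℂ, ‖𝔼 r ∈ B₂, (h r : ℂ) * γ r‖ ≤ τ) :
    |𝔼 p ∈ B₁, 𝔼 r ∈ B₂, F₁ p * F₂ (2 • r - p) * h r| ≤ τ + η := by
  have c1 : (0 : ℝ) < #B₁ := by exact_mod_cast hB₁.card_pos
  have c2 : (0 : ℝ) < #B₂ := by exact_mod_cast hB₂.card_pos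
  have h0 : 0 ≤ τ := le_trans (norm_nonneg _) (hτ 0)
  have main : |∑ p ∈ B₁, ∑ r ∈ B₂, if 2 • r - p ∈ B₁ then F₁ p * F₂ (2 • r - p) * h r else 0|
      ≤ τ * #B₂ * #B₁ := by
    have k := roth_fourier (fun x => if x ∈ B₁ then (F₁ x : ℂ) else 0)
      (fun x => if x ∈ B₁ then (F₂ x : ℂ) else 0) (fun x => if x ∈ B₂ then (h x : ℂ) else 0)
      (τ := τ * #B₂) (by
        intro γ
        have := hτ γ
        rw [Finset.expect_eq_sum_div_card, norm_div, Complex.norm_natCast, div_le_iff₀ c2] at this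
        simpa [ite_mul, ← Finset.sum_filter] using this)
    have sq : ∀ F : G → ℝ, (∀ x, |F x| ≤ 1) →
        √(∑ x, ‖(if x ∈ B₁ then (F x : ℂ) else 0)‖ ^ 2) ≤ √(#B₁ : ℝ) := by
      intro F hF
      apply Real.sqrt_le_sqrt
      calc ∑ x, ‖(if x ∈ B₁ then (F x : ℂ) else 0)‖ ^ 2
          ≤ ∑ x, (if x ∈ B₁ then (1 : ℝ) else 0) := by
            refine Finset.sum_le_sum fun x _ => ?_
            split_ifs
            · rw [Complex.norm_real, Real.norm_eq_abs]
              exact pow_le_one₀ (abs_nonneg _) (hF x)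
            · simp
        _ = #B₁ := by simp
    have e : ((∑ p ∈ B₁, ∑ r ∈ B₂,
          if 2 • r - p ∈ B₁ then F₁ p * F₂ (2 • r - p) * h r else 0 : ℝ) : ℂ)
        = ∑ p, ∑ r, (if p ∈ B₁ then (F₁ p : ℂ) else 0) *
            (if 2 • r - p ∈ B₁ then (F₂ (2 • r - p) : ℂ) else 0) *
            (if r ∈ B₂ then (h r : ℂ) else 0) := by
      push_cast
      rw [← Finset.sum_subset (Finset.subset_univ B₁)]
      · refine Finset.sum_congr rfl fun p hp => ?_
        rw [← Finset.sum_subset (Finset.subset_univ B₂)]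
        · refine Finset.sum_congr rfl fun r hr => ?_
          simp only [hp, hr, if_true]
          split_ifs <;> simp
        · intro r _ hr
          simp [hr]
      · intro p _ hp
        simp [hp]
    rw [← e, Complex.norm_real, Real.norm_eq_abs] at k
    refine k.trans ?_
    have s1 := mul_le_mul (sq F₁ hF₁) (sq F₂ hF₂) (Real.sqrt_nonneg _) (Real.sqrt_nonneg _)
    rw [Real.mul_self_sqrt c1.le] at s1
    exact mul_le_mul_of_nonneg_left s1 (by positivity)
  have rest : |∑ p ∈ B₁, ∑ r ∈ B₂, if 2 • r - p ∈ B₁ then 0 else F₁ p * F₂ (2 • r - p) * h r|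
      ≤ η / 2 * #B₂ * #B₁ := by
    rw [Finset.sum_comm]
    calc |∑ r ∈ B₂, ∑ p ∈ B₁, if 2 • r - p ∈ B₁ then 0 else F₁ p * F₂ (2 • r - p) * h r|
        ≤ ∑ r ∈ B₂, ∑ p ∈ B₁, (if 2 • r - p ∈ B₁ then 0 else 1 : ℝ) := by
          refine (Finset.abs_sum_le_sum_abs _ _).trans (Finset.sum_le_sum fun r _ => ?_)
          refine (Finset.abs_sum_le_sum_abs _ _).trans (Finset.sum_le_sum fun p _ => ?_)
          split_ifs
          · simp
          · rw [abs_mul, abs_mul]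
            exact mul_le_one₀ (mul_le_one₀ (hF₁ _) (abs_nonneg _) (hF₂ _)) (abs_nonneg _) (hh _)
      _ ≤ ∑ r ∈ B₂, η / 2 * #B₁ := by
          refine Finset.sum_le_sum fun r hr => ?_
          refine le_trans (le_of_eq ?_) (hinv r hr)
          rw [Finset.card_filter]
          push_cast
          refine Finset.sum_nbij' (fun x => -x) (fun x => -x) hsym hsym (by simp) (by simp) ?_
          intro p _
          rw [show -p + 2 • r = 2 • r - p by abel]
          by_cases hq : 2 • r - p ∈ B₁ <;> simp [hq]
      _ = _ := by simp; ring
  have hη : 0 ≤ η := by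
    obtain ⟨r, hr⟩ := hB₂
    have := hinv r hr
    unfold AlmostInv at this
    by_contra hc
    push Not at hc
    have : η / 2 * #B₁ < 0 := mul_neg_of_neg_of_pos (by linarith) c1
    have h3 : (0 : ℝ) ≤ ((#{x ∈ B₁ | x + 2 • r ∉ B₁} : ℕ) : ℝ) := by positivity
    linarith
  have tot : ∑ p ∈ B₁, ∑ r ∈ B₂, F₁ p * F₂ (2 • r - p) * h r
      = (∑ p ∈ B₁, ∑ r ∈ B₂, if 2 • r - p ∈ B₁ then F₁ p * F₂ (2 • r - p) * h r else 0) +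
        ∑ p ∈ B₁, ∑ r ∈ B₂, if 2 • r - p ∈ B₁ then 0 else F₁ p * F₂ (2 • r - p) * h r := by
    simp_rw [← Finset.sum_add_distrib]
    refine Finset.sum_congr rfl fun p _ => Finset.sum_congr rfl fun r _ => ?_
    split_ifs <;> simp
  have e2 : (𝔼 p ∈ B₁, 𝔼 r ∈ B₂, F₁ p * F₂ (2 • r - p) * h r)
      = (∑ p ∈ B₁, ∑ r ∈ B₂, F₁ p * F₂ (2 • r - p) * h r) / (#B₂ * #B₁) := by
    simp_rw [Finset.expect_eq_sum_div_card]
    rw [← Finset.sum_div, div_div]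
  rw [e2, abs_div, abs_of_pos (by positivity : (0 : ℝ) < #B₂ * #B₁),
    div_le_iff₀ (by positivity), tot]
  refine (abs_add_le _ _).trans ?_
  have : 0 ≤ η / 2 * #B₂ * #B₁ := by positivity
  linarith
end

/-! ### Counting progressions locally, and the density increment -/

section
variable {G : Type} [AddCommGroup G]

/-- The main term: replacing the middle factor by a constant leaves an average that is at least about
`a²`. The translations `c ↦ c + p - q` (undone), `q ↦ q + r` and `c ↦ c + 2p` turn it into
`𝔼_c (𝔼_p f(c + 2p))²`, up to an error `η` each, and Cauchy–Schwarz applies to this square. Halving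
of elements of `G` is never needed. -/
lemma roth_main_term {B₀ B₁ B₂ : Finset G} (hB₀ : B₀.Nonempty) (hB₁ : B₁.Nonempty)
    (hB₂ : B₂.Nonempty) {η a : ℝ} {f : G → ℝ} (hf0 : ∀ x, 0 ≤ f x) (hf1 : ∀ x, f x ≤ 1)
    (h01 : ∀ p ∈ B₁, ∀ q ∈ B₁, AlmostInv B₀ η (p - q))
    (h01' : ∀ p ∈ B₁, AlmostInv B₀ η (2 • p))
    (h12 : ∀ r ∈ B₂, AlmostInv B₁ η r)
    (ha : (𝔼 x ∈ B₀, f x) = a) (hη : η ≤ a) (hη0 : 0 ≤ η) (ha1 : a ≤ 1) :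
    a ^ 2 - 5 * η ≤ 𝔼 c ∈ B₀, 𝔼 p ∈ B₁, 𝔼 q ∈ B₁, 𝔼 r ∈ B₂,
      f (c + (p - q)) * f (c + 2 • r - (p - q)) := by
  have hm0 : ∀ x y, 0 ≤ f x * f y := fun x y => mul_nonneg (hf0 x) (hf0 y)
  have hm1 : ∀ x y, f x * f y ≤ 1 := fun x y => mul_le_one₀ (hf1 x) (hf0 y) (hf1 y)
  -- translate `c` by `p - q`
  have s1 : (𝔼 p ∈ B₁, 𝔼 q ∈ B₁, 𝔼 r ∈ B₂, 𝔼 c ∈ B₀, f c * f (c + 2 • r - 2 • (p - q))) - η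
      ≤ 𝔼 c ∈ B₀, 𝔼 p ∈ B₁, 𝔼 q ∈ B₁, 𝔼 r ∈ B₂,
      f (c + (p - q)) * f (c + 2 • r - (p - q)) := by
    rw [Finset.expect_comm B₀ B₁]
    refine roth_sub_le_expect hB₁ fun p hp => ?_
    rw [Finset.expect_comm B₀ B₁]
    refine roth_sub_le_expect hB₁ fun q hq => ?_
    rw [Finset.expect_comm B₀ B₂]
    refine roth_sub_le_expect hB₂ fun r hr => ?_
    refine ((h01 p hp q hq).expect_ge hB₀ (fun c => f c * f (c + 2 • r - 2 • (p - q)))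
      (fun _ => hm0 _ _) (fun _ => hm1 _ _)).trans (le_of_eq ?_)
    refine Finset.expect_congr rfl fun c _ => ?_
    congr 2
    abel
  -- translate `q` by `r`
  have s2 : (𝔼 p ∈ B₁, 𝔼 q ∈ B₁, 𝔼 c ∈ B₀, f c * f (c - 2 • (p - q))) - η
      ≤ 𝔼 p ∈ B₁, 𝔼 q ∈ B₁, 𝔼 r ∈ B₂, 𝔼 c ∈ B₀, f c * f (c + 2 • r - 2 • (p - q)) := by
    refine roth_sub_le_expect hB₁ fun p hp => ?_
    rw [Finset.expect_comm B₁ B₂, Finset.expect_comm B₁ B₀,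
      ← Finset.expect_const hB₂ (𝔼 c ∈ B₀, 𝔼 q ∈ B₁, f c * f (c - 2 • (p - q)))]
    refine roth_sub_le_expect hB₂ fun r hr => ?_
    rw [Finset.expect_comm B₁ B₀]
    refine roth_sub_le_expect hB₀ fun c hc => ?_
    refine ((h12 r hr).expect_ge hB₁ (fun q => f c * f (c - 2 • (p - q)))
      (fun _ => hm0 _ _) (fun _ => hm1 _ _)).trans (le_of_eq ?_)
    refine Finset.expect_congr rfl fun q _ => ?_
    congr 2
    abel
  -- translate `c` by `2p`
  have s3 : (𝔼 p ∈ B₁, 𝔼 q ∈ B₁, 𝔼 c ∈ B₀, f (c + 2 • p) * f (c + 2 • q)) - η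
      ≤ 𝔼 p ∈ B₁, 𝔼 q ∈ B₁, 𝔼 c ∈ B₀, f c * f (c - 2 • (p - q)) := by
    refine roth_sub_le_expect hB₁ fun p hp => ?_
    refine roth_sub_le_expect hB₁ fun q hq => ?_
    have := (h01' p hp).norm_expect_sub_le hB₀ (fun c => f c * f (c - 2 • (p - q)))
      (fun x => by rw [Real.norm_eq_abs, abs_of_nonneg (hm0 _ _)]; exact hm1 _ _)
    rw [Real.norm_eq_abs, abs_le] at this
    have e : (𝔼 c ∈ B₀, f (c + 2 • p) * f (c + 2 • p - 2 • (p - q)))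
        = 𝔼 c ∈ B₀, f (c + 2 • p) * f (c + 2 • q) := by
      refine Finset.expect_congr rfl fun c _ => ?_
      congr 2
      abel
    have h2 := this.2
    simp only [e] at h2
    linarith
  have s4 : (𝔼 p ∈ B₁, 𝔼 q ∈ B₁, 𝔼 c ∈ B₀, f (c + 2 • p) * f (c + 2 • q))
      = 𝔼 c ∈ B₀, (𝔼 p ∈ B₁, f (c + 2 • p)) ^ 2 := by
    simp_rw [sq, Finset.expect_mul_expect]
    rw [Finset.expect_comm B₀ B₁]
    refine Finset.expect_congr rfl fun p _ => ?_
    rw [Finset.expect_comm]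
  have s5 : a - η ≤ 𝔼 c ∈ B₀, 𝔼 p ∈ B₁, f (c + 2 • p) := by
    rw [Finset.expect_comm B₀ B₁, ← ha, ← Finset.expect_const hB₁ (𝔼 x ∈ B₀, f x)]
    refine roth_sub_le_expect hB₁ fun p hp => ?_
    exact (h01' p hp).expect_ge hB₀ f hf0 hf1
  have s6 : (𝔼 c ∈ B₀, 𝔼 p ∈ B₁, f (c + 2 • p)) ^ 2
      ≤ 𝔼 c ∈ B₀, (𝔼 p ∈ B₁, f (c + 2 • p)) ^ 2 := by
    have c0 : (0 : ℝ) < #B₀ := by exact_mod_cast hB₀.card_pos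
    rw [Finset.expect_eq_sum_div_card, Finset.expect_eq_sum_div_card B₀, div_pow,
      div_le_div_iff₀ (by positivity) c0]
    have := sq_sum_le_card_mul_sum_sq (s := B₀) (f := fun c => 𝔼 p ∈ B₁, f (c + 2 • p))
    nlinarith
  have s7 : (a - η) ^ 2 ≤ (𝔼 c ∈ B₀, 𝔼 p ∈ B₁, f (c + 2 • p)) ^ 2 :=
    pow_le_pow_left₀ (by linarith) s5 2
  nlinarith

/-- The mean of `f` on the translate `c + B`. -/
noncomputable def localMean (B : Finset G) (f : G → ℝ) (c : G) : ℝ := 𝔼 r ∈ B, f (c + r)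

variable [Fintype G]

/-- Lower bound for the local count of progressions `c + (p - q), c + r, c + 2r - (p - q)` when the
mean of `f` on no translate of `B₂` exceeds `a + ε`, and the balanced function of `f` on each
translate `c + B₂` where `f` has mean at least `a - κ` has Fourier coefficients at most `τ`. Since
the mean on `c + B₂` is nearly `a` on average over `c`, the upper bound `a + ε` makes the centres
`c` with mean below `a - κ` rare. -/
lemma roth_count_lower {B₀ B₁ B₂ : Finset G} (hB₀ : B₀.Nonempty) (hB₁ : B₁.Nonempty)
    (hB₂ : B₂.Nonempty) (hsym : ∀ x ∈ B₁, -x ∈ B₁) {η a ε κ τ : ℝ} {f : G → ℝ}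
    (hf0 : ∀ x, 0 ≤ f x) (hf1 : ∀ x, f x ≤ 1)
    (h01 : ∀ p ∈ B₁, ∀ q ∈ B₁, AlmostInv B₀ η (p - q))
    (h01' : ∀ p ∈ B₁, AlmostInv B₀ η (2 • p))
    (h02 : ∀ r ∈ B₂, AlmostInv B₀ η r)
    (h12 : ∀ r ∈ B₂, AlmostInv B₁ η r)
    (h12' : ∀ r ∈ B₂, AlmostInv B₁ η (2 • r))
    (ha : (𝔼 x ∈ B₀, f x) = a) (hη : η ≤ a) (hη0 : 0 ≤ η) (ha1 : a ≤ 1)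
    (hκ : 0 < κ) (hκa : κ ≤ a) (hτ0 : 0 ≤ τ) (hε : 0 ≤ ε)
    (hub : ∀ c, localMean B₂ f c ≤ a + ε)
    (hfour : ∀ c, a - κ ≤ localMean B₂ f c → ∀ γ : AddChar G ℂ,
      ‖𝔼 r ∈ B₂, ((f (c + r) - localMean B₂ f c : ℝ) : ℂ) * γ r‖ ≤ τ) :
    (a - κ) * (a ^ 2 - 5 * η - (ε + η) / κ) - τ - η ≤
      𝔼 c ∈ B₀, 𝔼 p ∈ B₁, 𝔼 q ∈ B₁, 𝔼 r ∈ B₂,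
        f (c + (p - q)) * f (c + r) * f (c + 2 • r - (p - q)) := by
  set b := localMean B₂ f with hb
  have hb0 : ∀ c, 0 ≤ b c := fun c => Finset.expect_nonneg fun r _ => hf0 _
  have hb1 : ∀ c, b c ≤ 1 := fun c => roth_expect_le_const hB₂ fun r _ => hf1 _
  set M : G → ℝ := fun c => 𝔼 p ∈ B₁, 𝔼 q ∈ B₁, 𝔼 r ∈ B₂,
    f (c + (p - q)) * f (c + 2 • r - (p - q)) with hM
  have hm0 : ∀ x y, 0 ≤ f x * f y := fun x y => mul_nonneg (hf0 x) (hf0 y)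
  have hm1 : ∀ x y, f x * f y ≤ 1 := fun x y => mul_le_one₀ (hf1 x) (hf0 y) (hf1 y)
  have hM0 : ∀ c, 0 ≤ M c := fun c => Finset.expect_nonneg fun p _ =>
    Finset.expect_nonneg fun q _ => Finset.expect_nonneg fun r _ => hm0 _ _
  have hM1 : ∀ c, M c ≤ 1 := fun c => roth_expect_le_const hB₁ fun p _ =>
    roth_expect_le_const hB₁ fun q _ => roth_expect_le_const hB₂ fun r _ => hm1 _ _
  have hmain : a ^ 2 - 5 * η ≤ 𝔼 c ∈ B₀, M c :=
    roth_main_term hB₀ hB₁ hB₂ hf0 hf1 h01 h01' h12 ha hη hη0 ha1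
  have hbmean : a - η ≤ 𝔼 c ∈ B₀, b c := by
    rw [hb]
    unfold localMean
    rw [Finset.expect_comm B₀ B₂, ← ha, ← Finset.expect_const hB₂ (𝔼 x ∈ B₀, f x)]
    refine roth_sub_le_expect hB₂ fun r hr => ?_
    exact (h02 r hr).expect_ge hB₀ f hf0 hf1
  -- Markov's inequality in pointwise form: `(a + ε - b c) / κ` dominates the indicator of the
  -- centres with `b c < a - κ`.
  have hpt : ∀ c, (a - κ) * (M c - (a + ε - b c) / κ) - (τ + η) ≤
      𝔼 p ∈ B₁, 𝔼 q ∈ B₁, 𝔼 r ∈ B₂,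
        f (c + (p - q)) * f (c + r) * f (c + 2 • r - (p - q)) := by
    intro c
    have hT0 : 0 ≤ 𝔼 p ∈ B₁, 𝔼 q ∈ B₁, 𝔼 r ∈ B₂,
        f (c + (p - q)) * f (c + r) * f (c + 2 • r - (p - q)) :=
      Finset.expect_nonneg fun p _ => Finset.expect_nonneg fun q _ =>
        Finset.expect_nonneg fun r _ => mul_nonneg (hm0 _ _) (hf0 _)
    have hub' := hub c
    by_cases hc : a - κ ≤ b c
    · have herr : ∀ q ∈ B₁, |𝔼 p ∈ B₁, 𝔼 r ∈ B₂, f (c + (p - q)) *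
          f (c + 2 • r - (p - q)) * (f (c + r) - b c)| ≤ τ + η := by
        intro q hq
        have := roth_fourier_local hB₁ hB₂ hsym (η := η) (τ := τ) h12'
          (F₁ := fun x => f (c + (x - q))) (F₂ := fun x => f (c + x + q))
          (h := fun r => f (c + r) - b c)
          (fun x => by rw [abs_of_nonneg (hf0 _)]; exact hf1 _)
          (fun x => by rw [abs_of_nonneg (hf0 _)]; exact hf1 _)
          (fun x => by
            rw [abs_le]
            constructor <;> linarith [hf0 (c + x), hf1 (c + x), hb0 c, hb1 c])
          (hfour c hc)
        have e : ∀ r p, c + (2 • r - p) + q = c + 2 • r - (p - q) := fun r p => by abel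
        simpa only [e] using this
      have hsplit : (𝔼 p ∈ B₁, 𝔼 q ∈ B₁, 𝔼 r ∈ B₂,
          f (c + (p - q)) * f (c + r) * f (c + 2 • r - (p - q)))
          = b c * M c + 𝔼 q ∈ B₁, 𝔼 p ∈ B₁, 𝔼 r ∈ B₂, f (c + (p - q)) *
          f (c + 2 • r - (p - q)) * (f (c + r) - b c) := by
        rw [Finset.expect_comm B₁ B₁ (f := fun q p => 𝔼 r ∈ B₂, f (c + (p - q)) *
          f (c + 2 • r - (p - q)) * (f (c + r) - b c)), hM]
        simp only [Finset.mul_expect, ← Finset.expect_add_distrib]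
        refine Finset.expect_congr rfl fun p _ => Finset.expect_congr rfl fun q _ =>
          Finset.expect_congr rfl fun r _ => ?_
        ring
      have hE : -(τ + η) ≤ 𝔼 q ∈ B₁, 𝔼 p ∈ B₁, 𝔼 r ∈ B₂, f (c + (p - q)) *
          f (c + 2 • r - (p - q)) * (f (c + r) - b c) :=
        Finset.le_expect hB₁ fun q hq => (abs_le.1 (herr q hq)).1
      have h1 : (a - κ) * M c ≤ b c * M c := mul_le_mul_of_nonneg_right hc (hM0 c)
      have h2 : 0 ≤ (a - κ) * ((a + ε - b c) / κ) :=
        mul_nonneg (by linarith) (div_nonneg (by linarith) hκ.le)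
      rw [hsplit, mul_sub]
      linarith
    · push Not at hc
      have h1 : 1 ≤ (a + ε - b c) / κ := by
        rw [le_div_iff₀ hκ]
        linarith
      have h2 : (a - κ) * (M c - (a + ε - b c) / κ) ≤ 0 :=
        mul_nonpos_of_nonneg_of_nonpos (by linarith) (by linarith [hM1 c])
      linarith
  have hfin := Finset.expect_le_expect (s := B₀) fun c _ => hpt c
  refine le_trans ?_ hfin
  have e : (𝔼 c ∈ B₀, ((a - κ) * (M c - (a + ε - b c) / κ) - (τ + η)))
      = (a - κ) * ((𝔼 c ∈ B₀, M c) - (a + ε - 𝔼 c ∈ B₀, b c) / κ) - (τ + η) := by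
    rw [Finset.expect_sub_distrib, Finset.expect_const hB₀, ← Finset.mul_expect,
      Finset.expect_sub_distrib, ← Finset.expect_div, Finset.expect_sub_distrib,
      Finset.expect_const hB₀]
  rw [e]
  have h3 : (a + ε - 𝔼 c ∈ B₀, b c) / κ ≤ (ε + η) / κ := by gcongr; linarith
  have h4 : (a - κ) * (a ^ 2 - 5 * η - (ε + η) / κ) ≤
      (a - κ) * ((𝔼 c ∈ B₀, M c) - (a + ε - 𝔼 c ∈ B₀, b c) / κ) :=
    mul_le_mul_of_nonneg_left (by linarith) (by linarith)
  linarith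

/-- The local count is dominated by the global one: for fixed `p, q`, the progression is determined by
its first term and difference `(c + (p - q), r - (p - q))`, an injective function of `(c, r)`. -/
lemma roth_count_upper {B₀ B₁ B₂ : Finset G} (hB₀ : B₀.Nonempty) (hB₁ : B₁.Nonempty)
    (hB₂ : B₂.Nonempty) {f : G → ℝ} (hf0 : ∀ x, 0 ≤ f x) :
    (𝔼 c ∈ B₀, 𝔼 p ∈ B₁, 𝔼 q ∈ B₁, 𝔼 r ∈ B₂,
        f (c + (p - q)) * f (c + r) * f (c + 2 • r - (p - q))) * (#B₀ * #B₂)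
      ≤ ∑ z : G × G, f z.1 * f (z.1 + z.2) * f (z.1 + 2 • z.2) := by
  have c0 : (0 : ℝ) < #B₀ := by exact_mod_cast hB₀.card_pos
  have c2 : (0 : ℝ) < #B₂ := by exact_mod_cast hB₂.card_pos
  rw [← le_div_iff₀ (by positivity)]
  rw [Finset.expect_comm B₀ B₁]
  refine roth_expect_le_const hB₁ fun p _ => ?_
  rw [Finset.expect_comm B₀ B₁]
  refine roth_expect_le_const hB₁ fun q _ => ?_
  simp_rw [Finset.expect_eq_sum_div_card]
  rw [← Finset.sum_div, div_div, mul_comm (#B₂ : ℝ)]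
  refine div_le_div_of_nonneg_right ?_ (by positivity)
  rw [← Finset.sum_product']
  let e : G × G ↪ G × G := ⟨fun z => (z.1 + (p - q), z.2 - (p - q)), fun z w h => by
    simp only [Prod.mk.injEq, add_left_inj, sub_left_inj] at h
    exact Prod.ext h.1 h.2⟩
  calc ∑ z ∈ B₀ ×ˢ B₂, f (z.1 + (p - q)) * f (z.1 + z.2) * f (z.1 + 2 • z.2 - (p - q))
      = ∑ z ∈ (B₀ ×ˢ B₂).map e, f z.1 * f (z.1 + z.2) * f (z.1 + 2 • z.2) := by
        rw [Finset.sum_map]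
        refine Finset.sum_congr rfl fun z _ => ?_
        change _ = f (z.1 + (p - q)) * f (z.1 + (p - q) + (z.2 - (p - q))) *
          f (z.1 + (p - q) + 2 • (z.2 - (p - q)))
        congr 2
        · congr 1; abel
        · abel
    _ ≤ _ := Finset.sum_le_sum_of_subset_of_nonneg (Finset.subset_univ _)
        fun z _ _ => mul_nonneg (mul_nonneg (hf0 _) (hf0 _)) (hf0 _)

/-- Fourier coefficients are small in the absence of a density increment: if `γ` is nearly `1` on
`B₃` and the mean of `f` on no translate of `B₃` exceeds `a + ε`, while its mean on `c + B₂` is at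
least `a - κ`, then the coefficient at `γ` of the balanced function on `c + B₂` is small. It is
bounded by the mean of `|localMean B₃ f (c + r) - b|`, whose integrand is bounded above and has mean
close to zero before taking absolute values. -/
lemma roth_increment {B₂ B₃ : Finset G} (hB₂ : B₂.Nonempty) (hB₃ : B₃.Nonempty)
    {η a ε κ : ℝ} {f : G → ℝ} (hf0 : ∀ x, 0 ≤ f x) (hf1 : ∀ x, f x ≤ 1)
    (h23 : ∀ u ∈ B₃, AlmostInv B₂ η u) (γ : AddChar G ℂ)
    (hγ : ∀ u ∈ B₃, ‖γ u - 1‖ ≤ η) (c : G)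
    (hκε : 0 ≤ κ + ε)
    (hc : a - κ ≤ localMean B₂ f c)
    (hub : ∀ c, localMean B₃ f c ≤ a + ε) :
    ‖𝔼 r ∈ B₂, ((f (c + r) - localMean B₂ f c : ℝ) : ℂ) * γ r‖ ≤ 2 * (κ + ε) + 3 * η := by
  set b := localMean B₂ f c with hb
  have hb0 : 0 ≤ b := Finset.expect_nonneg fun r _ => hf0 _
  have hb1 : b ≤ 1 := roth_expect_le_const hB₂ fun r _ => hf1 _
  have hg : ∀ r, |f (c + r) - b| ≤ 1 := fun r => by
    rw [abs_le]; constructor <;> linarith [hf0 (c + r), hf1 (c + r)]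
  have hγ1 : ∀ x, ‖γ x‖ = 1 := fun x => AddChar.norm_apply γ x
  -- Shifting the argument of `f` alone by `u` costs `η` for translating `r` and `η` for `γ u ≠ 1`.
  have h1 : ∀ u ∈ B₃, ‖(𝔼 r ∈ B₂, ((f (c + r + u) - b : ℝ) : ℂ) * γ r) -
      𝔼 r ∈ B₂, ((f (c + r) - b : ℝ) : ℂ) * γ r‖ ≤ 2 * η := by
    intro u hu
    have k1 := (h23 u hu).norm_expect_sub_le hB₂ (fun r => ((f (c + r) - b : ℝ) : ℂ) * γ r)
      (fun x => by
        rw [norm_mul, hγ1, mul_one, Complex.norm_real]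
        exact hg x)
    have k2 : ‖(𝔼 r ∈ B₂, ((f (c + r + u) - b : ℝ) : ℂ) * γ r) -
        𝔼 r ∈ B₂, ((f (c + (r + u)) - b : ℝ) : ℂ) * γ (r + u)‖ ≤ η := by
      rw [← Finset.expect_sub_distrib]
      refine (roth_norm_expect_le _ _).trans ?_
      refine roth_expect_le_const hB₂ fun r _ => ?_
      rw [AddChar.map_add_eq_mul, ← add_assoc,
        show ((f (c + r + u) - b : ℝ) : ℂ) * γ r - ((f (c + r + u) - b : ℝ) : ℂ) * (γ r * γ u)
          = -(((f (c + r + u) - b : ℝ) : ℂ) * γ r * (γ u - 1)) by ring]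
      rw [norm_neg, norm_mul, norm_mul, hγ1, mul_one, Complex.norm_real, Real.norm_eq_abs]
      have := hg (r + u)
      rw [← add_assoc] at this
      calc _ ≤ 1 * η := mul_le_mul this (hγ u hu) (norm_nonneg _) zero_le_one
        _ = η := one_mul _
    have := norm_add_le ((𝔼 r ∈ B₂, ((f (c + r + u) - b : ℝ) : ℂ) * γ r) -
        𝔼 r ∈ B₂, ((f (c + (r + u)) - b : ℝ) : ℂ) * γ (r + u))
      ((𝔼 r ∈ B₂, ((f (c + (r + u)) - b : ℝ) : ℂ) * γ (r + u)) -
        𝔼 r ∈ B₂, ((f (c + r) - b : ℝ) : ℂ) * γ r)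
    rw [sub_add_sub_cancel] at this
    linarith
  have h2 : ‖(𝔼 u ∈ B₃, 𝔼 r ∈ B₂, ((f (c + r + u) - b : ℝ) : ℂ) * γ r) -
      𝔼 r ∈ B₂, ((f (c + r) - b : ℝ) : ℂ) * γ r‖ ≤ 2 * η := by
    rw [← Finset.expect_const hB₃ (𝔼 r ∈ B₂, ((f (c + r) - b : ℝ) : ℂ) * γ r),
      ← Finset.expect_sub_distrib]
    exact (roth_norm_expect_le _ _).trans (roth_expect_le_const hB₃ h1)
  have h3 : ‖𝔼 u ∈ B₃, 𝔼 r ∈ B₂, ((f (c + r + u) - b : ℝ) : ℂ) * γ r‖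
      ≤ 𝔼 r ∈ B₂, |localMean B₃ f (c + r) - b| := by
    rw [Finset.expect_comm]
    refine (roth_norm_expect_le _ _).trans (le_of_eq ?_)
    refine Finset.expect_congr rfl fun r _ => ?_
    rw [← Finset.expect_mul, norm_mul, hγ1, mul_one]
    have : (𝔼 u ∈ B₃, ((f (c + r + u) - b : ℝ) : ℂ))
        = ((localMean B₃ f (c + r) - b : ℝ) : ℂ) := by
      unfold localMean
      rw [← Finset.expect_const hB₃ b, ← Finset.expect_sub_distrib, Complex.ofReal_expect]
      simp [Finset.expect_const hB₃]
    rw [this, Complex.norm_real, Real.norm_eq_abs]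
  have h4 : b - η ≤ 𝔼 r ∈ B₂, localMean B₃ f (c + r) := by
    unfold localMean
    rw [Finset.expect_comm, ← Finset.expect_const hB₃ b]
    refine roth_sub_le_expect hB₃ fun u hu => ?_
    have := (h23 u hu).expect_ge hB₂ (fun r => f (c + r)) (fun _ => hf0 _) (fun _ => hf1 _)
    simpa only [add_assoc, hb, localMean] using this
  have h5 : (𝔼 r ∈ B₂, |localMean B₃ f (c + r) - b|) ≤
      𝔼 r ∈ B₂, (2 * (κ + ε) - (localMean B₃ f (c + r) - b)) := by
    refine Finset.expect_le_expect fun r _ => ?_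
    have := hub (c + r)
    rw [abs_le]
    constructor <;> linarith
  rw [Finset.expect_sub_distrib, Finset.expect_sub_distrib, Finset.expect_const hB₂,
    Finset.expect_const hB₂] at h5
  have h6 := norm_sub_norm_le (𝔼 r ∈ B₂, ((f (c + r) - b : ℝ) : ℂ) * γ r)
    (𝔼 u ∈ B₃, 𝔼 r ∈ B₂, ((f (c + r + u) - b : ℝ) : ℂ) * γ r)
  rw [norm_sub_rev] at h6
  linarith
end

/-! ### Bohr sets -/

section
variable {G : Type} [AddCommGroup G] [Fintype G]

/-- The Bohr set with frequency set `Γ` and radius `ρ`, measured by the distance `‖γ x - 1‖` in `ℂ`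
instead of the argument of `γ x`; radius `2` thus gives all of `G`. -/
noncomputable def bohrSet (Γ : Finset (AddChar G ℂ)) (ρ : ℝ) : Finset G :=
  {x | ∀ γ ∈ Γ, ‖γ x - 1‖ ≤ ρ}

lemma mem_bohrSet {Γ : Finset (AddChar G ℂ)} {ρ : ℝ} {x : G} :
    x ∈ bohrSet Γ ρ ↔ ∀ γ ∈ Γ, ‖γ x - 1‖ ≤ ρ := by simp [bohrSet]

lemma bohrSet_nonempty (Γ : Finset (AddChar G ℂ)) {ρ : ℝ} (hρ : 0 ≤ ρ) :
    (bohrSet Γ ρ).Nonempty := ⟨0, mem_bohrSet.2 fun γ _ => by simpa using hρ⟩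

lemma bohrSet_mono {Γ Γ' : Finset (AddChar G ℂ)} (h : Γ ⊆ Γ') {ρ ρ' : ℝ} (hρ : ρ' ≤ ρ) :
    bohrSet Γ' ρ' ⊆ bohrSet Γ ρ := fun _ hx =>
  mem_bohrSet.2 fun γ hγ => (mem_bohrSet.1 hx γ (h hγ)).trans hρ

lemma norm_addChar_sub (γ : AddChar G ℂ) (x y : G) : ‖γ (x - y) - 1‖ = ‖γ x - γ y‖ := by
  have h : γ x - γ y = γ y * (γ (x - y) - 1) := by
    rw [mul_sub, ← AddChar.map_add_eq_mul]; simp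
  rw [h, norm_mul, AddChar.norm_apply, one_mul]

lemma neg_mem_bohrSet {Γ : Finset (AddChar G ℂ)} {ρ : ℝ} {x : G} (hx : x ∈ bohrSet Γ ρ) :
    -x ∈ bohrSet Γ ρ := mem_bohrSet.2 fun γ hγ => by
  have := norm_addChar_sub γ 0 x
  rw [zero_sub, AddChar.map_zero_eq_one, norm_sub_rev 1] at this
  rw [this]
  exact mem_bohrSet.1 hx γ hγ

lemma add_mem_bohrSet {Γ : Finset (AddChar G ℂ)} {ρ σ : ℝ} {x y : G} (hx : x ∈ bohrSet Γ ρ)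
    (hy : y ∈ bohrSet Γ σ) : x + y ∈ bohrSet Γ (ρ + σ) := mem_bohrSet.2 fun γ hγ => by
  have e : γ (x + y) - 1 = (γ x - 1) + γ x * (γ y - 1) := by
    rw [AddChar.map_add_eq_mul]; ring
  rw [e]
  refine (norm_add_le _ _).trans ?_
  rw [norm_mul, AddChar.norm_apply, one_mul]
  exact add_le_add (mem_bohrSet.1 hx γ hγ) (mem_bohrSet.1 hy γ hγ)

lemma bohrSet_two (Γ : Finset (AddChar G ℂ)) : bohrSet Γ 2 = univ := by
  ext x
  simp only [mem_bohrSet, mem_univ, iff_true]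
  intro γ _
  refine (norm_sub_le _ _).trans ?_
  rw [AddChar.norm_apply, norm_one]
  norm_num

/-- Doubling of Bohr sets. For `x` in the set of radius `2ρ`, each `γ x - 1` lies in one of `9 · 9`
squares of side `ρ / 2`; two points with the same squares differ by an element of the Bohr set of
radius `ρ`. -/
lemma card_bohrSet_two_mul (Γ : Finset (AddChar G ℂ)) {ρ : ℝ} (hρ : 0 < ρ) :
    #(bohrSet Γ (2 * ρ)) ≤ 81 ^ #Γ * #(bohrSet Γ ρ) := by
  let φ : G → (Γ → ℤ × ℤ) := fun x γ =>
    (⌊2 * (γ.1 x - 1).re / ρ⌋, ⌊2 * (γ.1 x - 1).im / ρ⌋)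
  let t : Finset (Γ → ℤ × ℤ) :=
    Fintype.piFinset fun _ => Finset.Icc (-4 : ℤ) 4 ×ˢ Finset.Icc (-4 : ℤ) 4
  have hfl : ∀ s : ℝ, |s| ≤ 2 * ρ → ⌊2 * s / ρ⌋ ∈ Finset.Icc (-4 : ℤ) 4 := by
    intro s hs
    rw [abs_le] at hs
    rw [Finset.mem_Icc]
    constructor
    · rw [Int.le_floor, le_div_iff₀ hρ]
      push_cast
      linarith
    · rw [← Int.lt_add_one_iff, Int.floor_lt, div_lt_iff₀ hρ]
      push_cast
      linarith
  have hmaps : ∀ x ∈ bohrSet Γ (2 * ρ), φ x ∈ t := by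
    intro x hx
    rw [Fintype.mem_piFinset]
    intro γ
    have := mem_bohrSet.1 hx γ.1 γ.2
    exact Finset.mem_product.2 ⟨hfl _ ((Complex.abs_re_le_norm _).trans this),
      hfl _ ((Complex.abs_im_le_norm _).trans this)⟩
  have hdiff : ∀ s s' : ℝ, ⌊2 * s / ρ⌋ = ⌊2 * s' / ρ⌋ → |s - s'| ≤ ρ / 2 := by
    intro s s' h
    have := (Int.abs_sub_lt_one_of_floor_eq_floor h).le
    rw [← sub_div, ← mul_sub, abs_div, abs_of_pos hρ, div_le_one hρ, abs_mul,
      abs_of_pos (two_pos : (0 : ℝ) < 2)] at this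
    linarith
  have hfib : ∀ b ∈ t, #{x ∈ bohrSet Γ (2 * ρ) | φ x = b} ≤ #(bohrSet Γ ρ) := by
    intro b _
    rcases Finset.eq_empty_or_nonempty {x ∈ bohrSet Γ (2 * ρ) | φ x = b} with h | ⟨y, hy⟩
    · rw [h]; simp
    · refine Finset.card_le_card_of_injOn (fun x => x - y) ?_ (fun x _ z _ h => by simpa using h)
      intro x hx
      have hx' := (Finset.mem_filter.1 (Finset.mem_coe.1 hx)).2
      have hy' := (Finset.mem_filter.1 hy).2
      refine Finset.mem_coe.2 (mem_bohrSet.2 fun γ hγ => ?_)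
      have hxy := congrFun (hx'.trans hy'.symm) ⟨γ, hγ⟩
      have h1 := hdiff _ _ (congrArg Prod.fst hxy)
      have h2 := hdiff _ _ (congrArg Prod.snd hxy)
      rw [norm_addChar_sub]
      have := Complex.norm_le_abs_re_add_abs_im (γ x - γ y)
      simp only [Complex.sub_re, Complex.sub_im, sub_sub_sub_cancel_right] at h1 h2 this
      linarith
  have := Finset.card_le_mul_card_image_of_maps_to hmaps _ hfib
  have ht : #t = 81 ^ #Γ := by
    simp [t, Fintype.card_piFinset]
  rw [ht] at this
  exact this.trans (le_of_eq (mul_comm _ _))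

lemma card_le_card_bohrSet (Γ : Finset (AddChar G ℂ)) (j : ℕ) :
    Fintype.card G ≤ 81 ^ (#Γ * j) * #(bohrSet Γ (2 * (1 / 2) ^ j)) := by
  induction j with
  | zero => simp [bohrSet_two]
  | succ j ih =>
    have h := card_bohrSet_two_mul Γ (ρ := 2 * (1 / 2) ^ (j + 1)) (by positivity)
    rw [show 2 * (2 * (1 / 2 : ℝ) ^ (j + 1)) = 2 * (1 / 2) ^ j by rw [pow_succ]; ring] at h
    calc Fintype.card G ≤ 81 ^ (#Γ * j) * #(bohrSet Γ (2 * (1 / 2) ^ j)) := ih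
      _ ≤ 81 ^ (#Γ * j) * (81 ^ #Γ * #(bohrSet Γ (2 * (1 / 2) ^ (j + 1)))) :=
          Nat.mul_le_mul_left _ h
      _ = _ := by rw [← mul_assoc, ← pow_add, Nat.mul_succ]

/-- Between `ρ / 2` and `ρ` there is a radius at which the Bohr set is almost invariant under a small
dilate of itself. Otherwise the size would grow by a factor `1 + 1 / h` at each of `81 h N` equal
steps from `ρ / 2` to `ρ`, and so by `82 ^ N` in total, contradicting the doubling bound. -/
lemma exists_regular (Γ : Finset (AddChar G ℂ)) {N h : ℕ} (hN : 0 < N) (hh : 0 < h)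
    (hΓ : #Γ ≤ N) {ρ : ℝ} (hρ : 0 < ρ) :
    ∃ ρ', ρ / 2 ≤ ρ' ∧ ρ' ≤ ρ ∧
      ∀ u ∈ bohrSet Γ (ρ' / (2 * (81 * h * N : ℕ))), AlmostInv (bohrSet Γ ρ') (2 / h) u := by
  by_contra hcon
  push Not at hcon
  set M : ℕ := 81 * h * N with hM
  have hMpos : (0 : ℝ) < M := by rw [hM]; positivity
  have hh' : (0 : ℝ) < h := by exact_mod_cast hh
  let r : ℕ → ℝ := fun k => ρ / 2 * (1 + k / M)
  have step : ∀ k ≤ M, (1 + 1 / h : ℝ) ^ k * #(bohrSet Γ (ρ / 2)) ≤ #(bohrSet Γ (r k)) := by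
    intro k
    induction k with
    | zero => intro _; simp [r]
    | succ k ih =>
      intro hk
      have ih' := ih (by omega)
      have hkM : (k : ℝ) / M ≤ 1 := by
        rw [div_le_one hMpos]; exact_mod_cast (by omega : k ≤ M)
      have hk0 : (0 : ℝ) ≤ k / M := by positivity
      have r1 : ρ / 2 ≤ r k := by simp only [r]; nlinarith
      have r2 : r k ≤ ρ := by simp only [r]; nlinarith
      obtain ⟨u, hu, hbad⟩ := hcon (r k) r1 r2
      unfold AlmostInv at hbad
      push Not at hbad
      have r3 : r k + r k / (2 * M) ≤ r (k + 1) := by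
        have : r (k + 1) = r k + ρ / (2 * M) := by simp only [r]; push_cast; field_simp; ring
        rw [this]
        gcongr
      have hdisj : Disjoint (bohrSet Γ (r k))
          ({x ∈ bohrSet Γ (r k) | x + u ∉ bohrSet Γ (r k)}.map (addRightEmbedding u)) := by
        rw [Finset.disjoint_right]
        intro y hy
        obtain ⟨x, hx, rfl⟩ := Finset.mem_map.1 hy
        exact (Finset.mem_filter.1 hx).2
      have hsub : (bohrSet Γ (r k)).disjUnion
          ({x ∈ bohrSet Γ (r k) | x + u ∉ bohrSet Γ (r k)}.map (addRightEmbedding u)) hdisj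
          ⊆ bohrSet Γ (r (k + 1)) := by
        intro y hy
        have hpos : 0 ≤ r k / (2 * M) := div_nonneg (by linarith) (by positivity)
        rcases Finset.mem_disjUnion.1 hy with hy | hy
        · exact bohrSet_mono subset_rfl (by linarith) hy
        · obtain ⟨x, hx, rfl⟩ := Finset.mem_map.1 hy
          exact bohrSet_mono subset_rfl r3 (add_mem_bohrSet (Finset.mem_filter.1 hx).1 hu)
      have hcard := Finset.card_le_card hsub
      rw [Finset.card_disjUnion, Finset.card_map] at hcard
      have hcard' : (#(bohrSet Γ (r k)) : ℝ) +
          (#{x ∈ bohrSet Γ (r k) | x + u ∉ bohrSet Γ (r k)} : ℕ) ≤ #(bohrSet Γ (r (k + 1))) := by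
        exact_mod_cast hcard
      have e : (2 / h / 2 : ℝ) = 1 / h := by ring
      rw [e] at hbad
      have h1 : (1 + 1 / h : ℝ) * ((1 + 1 / h : ℝ) ^ k * #(bohrSet Γ (ρ / 2)))
          ≤ (1 + 1 / h : ℝ) * #(bohrSet Γ (r k)) :=
        mul_le_mul_of_nonneg_left ih' (by positivity)
      rw [pow_succ]
      linarith
  have hlast := step M le_rfl
  have rM : r M = 2 * (ρ / 2) := by simp only [r]; rw [div_self hMpos.ne']; ring
  rw [rM] at hlast
  have hd : (#(bohrSet Γ (2 * (ρ / 2))) : ℝ) ≤ 81 ^ #Γ * #(bohrSet Γ (ρ / 2)) := by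
    exact_mod_cast card_bohrSet_two_mul Γ (ρ := ρ / 2) (by positivity)
  have hpos : (0 : ℝ) < #(bohrSet Γ (ρ / 2)) := by
    exact_mod_cast (bohrSet_nonempty Γ (by positivity : 0 ≤ ρ / 2)).card_pos
  have h1 : (1 + 1 / h : ℝ) ^ M ≤ 81 ^ #Γ := le_of_mul_le_mul_right (hlast.trans hd) hpos
  have h2 : (81 : ℝ) ^ #Γ ≤ 81 ^ N := pow_le_pow_right₀ (by norm_num) hΓ
  have h3 : (82 : ℝ) ≤ (1 + 1 / h) ^ (81 * h) := by
    have := one_add_mul_le_pow (a := (1 / h : ℝ)) (by have : (0 : ℝ) ≤ 1 / h := by positivity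
                                                      linarith) (81 * h)
    refine le_trans (le_of_eq ?_) this
    push_cast
    field_simp
    norm_num
  have h4 : (82 : ℝ) ^ N ≤ (1 + 1 / h) ^ M := by
    rw [hM, pow_mul]
    exact pow_le_pow_left₀ (by norm_num) h3 N
  have h5 : (81 : ℝ) ^ N < 82 ^ N := pow_lt_pow_left₀ (by norm_num) (by norm_num) hN.ne'
  linarith
end

/-! ### The iteration -/

section
variable {G : Type} [AddCommGroup G] [Fintype G]

/-- The situation after `n` density increments of size `1 / N`: on a translate of a Bohr set with at
most `n` frequencies, the mean of `f` is at least `α + n / N`. The radius is at least `Q ^ (-n)`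
with `Q = (2592 N²)³ = (16 · 162 N²)³`, as each increment shrinks it by three factors of at most
`16 · 162 N²`, and it is regular: the set is `1 / N`-almost invariant under the Bohr set of radius
`ρ / (2 · 162 N²)`. -/
def RothState (f : G → ℝ) (α : ℝ) (N n : ℕ) : Prop :=
  ∃ (Γ : Finset (AddChar G ℂ)) (ρ : ℝ) (c : G), #Γ ≤ n ∧
    (1 / ((2592 * N ^ 2) ^ 3 : ℕ) : ℝ) ^ n ≤ ρ ∧ ρ ≤ 1 ∧
    (∀ u ∈ bohrSet Γ (ρ / (2 * (162 * N ^ 2 : ℕ))), AlmostInv (bohrSet Γ ρ) (1 / N) u) ∧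
    α + n / N ≤ localMean (bohrSet Γ ρ) f c

/-- `exists_regular` for almost invariance with parameter `1 / N`. -/
lemma exists_regular' (Γ : Finset (AddChar G ℂ)) {N : ℕ} (hN : 0 < N)
    (hΓ : #Γ ≤ N) {ρ : ℝ} (hρ : 0 < ρ) :
    ∃ ρ', ρ / 2 ≤ ρ' ∧ ρ' ≤ ρ ∧
      ∀ u ∈ bohrSet Γ (ρ' / (2 * (162 * N ^ 2 : ℕ))), AlmostInv (bohrSet Γ ρ') (1 / N) u := by
  have := exists_regular Γ (h := 2 * N) hN (by omega) hΓ hρ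
  rw [show 81 * (2 * N) * N = 162 * N ^ 2 by ring] at this
  have e : (2 / ((2 * N : ℕ) : ℝ)) = 1 / N := by
    push_cast
    rw [← div_div]; norm_num
  rwa [e] at this

/-- A Bohr set with at most `N` frequencies and radius at least `Q ^ (-N)` has density at least
`81 ^ (-N (QN + 1))`, by iterating the doubling bound. -/
lemma card_le_of_radius {Γ : Finset (AddChar G ℂ)} {N Q : ℕ} (hQ : 0 < Q) (hΓ : #Γ ≤ N) {ρ : ℝ}
    (hρ : (1 / Q : ℝ) ^ N ≤ ρ) :
    (Fintype.card G : ℝ) ≤ 81 ^ (N * (Q * N + 1)) * #(bohrSet Γ ρ) := by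
  have h1 := card_le_card_bohrSet Γ (Q * N + 1)
  have hQ' : (0 : ℝ) < Q := by exact_mod_cast hQ
  have h2 : (2 * (1 / 2) ^ (Q * N + 1) : ℝ) ≤ ρ := by
    refine le_trans ?_ hρ
    have : (2 * (1 / 2) ^ (Q * N + 1) : ℝ) = ((1 / 2) ^ Q) ^ N := by
      rw [← pow_mul, pow_succ]; ring
    rw [this]
    refine pow_le_pow_left₀ (by positivity) ?_ N
    rw [one_div_pow]
    apply one_div_le_one_div_of_le hQ'
    exact_mod_cast Nat.lt_two_pow_self.le
  have h3 : #(bohrSet Γ (2 * (1 / 2) ^ (Q * N + 1))) ≤ #(bohrSet Γ ρ) :=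
    Finset.card_le_card (bohrSet_mono subset_rfl h2)
  have h4 : 81 ^ (#Γ * (Q * N + 1)) ≤ 81 ^ (N * (Q * N + 1)) :=
    Nat.pow_le_pow_right (by norm_num) (Nat.mul_le_mul_right _ hΓ)
  exact_mod_cast h1.trans (Nat.mul_le_mul h4 h3)

/-- The bound of `roth_count_lower` for the parameters `η = ε = t ^ 5 / 1024`, `κ = t ^ 3 / 64`, and
`τ` as supplied by `roth_increment`. -/
lemma roth_numeric {t a : ℝ} (ht : 0 < t) (ht1 : t ≤ 1) (hta : t ≤ a) :
    t ^ 3 / 4 ≤ (a - t ^ 3 / 64) * (a ^ 2 - 5 * (t ^ 5 / 1024) -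
      (t ^ 5 / 1024 + t ^ 5 / 1024) / (t ^ 3 / 64)) -
      (2 * (t ^ 3 / 64 + t ^ 5 / 1024) + 3 * (t ^ 5 / 1024)) - t ^ 5 / 1024 := by
  have e : (t ^ 5 / 1024 + t ^ 5 / 1024) / (t ^ 3 / 64) = t ^ 2 / 8 := by
    field_simp; norm_num
  rw [e]
  have h2 : t ^ 2 ≤ 1 := pow_le_one₀ ht.le ht1
  have h3 : t ^ 3 ≤ t := by nlinarith
  have h5 : t ^ 5 ≤ t ^ 3 := by
    have : t ^ 5 = t ^ 3 * t ^ 2 := by ring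
    rw [this]
    exact mul_le_of_le_one_right (by positivity) h2
  have h5' : t ^ 5 ≤ t ^ 2 := by
    refine h5.trans ?_
    have : t ^ 3 = t ^ 2 * t := by ring
    rw [this]
    exact mul_le_of_le_one_right (by positivity) ht1
  have ha2 : t ^ 2 ≤ a ^ 2 := pow_le_pow_left₀ ht.le hta 2
  have f1 : 3 / 4 * t ≤ a - t ^ 3 / 64 := by linarith
  have f2 : 3 / 4 * t ^ 2 ≤ a ^ 2 - 5 * (t ^ 5 / 1024) - t ^ 2 / 8 := by
    have : 0 < t ^ 2 := by positivity
    linarith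
  have f3 := mul_le_mul f1 f2 (by positivity) (by linarith)
  have e3 : 3 / 4 * t * (3 / 4 * t ^ 2) = 9 / 16 * t ^ 3 := by ring
  have : 0 < t ^ 3 := by positivity
  linarith

/-- The density increment step. If no increment is available, either on the Bohr set of radius `ρ₂`
with the same frequencies or on one with an additional frequency `γ`, then `roth_increment` bounds
all Fourier coefficients and `roth_count_lower` produces too many progressions. -/
lemma roth_step {f : G → ℝ} (hf0 : ∀ x, 0 ≤ f x) (hf1 : ∀ x, f x ≤ 1) {α : ℝ} {k N Q n : ℕ}
    (hk : 0 < k) (hα : (1 / k : ℝ) ≤ α) (hNk : N = 1024 * k ^ 5) (hQ : Q = (2592 * N ^ 2) ^ 3)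
    (hn : n < N)
    (hS : (∑ z : G × G, f z.1 * f (z.1 + z.2) * f (z.1 + 2 • z.2)) <
      (1 / k) ^ 3 / 4 * ((Fintype.card G : ℝ) / 81 ^ (N * (Q * N + 1))) ^ 2)
    (hst : RothState f α N n) : RothState f α N (n + 1) := by
  obtain ⟨Γ, ρ, c, hΓ, hρQ, hρ1, hreg, hmean⟩ := hst
  by_contra hno
  have hN : 0 < N := by rw [hNk]; positivity
  have hN' : (0 : ℝ) < N := by exact_mod_cast hN
  have hN1 : (1 : ℝ) ≤ N := by exact_mod_cast hN
  have hQ0 : 0 < Q := by rw [hQ]; positivity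
  set M : ℕ := 162 * N ^ 2 with hM
  have hM1 : (162 * N : ℝ) ≤ M := by
    rw [hM]; push_cast; nlinarith
  have hM0 : (0 : ℝ) < M := by linarith
  rw [← hQ] at hρQ
  have hQM : (Q : ℝ) = (16 * M) ^ 3 := by rw [hQ, hM]; push_cast; ring
  have hQ' : (0 : ℝ) < Q := by exact_mod_cast hQ0
  have hρ0 : 0 < ρ := lt_of_lt_of_le (by positivity) hρQ
  obtain ⟨ρ₁, h1a, h1b, hreg₁⟩ := exists_regular' Γ hN (hΓ.trans hn.le)
    (ρ := ρ / (8 * M)) (by positivity)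
  have hρ₁ : 0 < ρ₁ := lt_of_lt_of_le (by positivity) h1a
  obtain ⟨ρ₂, h2a, h2b, hreg₂⟩ := exists_regular' Γ hN (hΓ.trans hn.le)
    (ρ := ρ₁ / (8 * M)) (by positivity)
  have hρ₂ : 0 < ρ₂ := lt_of_lt_of_le (by positivity) h2a
  rw [← hM] at hreg₁ hreg₂
  have hsmall : ∀ x : ℝ, 0 < x → x / (8 * M) ≤ x / 8 := by
    intro x hx
    gcongr
    linarith
  have g1 : 2 * ρ₁ ≤ ρ / (2 * M) := by
    have : ρ / (2 * M) = 4 * (ρ / (8 * M)) := by field_simp; norm_num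
    have h0 : 0 < ρ / (8 * M) := by positivity
    linarith
  have g2 : 2 * ρ₂ ≤ ρ₁ / (2 * M) := by
    have : ρ₁ / (2 * M) = 4 * (ρ₁ / (8 * M)) := by field_simp; norm_num
    have h0 : 0 < ρ₁ / (8 * M) := by positivity
    linarith
  have l1 : ρ₁ ≤ ρ / 8 := h1b.trans (hsmall ρ hρ0)
  have l2 : ρ₂ ≤ ρ₁ / 8 := h2b.trans (hsmall ρ₁ hρ₁)
  have lower₂ : ρ / (16 * M) ^ 2 ≤ ρ₂ := by
    have e : ρ / (16 * M) ^ 2 = ρ / (8 * M) / 2 / (8 * M) / 2 := by field_simp; norm_num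
    rw [e]
    refine le_trans ?_ h2a
    gcongr
  have hQ2 : (1 / Q : ℝ) ^ (n + 1) ≤ ρ / (16 * M) ^ 3 := by
    rw [pow_succ, ← hQM, ← div_eq_mul_one_div]
    gcongr
  have hM16 : (1 : ℝ) ≤ 16 * M := by linarith
  have hQ3 : (1 / Q : ℝ) ^ (n + 1) ≤ ρ₂ := by
    refine hQ2.trans (le_trans ?_ lower₂)
    gcongr
    norm_num
  -- Translating `f` moves the centre of the current Bohr set to the origin.
  set f' : G → ℝ := fun x => f (c + x) with hf'
  have hlm : ∀ B c', localMean B f (c + c') = localMean B f' c' := fun B c' => by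
    simp only [localMean, hf', add_assoc]
  set a := localMean (bohrSet Γ ρ) f c with ha
  have ha1 : a ≤ 1 := roth_expect_le_const (bohrSet_nonempty Γ hρ0.le) fun r _ => hf1 _
  have hka : (1 / k : ℝ) ≤ a := by
    have : (0 : ℝ) ≤ n / N := by positivity
    linarith
  have hstep : a + 1 / N ≥ α + ((n + 1 : ℕ) : ℝ) / N := by
    push_cast
    rw [add_div]
    linarith
  have hub : ∀ c', localMean (bohrSet Γ ρ₂) f' c' ≤ a + 1 / N := by
    intro c'
    by_contra hc
    push Not at hc
    refine hno ⟨Γ, ρ₂, c + c', by omega, ?_, by linarith, hreg₂, ?_⟩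
    · rw [← hQ]; exact hQ3
    · rw [hlm]; linarith
  set t : ℝ := 1 / k with ht
  have hk' : (0 : ℝ) < k := by exact_mod_cast hk
  have ht0 : 0 < t := by positivity
  have ht1 : t ≤ 1 := hka.trans ha1
  have hη : (1 / N : ℝ) = t ^ 5 / 1024 := by
    rw [hNk, ht]; push_cast; field_simp
  have hη1 : (1 / N : ℝ) ≤ t := by
    rw [hη]
    have : t ^ 5 ≤ t := by
      calc t ^ 5 ≤ t ^ 1 := pow_le_pow_of_le_one ht0.le ht1 (by norm_num)
        _ = t := pow_one t
    linarith
  have hκt : t ^ 3 / 64 ≤ t := by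
    have : t ^ 3 ≤ t := by
      calc t ^ 3 ≤ t ^ 1 := pow_le_pow_of_le_one ht0.le ht1 (by norm_num)
        _ = t := pow_one t
    linarith
  have hηpos : (0 : ℝ) < 1 / N := by positivity
  have hfour : ∀ c', a - t ^ 3 / 64 ≤ localMean (bohrSet Γ ρ₂) f' c' → ∀ γ : AddChar G ℂ,
      ‖𝔼 r ∈ bohrSet Γ ρ₂, ((f' (c' + r) - localMean (bohrSet Γ ρ₂) f' c' : ℝ) : ℂ) * γ r‖
        ≤ 2 * (t ^ 3 / 64 + 1 / N) + 3 * (1 / N) := by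
    intro c' hc' γ
    have hΓ' : #(insert γ Γ) ≤ n + 1 := (Finset.card_insert_le _ _).trans (by omega)
    obtain ⟨ρ₃, h3a, h3b, hreg₃⟩ := exists_regular' (insert γ Γ) hN (hΓ'.trans hn)
      (ρ := ρ₂ / (8 * M)) (by positivity)
    have hρ₃ : 0 < ρ₃ := lt_of_lt_of_le (by positivity) h3a
    have l3 : ρ₃ ≤ ρ₂ / 8 := h3b.trans (hsmall ρ₂ hρ₂)
    have lower₃ : ρ / (16 * M) ^ 3 ≤ ρ₃ := by
      have e : ρ / (16 * M) ^ 3 = ρ / (16 * M) ^ 2 / (8 * M) / 2 := by field_simp; norm_num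
      rw [e]
      refine le_trans ?_ h3a
      gcongr
    refine roth_increment (bohrSet_nonempty Γ hρ₂.le) (bohrSet_nonempty (insert γ Γ) hρ₃.le)
      (fun x => hf0 _) (fun x => hf1 _) ?_ γ ?_ c' (by positivity) hc' ?_ (a := a)
    · intro u hu
      refine hreg₂ u (bohrSet_mono (Finset.subset_insert γ Γ) (h3b.trans ?_) hu)
      gcongr
      norm_num
    · intro u hu
      refine (mem_bohrSet.1 hu γ (Finset.mem_insert_self γ Γ)).trans (h3b.trans ?_)
      rw [div_le_div_iff₀ (by positivity) hN']
      nlinarith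
    · intro c''
      by_contra hc
      push Not at hc
      refine hno ⟨insert γ Γ, ρ₃, c + c'', hΓ', ?_, by linarith, hreg₃, ?_⟩
      · rw [← hQ]; exact hQ2.trans lower₃
      · rw [hlm]; linarith
  have two : ∀ {ρ : ℝ} {x : G}, x ∈ bohrSet Γ ρ → 2 • x ∈ bohrSet Γ (2 * ρ) := by
    intro ρ x hx
    rw [two_nsmul, two_mul]
    exact add_mem_bohrSet hx hx
  have hlow := roth_count_lower (B₀ := bohrSet Γ ρ) (B₁ := bohrSet Γ ρ₁) (B₂ := bohrSet Γ ρ₂)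
    (bohrSet_nonempty Γ hρ0.le) (bohrSet_nonempty Γ hρ₁.le) (bohrSet_nonempty Γ hρ₂.le)
    (fun x hx => neg_mem_bohrSet hx) (η := 1 / N) (a := a) (ε := 1 / N) (κ := t ^ 3 / 64)
    (τ := 2 * (t ^ 3 / 64 + 1 / N) + 3 * (1 / N)) (f := f') (fun x => hf0 _) (fun x => hf1 _)
    (fun p hp q hq => hreg _ (bohrSet_mono subset_rfl g1 (by
      rw [sub_eq_add_neg, two_mul]
      exact add_mem_bohrSet hp (neg_mem_bohrSet hq))))
    (fun p hp => hreg _ (bohrSet_mono subset_rfl g1 (two hp)))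
    (fun r hr => hreg _ (bohrSet_mono subset_rfl (by linarith) hr))
    (fun r hr => hreg₁ _ (bohrSet_mono subset_rfl (by linarith) hr))
    (fun r hr => hreg₁ _ (bohrSet_mono subset_rfl g2 (two hr)))
    rfl (hη1.trans hka) hηpos.le ha1 (by positivity) (hκt.trans hka) (by positivity)
    hηpos.le hub hfour
  have hupp := roth_count_upper (B₀ := bohrSet Γ ρ) (B₁ := bohrSet Γ ρ₁) (B₂ := bohrSet Γ ρ₂)
    (bohrSet_nonempty Γ hρ0.le) (bohrSet_nonempty Γ hρ₁.le) (bohrSet_nonempty Γ hρ₂.le)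
    (f := f') (fun x => hf0 _)
  have htrans : (∑ z : G × G, f' z.1 * f' (z.1 + z.2) * f' (z.1 + 2 • z.2))
      = ∑ z : G × G, f z.1 * f (z.1 + z.2) * f (z.1 + 2 • z.2) := by
    refine Fintype.sum_equiv ((Equiv.addLeft c).prodCongr (Equiv.refl G)) _ _ fun z => ?_
    simp [hf', add_assoc]
  rw [htrans] at hupp
  have hnum := roth_numeric ht0 ht1 hka
  rw [← hη] at hnum
  have hT := hnum.trans hlow
  have hQn : (1 / Q : ℝ) ≤ 1 := by
    rw [div_le_one hQ']; exact_mod_cast hQ0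
  have s0 : (Fintype.card G : ℝ) / 81 ^ (N * (Q * N + 1)) ≤ #(bohrSet Γ ρ) := by
    rw [div_le_iff₀ (by positivity), mul_comm]
    exact card_le_of_radius hQ0 (hΓ.trans hn.le)
      ((pow_le_pow_of_le_one (by positivity) hQn hn.le).trans hρQ)
  have s2 : (Fintype.card G : ℝ) / 81 ^ (N * (Q * N + 1)) ≤ #(bohrSet Γ ρ₂) := by
    rw [div_le_iff₀ (by positivity), mul_comm]
    exact card_le_of_radius hQ0 (hΓ.trans hn.le)
      ((pow_le_pow_of_le_one (by positivity) hQn hn).trans hQ3)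
  have s02 := mul_le_mul s0 s2 (by positivity) (by positivity)
  have hfinal := mul_le_mul hT s02 (by positivity) (le_trans (by positivity) hT)
  rw [← sq] at hfinal
  exact absurd (hfinal.trans hupp) (not_le.2 hS)

/-- The mean of `f` is at most `1`, so `N` increments of size `1 / N` cannot all take place. -/
lemma roth_lower {f : G → ℝ} (hf0 : ∀ x, 0 ≤ f x) (hf1 : ∀ x, f x ≤ 1) {k N Q : ℕ}
    (hk : 0 < k) (hα : (1 / k : ℝ) ≤ 𝔼 x, f x) (hNk : N = 1024 * k ^ 5)
    (hQ : Q = (2592 * N ^ 2) ^ 3) :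
      (1 / k) ^ 3 / 4 * ((Fintype.card G : ℝ) / 81 ^ (N * (Q * N + 1))) ^ 2 ≤
      ∑ z : G × G, f z.1 * f (z.1 + z.2) * f (z.1 + 2 • z.2) := by
  by_contra hS
  push Not at hS
  have hN : 0 < N := by rw [hNk]; positivity
  have hN' : (0 : ℝ) < N := by exact_mod_cast hN
  have hall : ∀ n ≤ N, RothState f (𝔼 x, f x) N n := by
    intro n
    induction n with
    | zero =>
      intro _
      have hu : ∀ ρ : ℝ, bohrSet (∅ : Finset (AddChar G ℂ)) ρ = univ := fun ρ => by
        ext x; simp [mem_bohrSet]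
      refine ⟨∅, 1, 0, by simp, by simp, le_rfl, ?_, ?_⟩
      · intro u _
        unfold AlmostInv
        rw [hu]
        simp
        positivity
      · simp [localMean, hu]
    | succ n ih =>
      intro hn
      exact roth_step hf0 hf1 hk hα hNk hQ (by omega) hS (ih (by omega))
  obtain ⟨Γ, ρ, c, -, hρ, -, -, hmean⟩ := hall N le_rfl
  rw [div_self hN'.ne'] at hmean
  have hρ0 : 0 ≤ ρ := le_trans (by positivity) hρ
  have : localMean (bohrSet Γ ρ) f c ≤ 1 :=
    roth_expect_le_const (bohrSet_nonempty Γ hρ0) fun r _ => hf1 _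
  have hk' : (0 : ℝ) < 1 / k := by
    have : (0 : ℝ) < k := by exact_mod_cast hk
    positivity
  linarith
end

lemma roth_exp_bound {k N Q : ℕ} (hk : 0 < k) (hNk : N = 1024 * k ^ 5)
    (hQ : Q = (2592 * N ^ 2) ^ 3) :
    Real.exp (-((324 * 2592 ^ 3 * 1024 ^ 8 + 4) * (k : ℝ) ^ 40)) ≤
      (1 / k) ^ 3 / 4 * (1 / 81 ^ (N * (Q * N + 1))) ^ 2 := by
  have hk1 : (1 : ℝ) ≤ k := by exact_mod_cast hk
  have h1 : (4 * k ^ 3 : ℝ) ≤ Real.exp (4 * k ^ 40) := by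
    have h := Real.add_one_le_exp (4 * (k : ℝ) ^ 40)
    have : (k : ℝ) ^ 3 ≤ k ^ 40 := pow_le_pow_right₀ hk1 (by norm_num)
    linarith
  have h2 : (81 : ℝ) ≤ Real.exp 81 := by
    have := Real.add_one_le_exp (81 : ℝ)
    linarith
  have h3 : ((81 : ℝ) ^ (N * (Q * N + 1))) ^ 2 ≤
      Real.exp (324 * 2592 ^ 3 * 1024 ^ 8 * (k : ℝ) ^ 40) := by
    calc ((81 : ℝ) ^ (N * (Q * N + 1))) ^ 2 ≤ ((Real.exp 81) ^ (N * (Q * N + 1))) ^ 2 := by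
          gcongr
      _ = Real.exp (162 * (N * (Q * N + 1) : ℕ)) := by
          rw [← pow_mul, ← Real.exp_nat_mul]
          congr 1
          push_cast
          ring
      _ ≤ _ := by
          apply Real.exp_le_exp.2
          have hle : N * (Q * N + 1) ≤ 2 * (2592 ^ 3 * 1024 ^ 8 * k ^ 40) := by
            have e : 2592 ^ 3 * 1024 ^ 8 * k ^ 40 = Q * N * N := by
              rw [hQ, hNk]; ring
            rw [e]
            have hN : 0 < N := by rw [hNk]; positivity
            have hQ0 : 0 < Q := by rw [hQ]; positivity
            nlinarith [Nat.mul_pos (Nat.mul_pos hQ0 hN) hN, Nat.mul_pos hQ0 hN]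
          have hle' : ((N * (Q * N + 1) : ℕ) : ℝ) ≤ 2 * (2592 ^ 3 * 1024 ^ 8 * (k : ℝ) ^ 40) := by
            exact_mod_cast hle
          linarith
  have h4 : (4 * k ^ 3 : ℝ) * ((81 : ℝ) ^ (N * (Q * N + 1))) ^ 2 ≤
      Real.exp ((324 * 2592 ^ 3 * 1024 ^ 8 + 4) * (k : ℝ) ^ 40) := by
    rw [add_mul, Real.exp_add, mul_comm (Real.exp _)]
    exact mul_le_mul h1 h3 (by positivity) (Real.exp_pos _).le
  rw [Real.exp_neg]
  have e : ((1 / k) ^ 3 / 4 * (1 / 81 ^ (N * (Q * N + 1))) ^ 2 : ℝ)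
      = ((4 * k ^ 3 : ℝ) * ((81 : ℝ) ^ (N * (Q * N + 1))) ^ 2)⁻¹ := by
    rw [one_div_pow, one_div_pow, div_div, ← one_div_mul_one_div_rev, one_div, one_div, one_div,
      mul_inv, mul_inv]
  rw [e]
  exact inv_anti₀ (by positivity) h4

end Roth

/-- **Lev's counting theorem.** There is an absolute constant `C > 0` such that for every
finite abelian group `G` and every nonempty `A ⊆ G` of density `α > 0`, one has
`Λ(A) ≥ exp(−C·α^{−C})`. -/
theorem lev_count_general :
    ∃ C : ℝ, 0 < C ∧
      ∀ (G : Type) [AddCommGroup G] [Fintype G],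
        ∀ A : Finset G,
          let α : ℝ := (A.card : ℝ) / (Fintype.card G : ℝ)
          0 < α →
            apCount A ≥ Real.exp (-(C * α ^ (-C))) := by
  -- The constant of `roth_exp_bound`, times `2 ^ 40` from `⌈1 / α⌉ ≤ 2 / α`; as `α ≤ 1`, an
  -- exponent larger than `40` only weakens the bound.
  refine ⟨(324 * 2592 ^ 3 * 1024 ^ 8 + 4) * 2 ^ 40, by positivity, ?_⟩
  intro G _ _ A α hα
  have hG : (0 : ℝ) < Fintype.card G := by exact_mod_cast Fintype.card_pos
  have hα1 : α ≤ 1 := by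
    rw [div_le_one hG]
    exact_mod_cast Finset.card_le_univ A
  set k : ℕ := ⌈1 / α⌉₊ with hk
  have hk0 : 0 < k := Nat.ceil_pos.2 (by positivity)
  have hk0' : (0 : ℝ) < k := by exact_mod_cast hk0
  have hkα : (1 / k : ℝ) ≤ α := by
    rw [div_le_iff₀ hk0', mul_comm, ← div_le_iff₀ hα]
    exact Nat.le_ceil _
  have hk2 : (k : ℝ) ≤ 2 / α := by
    have h1 := Nat.ceil_lt_add_one (a := 1 / α) (by positivity)
    have h2 : 1 ≤ 1 / α := by rw [le_div_iff₀ hα]; linarith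
    have h3 : 2 / α = 1 / α + 1 / α := by ring
    rw [h3]
    linarith
  set f : G → ℝ := fun x => if x ∈ A then 1 else 0 with hf
  have hmean : (𝔼 x, f x) = α := by
    rw [Finset.expect_eq_sum_div_card]
    simp [hf, α]
  have hlow := roth_lower (f := f) (fun x => by simp only [hf]; split_ifs <;> norm_num)
    (fun x => by simp only [hf]; split_ifs <;> norm_num) hk0 (hmean ▸ hkα) rfl rfl
  have hcount : (∑ z : G × G, f z.1 * f (z.1 + z.2) * f (z.1 + 2 • z.2))
      = apCount A * (Fintype.card G : ℝ) ^ 2 := by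
    rw [apCount, div_mul_cancel₀ _ (by positivity), Finset.card_filter]
    push_cast
    refine Finset.sum_congr rfl fun z _ => ?_
    simp only [hf]
    by_cases h1 : z.1 ∈ A <;> by_cases h2 : z.1 + z.2 ∈ A <;>
      by_cases h3 : z.1 + 2 • z.2 ∈ A <;> simp [h1, h2, h3]
  rw [hcount, div_eq_mul_one_div (Fintype.card G : ℝ), mul_pow, mul_left_comm, mul_comm (apCount A)]
    at hlow
  have hlow' := le_of_mul_le_mul_left hlow (by positivity)
  refine ge_iff_le.2 (le_trans ?_ ((roth_exp_bound hk0 rfl rfl).trans hlow'))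
  apply Real.exp_le_exp.2
  apply neg_le_neg
  have p1 : (k : ℝ) ^ 40 ≤ 2 ^ 40 * α ^ (-(40 : ℝ)) := by
    calc (k : ℝ) ^ 40 ≤ (2 / α) ^ 40 := pow_le_pow_left₀ hk0'.le hk2 40
      _ = 2 ^ 40 * α ^ (-(40 : ℝ)) := by
        rw [Real.rpow_neg hα.le, div_pow, div_eq_mul_inv]
        congr 2
        exact_mod_cast (Real.rpow_natCast α 40).symm
  have p2 : α ^ (-(40 : ℝ)) ≤ α ^ (-((324 * 2592 ^ 3 * 1024 ^ 8 + 4) * 2 ^ 40 : ℝ)) :=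
    Real.rpow_le_rpow_of_exponent_ge hα hα1 (by norm_num)
  rw [mul_assoc _ ((2 : ℝ) ^ 40)]
  refine mul_le_mul_of_nonneg_left (p1.trans ?_) (by positivity)
  exact mul_le_mul_of_nonneg_left p2 (by positivity)
end
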